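/- arXiv:1808.00227 — 3 statements merged into one kernel-verified Lean document; each statement's English description precedes it below -/
import Mathlib

section
/- Let ε > 0. There exist constants C > 0 and N such that for all integers n ≥ N and all positive integers k with k ≤ n^{1/8-ε}, one has |M_k(n) − (π/(12√2)) · k · n^{−3/2} · e^{2π√n/√6}| ≤ C · k³ · n^{−7/4} · e^{2π√n/√6}. In particular, M_k(n) = (π/(12√2)) k n^{−3/2} e^{2π√n/√6} + O(k³ n^{−7/4} e^{2π√n/√6}) as n → ∞ uniformly in k ≪ n^{1/8−ε}. -/
open Finset Real

/-- The number of partitions of `m`. -/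
noncomputable def partitionCount (m : ℕ) : ℕ := Nat.card (Nat.Partition m)

/-- The partition function extended to integers, `p(m) = 0` for `m < 0`. -/
noncomputable def pZ (m : ℤ) : ℤ := if 0 ≤ m then (partitionCount m.toNat : ℤ) else 0

/-- The Andrews–Merca function `M_k(n)`. -/
noncomputable def andrewsMercaM (k : ℕ) (n : ℤ) : ℤ :=
  (-1) ^ (k - 1) * ∑ j ∈ Finset.range k,
    (-1) ^ j * (pZ (n - (j : ℤ) * (3 * j + 1) / 2) - pZ (n - (j : ℤ) * (3 * j + 5) / 2 - 1))

/-!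
By Cauchy's formula `p(m) - p(m - 1)` is the integral over a circle `|q| = e^{-α}` of
`(1 - q) P(q) q^{-m}`, where `P` is Euler's product. The transformation law of the Dedekind eta
function shows that, in the cone `|θ| ≤ α` around the positive axis and at the saddle point
`m α² = π² / 6`, the integrand is a Gaussian up to a relative error that integrates to `O(√α)`.
Outside the cone the bound `(1 - |w|) e^{(|w| - re w) / 4} ≤ |1 - w|`, applied to each factor of
`P`, makes the integrand exponentially smaller. This gives the main term of `p(m) - p(m - 1)` with
error `O(m^{-7/4} e^{2π√m/√6})`.

The `j`-th summand of `M_k(n)` is a sum of `2 j + 1` consecutive differences `p(m) - p(m - 1)`, all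
with `n - 2 k² ≤ m ≤ n`; replacing `m` by `n` in their main term costs `O(k n^{-7/4} e^{2π√n/√6})`
each. There are `k²` of them, and `∑_{j<k} (-1)^{k-1} (-1)^j (2 j + 1) = k`.
-/

section EulerProduct

open Filter Topology PowerSeries

/-- The series `1 + X ^ (i + 1) + X ^ (2 * (i + 1)) + ⋯`, the factor of the generating function of
partitions that records the multiplicity of the part `i + 1`. -/
noncomputable def partFactor (i : ℕ) : ℕ⟦X⟧ := mk fun n ↦ if i + 1 ∣ n then 1 else 0

lemma coeff_partFactor (i n : ℕ) : coeff n (partFactor i) = if i + 1 ∣ n then 1 else 0 :=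
  coeff_mk _ _

open scoped PowerSeries.WithPiTopology in
lemma tsum_X_pow_eq_partFactor (i : ℕ) : ∑' j : ℕ, (X : ℕ⟦X⟧) ^ ((i + 1) * j) = partFactor i := by
  refine HasSum.tsum_eq
    ((PowerSeries.WithPiTopology.tendsto_iff_coeff_tendsto _ _ _ _).2 fun d ↦ ?_)
  simp only [map_sum, coeff_X_pow, coeff_partFactor]
  change HasSum (fun j ↦ if d = (i + 1) * j then 1 else 0) _
  by_cases h : i + 1 ∣ d
  · obtain ⟨j, rfl⟩ := h
    simpa [eq_comm] using hasSum_ite_eq j 1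
  · simp only [if_neg h]
    convert hasSum_zero using 2 with j
    exact if_neg fun hj ↦ h ⟨j, hj⟩

/-- The number of partitions of `n` into parts of size at most `M`, defined as a coefficient of the
truncated Euler product. -/
noncomputable def boundedPartitionCount (M n : ℕ) : ℕ := coeff n (∏ i ∈ range M, partFactor i)

open scoped PowerSeries.WithPiTopology in
lemma eventually_boundedPartitionCount_eq (n : ℕ) :
    ∀ᶠ M in atTop, boundedPartitionCount M n = partitionCount n := by
  have hprod := (Nat.Partition.hasProd_powerSeriesMk_card_restricted ℕ
    fun _ ↦ True).tendsto_prod_nat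
  have hcoeff := (PowerSeries.WithPiTopology.tendsto_iff_coeff_tendsto _ _ _ _).1 hprod n
  simpa [tsum_X_pow_eq_partFactor, boundedPartitionCount, partitionCount,
    Nat.Partition.restricted] using hcoeff

lemma coeff_le_coeff_mul {f g : ℕ⟦X⟧} (hg : coeff 0 g = 1) (n : ℕ) :
    coeff n f ≤ coeff n (f * g) := by
  rw [coeff_mul]
  simpa [hg] using single_le_sum (f := fun x : ℕ × ℕ ↦ coeff x.1 f * coeff x.2 g)
    (fun _ _ ↦ Nat.zero_le _) (show (n, 0) ∈ antidiagonal n by simp)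

lemma boundedPartitionCount_le (M n : ℕ) :
    boundedPartitionCount M n ≤ partitionCount n := by
  have hmono : Monotone fun M ↦ boundedPartitionCount M n :=
    monotone_nat_of_le_succ fun M ↦ by
      rw [boundedPartitionCount, boundedPartitionCount, prod_range_succ]
      exact coeff_le_coeff_mul (by simp [coeff_partFactor]) n
  obtain ⟨M', hM', hle⟩ :=
    ((eventually_boundedPartitionCount_eq n).and (eventually_ge_atTop M)).exists
  exact (hmono hle).trans hM'.le

lemma hasSum_coeff_mul {f g : ℂ⟦X⟧} {q a b : ℂ} (hf : HasSum (fun n ↦ coeff n f * q ^ n) a)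
    (hg : HasSum (fun n ↦ coeff n g * q ^ n) b) :
    HasSum (fun n ↦ coeff n (f * g) * q ^ n) (a * b) := by
  have hcauchy (n : ℕ) : ∑ kl ∈ antidiagonal n,
      coeff kl.1 f * q ^ kl.1 * (coeff kl.2 g * q ^ kl.2) = coeff n (f * g) * q ^ n := by
    rw [coeff_mul, sum_mul]
    refine sum_congr rfl fun kl hkl ↦ ?_
    rw [← mem_antidiagonal.1 hkl, pow_add]
    ring
  have hsum := summable_norm_sum_mul_antidiagonal_of_summable_norm hf.summable.norm hg.summable.norm
  have htsum := tsum_mul_tsum_eq_tsum_sum_antidiagonal_of_summable_norm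
    hf.summable.norm hg.summable.norm
  simp only [hcauchy, hf.tsum_eq, hg.tsum_eq] at hsum htsum
  exact htsum ▸ hsum.of_norm.hasSum

lemma hasSum_coeff_prod {ι : Type*} (s : Finset ι) {f : ι → ℂ⟦X⟧} {a : ι → ℂ} {q : ℂ}
    (h : ∀ i ∈ s, HasSum (fun n ↦ coeff n (f i) * q ^ n) (a i)) :
    HasSum (fun n ↦ coeff n (∏ i ∈ s, f i) * q ^ n) (∏ i ∈ s, a i) := by
  classical
  induction s using Finset.induction_on with
  | empty =>
    convert hasSum_ite_eq 0 (1 : ℂ) using 2 with n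
    · by_cases hn : n = 0 <;> simp [coeff_one, hn]
    · exact prod_empty
  | insert i s hi ih =>
    rw [prod_insert hi, prod_insert hi]
    exact hasSum_coeff_mul (h i (mem_insert_self i s)) (ih fun j hj ↦ h j (mem_insert_of_mem hj))

variable {q : ℂ}

lemma hasSum_partFactor (i : ℕ) (hq : ‖q‖ < 1) :
    HasSum (fun n ↦ ((coeff n (partFactor i) : ℕ) : ℂ) * q ^ n) (1 - q ^ (i + 1))⁻¹ := by
  have hgeom : HasSum (fun j ↦ (q ^ (i + 1)) ^ j) (1 - q ^ (i + 1))⁻¹ :=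
    hasSum_geometric_of_norm_lt_one (norm_pow q _ ▸ pow_lt_one₀ (norm_nonneg _) hq i.succ_ne_zero)
  refine ((mul_right_injective₀ i.succ_ne_zero).hasSum_iff fun n hn ↦ ?_).1 ?_
  · have hdvd : ¬ i + 1 ∣ n := fun ⟨j, hj⟩ ↦ hn ⟨j, hj.symm⟩
    simp [coeff_partFactor, hdvd]
  · simpa [Function.comp_def, coeff_partFactor, pow_mul] using hgeom

lemma hasSum_boundedPartitionCount (M : ℕ) (hq : ‖q‖ < 1) :
    HasSum (fun n ↦ (boundedPartitionCount M n : ℂ) * q ^ n)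
      (∏ i ∈ range M, (1 - q ^ (i + 1)))⁻¹ := by
  have hprod := hasSum_coeff_prod (range M) (f := fun i ↦ map (Nat.castRingHom ℂ) (partFactor i))
    fun i _ ↦ by simpa only [coeff_map, Nat.coe_castRingHom] using hasSum_partFactor i hq
  simpa only [← map_prod, coeff_map, Nat.coe_castRingHom, prod_inv_distrib,
    boundedPartitionCount] using hprod

lemma one_sub_pow_succ_ne_zero (hq : ‖q‖ < 1) (i : ℕ) : 1 - q ^ (i + 1) ≠ 0 := fun h ↦ by
  have hlt : ‖q ^ (i + 1)‖ < 1 := norm_pow q _ ▸ pow_lt_one₀ (norm_nonneg _) hq i.succ_ne_zero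
  simp [← sub_eq_zero.1 h] at hlt

lemma tprod_one_sub_pow_ne_zero (hq : ‖q‖ < 1) : ∏' n : ℕ, (1 - q ^ (n + 1)) ≠ 0 := by
  simp only [sub_eq_add_neg]
  refine tprod_one_add_ne_zero_of_summable (fun i ↦ ?_) ?_
  · simpa only [← sub_eq_add_neg] using one_sub_pow_succ_ne_zero hq i
  · simpa using (summable_nat_add_iff 1).mpr (summable_geometric_of_lt_one (norm_nonneg _) hq)

lemma tendsto_inv_prod_one_sub_pow (hq : ‖q‖ < 1) :
    Tendsto (fun M ↦ (∏ i ∈ range M, (1 - q ^ (i + 1)))⁻¹) atTop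
      (𝓝 (∏' n : ℕ, (1 - q ^ (n + 1)))⁻¹) :=
  (ModularForm.multipliable_one_sub_pow hq).hasProd.tendsto_prod_nat.inv₀
    (tprod_one_sub_pow_ne_zero hq)

lemma summable_partitionCount_mul_pow {r : ℝ} (hr0 : 0 ≤ r) (hr1 : r < 1) :
    Summable fun n ↦ (partitionCount n : ℝ) * r ^ n := by
  have hr : ‖(r : ℂ)‖ < 1 := by rwa [Complex.norm_real, norm_of_nonneg hr0]
  obtain ⟨B, hB⟩ := (tendsto_inv_prod_one_sub_pow hr).norm.bddAbove_range
  refine summable_of_sum_range_le (c := B) (fun n ↦ by positivity) fun N ↦ ?_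
  obtain ⟨M, hM⟩ := ((eventually_all_finset (range N)).2 fun n _ ↦
    eventually_boundedPartitionCount_eq n).exists
  have hsum := hasSum_boundedPartitionCount M hr
  have hsum_norm := hsum.summable.norm
  simp only [norm_mul, norm_pow, Complex.norm_natCast, Complex.norm_real, norm_of_nonneg hr0]
    at hsum_norm
  calc ∑ n ∈ range N, (partitionCount n : ℝ) * r ^ n
      = ∑ n ∈ range N, (boundedPartitionCount M n : ℝ) * r ^ n :=
        sum_congr rfl fun n hn ↦ by rw [hM n hn]
    _ ≤ ∑' n, (boundedPartitionCount M n : ℝ) * r ^ n :=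
        hsum_norm.sum_le_tsum _ fun n _ ↦ by positivity
    _ = ‖(∏ i ∈ range M, (1 - (r : ℂ) ^ (i + 1)))⁻¹‖ := by
        rw [← hsum.tsum_eq, ← norm_of_nonneg (tsum_nonneg fun n ↦ by positivity),
          ← Complex.norm_real]
        push_cast
        rfl
    _ ≤ B := hB ⟨M, rfl⟩

theorem hasSum_partitionCount_mul_pow (hq : ‖q‖ < 1) :
    HasSum (fun n ↦ (partitionCount n : ℂ) * q ^ n) (∏' n : ℕ, (1 - q ^ (n + 1)))⁻¹ := by
  have hsum_norm := summable_partitionCount_mul_pow (norm_nonneg q) hq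
  have hsum : Summable fun n ↦ (partitionCount n : ℂ) * q ^ n := .of_norm (by simpa using hsum_norm)
  have htendsto : Tendsto (fun M ↦ ∑' n, (boundedPartitionCount M n : ℂ) * q ^ n) atTop
      (𝓝 (∑' n, (partitionCount n : ℂ) * q ^ n)) := by
    refine tendsto_tsum_of_dominated_convergence hsum_norm (fun n ↦ ?_)
      (.of_forall fun M n ↦ ?_)
    · refine tendsto_const_nhds.congr' ?_
      filter_upwards [eventually_boundedPartitionCount_eq n] with M hM
      rw [hM]
    · rw [norm_mul, norm_pow, Complex.norm_natCast]
      gcongr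
      exact boundedPartitionCount_le M n
  simp only [(hasSum_boundedPartitionCount _ hq).tsum_eq] at htendsto
  exact tendsto_nhds_unique htendsto (tendsto_inv_prod_one_sub_pow hq) ▸ hsum.hasSum

end EulerProduct

section GeneratingFunction

open Complex (I)

/-- The generating function `∑ p(n) q ^ n` of the partition numbers in the variable `q = exp (-z)`,
defined by Euler's product. -/
noncomputable def partitionGenFun (z : ℂ) : ℂ := (∏' n : ℕ, (1 - Complex.exp (-z) ^ (n + 1)))⁻¹

lemma norm_exp_neg_lt_one {z : ℂ} (hz : 0 < z.re) : ‖Complex.exp (-z)‖ < 1 := by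
  simpa [Complex.norm_exp] using hz

lemma partitionGenFun_ne_zero {z : ℂ} (hz : 0 < z.re) : partitionGenFun z ≠ 0 :=
  inv_ne_zero (tprod_one_sub_pow_ne_zero (norm_exp_neg_lt_one hz))

lemma hasSum_partitionGenFun {z : ℂ} (hz : 0 < z.re) :
    HasSum (fun n ↦ (partitionCount n : ℂ) * Complex.exp (-z) ^ n) (partitionGenFun z) :=
  hasSum_partitionCount_mul_pow (norm_exp_neg_lt_one hz)

lemma continuous_partitionGenFun {α : ℝ} (hα : 0 < α) :
    Continuous fun θ : ℝ ↦ partitionGenFun (α + θ * I) := by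
  have hre (θ : ℝ) : 0 < (α + θ * I : ℂ).re := by simpa using hα
  exact (ModularForm.differentiableOn_tprod_one_sub_pow.continuousOn.comp_continuous (by fun_prop)
    fun θ ↦ by simpa using norm_exp_neg_lt_one (hre θ)).inv₀
      fun θ ↦ tprod_one_sub_pow_ne_zero (norm_exp_neg_lt_one (hre θ))

lemma integral_exp_int_mul_I (k : ℤ) :
    ∫ θ in -π..π, Complex.exp (k * I * θ) = if k = 0 then (2 * π : ℂ) else 0 := by
  split_ifs with hk
  · simp only [hk, Int.cast_zero, zero_mul, Complex.exp_zero, intervalIntegral.integral_const]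
    simp [two_mul]
  · have hperiod : Complex.exp (k * I * π) = Complex.exp (k * I * (-π : ℝ)) :=
      Complex.exp_eq_exp_iff_exists_int.2 ⟨k, by push_cast; ring⟩
    rw [integral_exp_mul_complex (by simp [hk]), hperiod, sub_self, zero_div]

lemma integral_coeff_mul_exp (a : ℂ) (α : ℝ) (m n : ℕ) :
    ∫ θ in -π..π, a * Complex.exp (-(α + θ * I)) ^ m * Complex.exp (n * (α + θ * I)) =
      if m = n then 2 * π * a else 0 := by
  have hsplit (θ : ℝ) : a * Complex.exp (-(α + θ * I)) ^ m * Complex.exp (n * (α + θ * I)) =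
      a * Complex.exp ((n - m) * α) * Complex.exp ((n - m : ℤ) * I * θ) := by
    rw [← Complex.exp_nat_mul, mul_assoc, mul_assoc, ← Complex.exp_add, ← Complex.exp_add]
    push_cast
    ring_nf
  simp_rw [hsplit, intervalIntegral.integral_const_mul, integral_exp_int_mul_I]
  rcases eq_or_ne m n with rfl | hmn
  · simp [mul_comm]
  · rw [if_neg (by omega), if_neg hmn, mul_zero]

lemma integral_tsum_mul_exp {a : ℕ → ℂ} {α : ℝ} (ha : Summable fun m ↦ ‖a m‖ * exp (-α) ^ m)
    (n : ℕ) :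
    ∫ θ in -π..π, (∑' m, a m * Complex.exp (-(α + θ * I)) ^ m) * Complex.exp (n * (α + θ * I)) =
      2 * π * a n := by
  let F : ℕ → C(ℝ, ℂ) := fun m ↦
    ⟨fun θ ↦ a m * Complex.exp (-(α + θ * I)) ^ m * Complex.exp (n * (α + θ * I)), by fun_prop⟩
  have hnorm (m : ℕ) (θ : ℝ) : ‖F m θ‖ = ‖a m‖ * exp (-α) ^ m * exp (n * α) := by
    simp [F, Complex.norm_exp]
  have hbound (m : ℕ) :
      ‖(F m).restrict (⟨Set.uIcc (-π) π, isCompact_uIcc⟩ : TopologicalSpace.Compacts ℝ)‖ ≤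
        ‖a m‖ * exp (-α) ^ m * exp (n * α) := by
    rw [ContinuousMap.norm_le _ (by positivity)]
    exact fun θ ↦ (hnorm m θ).le
  have hF := intervalIntegral.hasSum_intervalIntegral_of_summable_norm
    (.of_nonneg_of_le (fun _ ↦ norm_nonneg _) hbound (ha.mul_right (exp (n * α))))
  simp only [F, ContinuousMap.coe_mk, tsum_mul_right, integral_coeff_mul_exp] at hF
  refine hF.unique ?_
  simpa using hasSum_single (f := fun m ↦ if m = n then 2 * π * a m else 0) n
    fun m hm ↦ if_neg hm

lemma integral_partitionGenFun_mul_exp {α : ℝ} (hα : 0 < α) (n : ℕ) :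
    ∫ θ in -π..π, partitionGenFun (α + θ * I) * Complex.exp (n * (α + θ * I)) =
      2 * π * partitionCount n := by
  have hsum := summable_partitionCount_mul_pow (exp_pos (-α)).le (by simpa using hα)
  rw [← integral_tsum_mul_exp (a := fun m ↦ partitionCount m) (by simpa using hsum) n]
  congr 1 with θ
  rw [(hasSum_partitionGenFun (z := α + θ * I) (by simpa using hα)).tsum_eq]

/-- The integrand in Cauchy's formula for `p(m) - p(m - 1)` on the circle `|q| = exp (-α)`,
with `z = α + i θ`. -/
noncomputable def cauchyIntegrand (m : ℕ) (z : ℂ) : ℂ :=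
  (1 - Complex.exp (-z)) * partitionGenFun z * Complex.exp (m * z)

lemma continuous_cauchyIntegrand {α : ℝ} (hα : 0 < α) (m : ℕ) :
    Continuous fun θ : ℝ ↦ cauchyIntegrand m (α + θ * I) := by
  have hcont := continuous_partitionGenFun hα
  unfold cauchyIntegrand
  fun_prop

lemma integral_cauchyIntegrand {α : ℝ} (hα : 0 < α) (n : ℕ) :
    ∫ θ in -π..π, cauchyIntegrand (n + 1) (α + θ * I) =
      2 * π * ((partitionCount (n + 1) : ℂ) - partitionCount n) := by
  have hcont := continuous_partitionGenFun hα
  rw [mul_sub, ← integral_partitionGenFun_mul_exp hα (n + 1), ← integral_partitionGenFun_mul_exp hα,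
    ← intervalIntegral.integral_sub
      (Continuous.intervalIntegrable (by fun_prop) _ _)
      (Continuous.intervalIntegrable (by fun_prop) _ _)]
  congr 1 with θ
  have hexp : Complex.exp (n * (α + θ * I)) =
      Complex.exp (-(α + θ * I)) * Complex.exp ((n + 1 : ℕ) * (α + θ * I)) := by
    rw [← Complex.exp_add]
    push_cast
    ring_nf
  rw [hexp, cauchyIntegrand]
  ring

lemma inv_sqrt_I_mul_sqrt_I_mul {w : ℂ} (hw : 0 < w.re) :
    (Complex.sqrt I)⁻¹ * Complex.sqrt (I * w) = Complex.sqrt w := by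
  have hw0 : w ≠ 0 := by rintro rfl; simp at hw
  obtain ⟨hlower, hupper⟩ := abs_lt.1 (Complex.abs_arg_lt_pi_div_two_iff.2 (Or.inl hw))
  have hlog : Complex.log (I * w) = Complex.log I + Complex.log w :=
    Complex.log_mul Complex.I_ne_zero hw0 (by
      rw [Complex.arg_I]
      constructor <;> linarith [pi_pos])
  rw [sqrt_eq_exp Complex.I_ne_zero, sqrt_eq_exp hw0,
    sqrt_eq_exp (mul_ne_zero Complex.I_ne_zero hw0), hlog, ← Complex.exp_neg,
    ← Complex.exp_add]
  ring_nf

lemma eta_I_mul_div_two_pi (w : ℂ) :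
    ModularForm.eta (I * (w / (2 * π))) = Complex.exp (-w / 24) * (partitionGenFun w)⁻¹ := by
  have hexp : 2 * π * I * (I * (w / (2 * π))) = -w := by
    field_simp
    rw [Complex.I_sq]
    ring
  simp [ModularForm.eta, partitionGenFun, ModularForm.eta_q, Function.Periodic.qParam, hexp]

lemma re_four_pi_sq_div (z : ℂ) : (4 * π ^ 2 / z : ℂ).re = 4 * π ^ 2 * z.re / Complex.normSq z := by
  rw [show (4 * π ^ 2 / z : ℂ) = (4 * π ^ 2 : ℝ) * z⁻¹ by push_cast; ring, Complex.re_ofReal_mul,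
    Complex.inv_re, mul_div_assoc]

theorem partitionGenFun_modular {z : ℂ} (hz : 0 < z.re) :
    partitionGenFun z = Complex.sqrt (z / (2 * π)) * Complex.exp (π ^ 2 / (6 * z) - z / 24) *
      partitionGenFun (4 * π ^ 2 / z) := by
  have hz0 : z ≠ 0 := by rintro rfl; simp at hz
  have hdual : 0 < (4 * π ^ 2 / z : ℂ).re := by
    have hnormSq := Complex.normSq_pos.2 hz0
    rw [re_four_pi_sq_div]
    positivity
  have hw : 0 < (z / (2 * π)).re := by
    rw [show z / (2 * π) = z / (2 * π : ℝ) by push_cast; rfl, Complex.div_ofReal_re]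
    positivity
  have heta := ModularForm.eta_comp_eq_csqrt_I_inv (x := I * (z / (2 * π)))
    (by simpa [UpperHalfPlane.upperHalfPlaneSet] using hw)
  have hinv : -1 / (I * (z / (2 * π))) = I * (4 * π ^ 2 / z / (2 * π)) := by
    field_simp
    rw [Complex.I_sq]
    ring
  simp only [Function.comp_apply, Pi.smul_apply, Pi.mul_apply, smul_eq_mul, hinv,
    ← mul_assoc, inv_sqrt_I_mul_sqrt_I_mul hw] at heta
  rw [eta_I_mul_div_two_pi, eta_I_mul_div_two_pi] at heta
  have hexp : Complex.exp (π ^ 2 / (6 * z) - z / 24) * Complex.exp (-(4 * π ^ 2 / z) / 24) =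
      Complex.exp (-z / 24) := by
    rw [← Complex.exp_add]
    congr 1
    field_simp
    ring
  have hP := partitionGenFun_ne_zero hz
  have hP' := partitionGenFun_ne_zero hdual
  rw [← hexp] at heta
  have hcancel : (partitionGenFun (4 * π ^ 2 / z))⁻¹ = Complex.sqrt (z / (2 * π)) *
      Complex.exp (π ^ 2 / (6 * z) - z / 24) * (partitionGenFun z)⁻¹ :=
    mul_right_cancel₀ (Complex.exp_ne_zero (-(4 * π ^ 2 / z) / 24)) (by linear_combination heta)
  field_simp at hcancel ⊢
  linear_combination hcancel

end GeneratingFunction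

section MinorArc

open Filter Topology
open Complex (I)

lemma norm_one_sub_sq (w : ℂ) : ‖1 - w‖ ^ 2 = (1 - ‖w‖) ^ 2 + 2 * (‖w‖ - w.re) := by
  have hw : ‖w‖ ^ 2 = w.re ^ 2 + w.im ^ 2 := by rw [Complex.sq_norm, Complex.normSq_apply]; ring
  rw [Complex.sq_norm, Complex.normSq_apply, Complex.sub_re, Complex.sub_im, Complex.one_re,
    Complex.one_im]
  linear_combination -hw

lemma one_sub_norm_mul_exp_le {w : ℂ} (hw : ‖w‖ ≤ 1) :
    (1 - ‖w‖) * exp ((‖w‖ - w.re) / 4) ≤ ‖1 - w‖ := by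
  obtain ⟨hlower, hupper⟩ := abs_le.1 (Complex.abs_re_le_norm w)
  obtain ⟨u, hu⟩ : ∃ u, u = ‖w‖ - w.re := ⟨_, rfl⟩
  have hexp : exp (u / 2) ≤ 1 + 2 * u := by
    have htaylor := (abs_le.1 (abs_exp_sub_one_sub_id_le (x := u / 2)
      (abs_le.2 ⟨by linarith, by linarith⟩))).2
    nlinarith
  have hsq : (1 - ‖w‖) ^ 2 ≤ 1 := pow_le_one₀ (by linarith) (by linarith [norm_nonneg w])
  rw [← hu]
  refine le_of_sq_le_sq ?_ (norm_nonneg _)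
  calc ((1 - ‖w‖) * exp (u / 4)) ^ 2 = (1 - ‖w‖) ^ 2 * exp (u / 2) := by
        rw [mul_pow, ← exp_nat_mul]
        ring_nf
    _ ≤ (1 - ‖w‖) ^ 2 * (1 + 2 * u) := by gcongr
    _ ≤ (1 - ‖w‖) ^ 2 + 2 * u := by nlinarith
    _ = ‖1 - w‖ ^ 2 := by rw [norm_one_sub_sq, hu]

lemma hasSum_norm_pow_sub_re_pow {q : ℂ} (hq : ‖q‖ < 1) :
    HasSum (fun n : ℕ ↦ ‖q‖ ^ (n + 1) - (q ^ (n + 1)).re)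
      (‖q‖ / (1 - ‖q‖) - (q / (1 - q)).re) := by
  have hnorm := (hasSum_geometric_of_lt_one (norm_nonneg q) hq).mul_left ‖q‖
  have hre := Complex.hasSum_re ((hasSum_geometric_of_norm_lt_one hq).mul_left q)
  simpa only [pow_succ', div_eq_mul_inv] using hnorm.sub hre

theorem norm_inv_tprod_one_sub_pow_le {q : ℂ} (hq : ‖q‖ < 1) :
    ‖(∏' n : ℕ, (1 - q ^ (n + 1)))⁻¹‖ ≤ ‖(∏' n : ℕ, (1 - (‖q‖ : ℂ) ^ (n + 1)))⁻¹‖ *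
      exp (-((‖q‖ / (1 - ‖q‖) - (q / (1 - q)).re) / 4)) := by
  have hprod := (tendsto_inv_prod_one_sub_pow hq).norm
  have hprod_norm := (tendsto_inv_prod_one_sub_pow (q := (‖q‖ : ℂ)) (by simpa using hq)).norm
  have hexp := (continuous_exp.tendsto _).comp
    ((hasSum_norm_pow_sub_re_pow hq).div_const 4).tendsto_sum_nat.neg
  refine le_of_tendsto_of_tendsto' hprod (hprod_norm.mul hexp) fun M ↦ ?_
  rw [Function.comp_apply, ← sum_neg_distrib, exp_sum, norm_inv, norm_inv, norm_prod, norm_prod,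
    ← prod_inv_distrib, ← prod_inv_distrib, ← prod_mul_distrib]
  refine prod_le_prod (fun i _ ↦ by positivity) fun i _ ↦ ?_
  have hlt : ‖q‖ ^ (i + 1) < 1 := pow_lt_one₀ (norm_nonneg _) hq i.succ_ne_zero
  have hfactor := one_sub_norm_mul_exp_le (w := q ^ (i + 1)) (norm_pow q _ ▸ hlt.le)
  have hreal : ‖1 - (‖q‖ : ℂ) ^ (i + 1)‖ = 1 - ‖q‖ ^ (i + 1) := by
    rw [← Complex.ofReal_pow, ← Complex.ofReal_one, ← Complex.ofReal_sub, Complex.norm_real,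
      norm_of_nonneg (by linarith)]
  rw [norm_pow] at hfactor
  rw [hreal, exp_neg, ← mul_inv]
  exact inv_anti₀ (mul_pos (by linarith) (exp_pos _)) hfactor

lemma norm_exp_neg_add_mul_I (α θ : ℝ) : ‖Complex.exp (-(α + θ * I))‖ = exp (-α) := by
  simp [Complex.norm_exp]

lemma one_sub_exp_neg_le_norm_one_sub_exp {α θ : ℝ} (h0 : 0 ≤ α) (h1 : α ≤ 1 / 2) (hαθ : α ≤ |θ|)
    (hθ : |θ| ≤ π) : 1 - exp (-α) ≤ 0.95 * ‖1 - Complex.exp (-(α + θ * I))‖ := by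
  have hexp := add_one_le_exp (-α)
  have hcos : (1 - exp (-α)) ^ 2 / 5 ≤ 1 - cos θ := by
    have hpi : 1 / 5 ≤ 2 / π ^ 2 := by
      rw [div_le_div_iff₀ (by norm_num) (by positivity)]
      nlinarith [pi_lt_d2, pi_pos]
    have hjordan := cos_le_one_sub_mul_cos_sq hθ
    have hsq : (1 - exp (-α)) ^ 2 ≤ θ ^ 2 := by
      rw [← sq_abs θ]
      gcongr
      · linarith [exp_le_one_iff.2 (neg_nonpos.2 h0)]
      · linarith
    nlinarith [mul_le_mul hpi hsq (sq_nonneg _) (by positivity)]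
  refine le_of_sq_le_sq ?_ (by positivity)
  rw [mul_pow, norm_one_sub_sq, norm_exp_neg_add_mul_I, Complex.exp_re]
  simp only [Complex.neg_re, Complex.add_re, Complex.ofReal_re, Complex.re_ofReal_mul, Complex.I_re,
    Complex.neg_im, Complex.add_im, Complex.ofReal_im, Complex.im_ofReal_mul, Complex.I_im,
    mul_zero, mul_one, add_zero, zero_add, cos_neg]
  nlinarith [sq_nonneg (1 - exp (-α))]

lemma one_div_le_norm_div_sub_re_div {α θ : ℝ} (h0 : 0 < α) (h1 : α ≤ 1 / 2) (hαθ : α ≤ |θ|)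
    (hθ : |θ| ≤ π) :
    1 / (40 * α) ≤ exp (-α) / (1 - exp (-α)) -
      (Complex.exp (-(α + θ * I)) / (1 - Complex.exp (-(α + θ * I)))).re := by
  have hexp := add_one_le_exp (-α)
  have hlt : 0 < 1 - exp (-α) := by simpa using h0
  have hden := one_sub_exp_neg_le_norm_one_sub_exp h0.le h1 hαθ hθ
  have hre : (Complex.exp (-(α + θ * I)) / (1 - Complex.exp (-(α + θ * I)))).re ≤
      0.95 * (exp (-α) / (1 - exp (-α))) := by
    refine (Complex.re_le_norm _).trans ?_
    rw [norm_div, norm_exp_neg_add_mul_I, ← mul_div_assoc, div_le_div_iff₀ (by linarith) hlt]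
    nlinarith [exp_pos (-α)]
  have hreal : 1 / (40 * α) ≤ 0.05 * (exp (-α) / (1 - exp (-α))) := by
    rw [← mul_div_assoc, div_le_div_iff₀ (by positivity) hlt]
    nlinarith
  linarith

lemma exists_norm_partitionGenFun_sub_one_le :
    ∃ C : ℝ, 0 < C ∧ ∀ w : ℂ, 1 ≤ w.re → ‖partitionGenFun w - 1‖ ≤ C * exp (-w.re) := by
  have hsum : Summable fun n ↦ (partitionCount (n + 1) : ℝ) * exp (-1) ^ n := by
    refine (((summable_nat_add_iff 1).2 (summable_partitionCount_mul_pow (exp_pos (-1)).le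
      (by simp))).mul_right (exp 1)).congr fun n ↦ ?_
    rw [pow_succ, mul_assoc, mul_assoc, ← exp_add, neg_add_cancel, exp_zero, mul_one]
  have htsum : 0 ≤ ∑' n, (partitionCount (n + 1) : ℝ) * exp (-1) ^ n :=
    tsum_nonneg fun n ↦ by positivity
  refine ⟨∑' n, (partitionCount (n + 1) : ℝ) * exp (-1) ^ n + 1, by linarith, fun w hw ↦ ?_⟩
  have htail := (hasSum_nat_add_iff' 1).2 (hasSum_partitionGenFun (z := w) (by linarith))
  simp only [range_one, sum_singleton, pow_zero, mul_one,
    show partitionCount 0 = 1 by simp [partitionCount], Nat.cast_one] at htail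
  rw [← htail.tsum_eq]
  refine (tsum_of_norm_bounded (hsum.mul_right (exp (-w.re))).hasSum fun n ↦ ?_).trans ?_
  · rw [norm_mul, norm_pow, Complex.norm_exp, Complex.norm_natCast, pow_succ, ← mul_assoc,
      Complex.neg_re]
    gcongr
  · rw [tsum_mul_right]
    gcongr
    linarith

lemma exists_norm_partitionGenFun_ofReal_le : ∃ C : ℝ, 0 < C ∧ ∀ α : ℝ, 0 < α → α ≤ 1 →
    ‖partitionGenFun α‖ ≤ C * exp (π ^ 2 / (6 * α)) := by
  obtain ⟨C, hC, hP⟩ := exists_norm_partitionGenFun_sub_one_le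
  refine ⟨1 + C, by positivity, fun α h0 h1 ↦ ?_⟩
  have hdual : 1 ≤ (4 * π ^ 2 / α : ℂ).re := by
    rw [show (4 * π ^ 2 / α : ℂ) = (4 * π ^ 2 / α : ℝ) by push_cast; rfl, Complex.ofReal_re,
      le_div_iff₀ h0]
    nlinarith [pi_gt_three]
  have hP' : ‖partitionGenFun (4 * π ^ 2 / α)‖ ≤ 1 + C := by
    have htri := norm_sub_norm_le (partitionGenFun (4 * π ^ 2 / α)) 1
    have hexp := exp_le_one_iff.2 (show -(4 * π ^ 2 / α : ℂ).re ≤ 0 by linarith)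
    rw [norm_one] at htri
    linarith [hP _ hdual, mul_le_of_le_one_right hC.le hexp]
  have hsqrt : ‖Complex.sqrt (α / (2 * π))‖ ≤ 1 := by
    rw [show (α / (2 * π) : ℂ) = (α / (2 * π) : ℝ) by push_cast; rfl,
      Complex.sqrt_of_nonneg (by rw [Complex.zero_le_real]; positivity), Complex.ofReal_re,
      Complex.norm_real, norm_of_nonneg (sqrt_nonneg _)]
    exact sqrt_le_one.2 ((div_le_one (by positivity)).2 (by linarith [pi_gt_three]))
  have hexp : ‖Complex.exp (π ^ 2 / (6 * α) - α / 24)‖ ≤ exp (π ^ 2 / (6 * α)) := by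
    rw [Complex.norm_exp, show (π ^ 2 / (6 * α) - α / 24 : ℂ) = (π ^ 2 / (6 * α) - α / 24 : ℝ) by
      push_cast; rfl, Complex.ofReal_re]
    gcongr
    linarith
  rw [partitionGenFun_modular (by simpa using h0), norm_mul, norm_mul]
  calc _ ≤ 1 * exp (π ^ 2 / (6 * α)) * (1 + C) := by gcongr
    _ = (1 + C) * exp (π ^ 2 / (6 * α)) := by ring

lemma exists_norm_partitionGenFun_le_of_le_abs : ∃ C : ℝ, 0 < C ∧ ∀ α θ : ℝ, 0 < α → α ≤ 1 / 2 →
    α ≤ |θ| → |θ| ≤ π →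
      ‖partitionGenFun (α + θ * I)‖ ≤ C * exp (π ^ 2 / (6 * α) - 1 / (160 * α)) := by
  obtain ⟨C, hC, hreal⟩ := exists_norm_partitionGenFun_ofReal_le
  refine ⟨C, hC, fun α θ h0 h1 hαθ hθ ↦ ?_⟩
  have hnewman := norm_inv_tprod_one_sub_pow_le
    (norm_exp_neg_lt_one (z := α + θ * I) (by simpa using h0))
  rw [norm_exp_neg_add_mul_I, Complex.ofReal_exp, Complex.ofReal_neg] at hnewman
  have hgap := one_div_le_norm_div_sub_re_div h0 h1 hαθ hθ
  calc ‖partitionGenFun (α + θ * I)‖ ≤ ‖partitionGenFun α‖ * _ := hnewman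
    _ ≤ C * exp (π ^ 2 / (6 * α)) * exp (-(1 / (40 * α) / 4)) := by
        gcongr
        exact hreal α h0 (by linarith)
    _ = C * exp (π ^ 2 / (6 * α) - 1 / (160 * α)) := by
        rw [mul_assoc, ← exp_add]
        congr 2
        field_simp
        ring

end MinorArc

section MajorArc

open Complex (I)

lemma norm_mul_sub_one_le_of_le {R : Type*} [SeminormedRing R] {a b : R} {A B x : ℝ}
    (ha : ‖a - 1‖ ≤ A * x) (hb : ‖b - 1‖ ≤ B * x) (hA : 0 ≤ A) (hB : 0 ≤ B) (hx0 : 0 ≤ x)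
    (hx1 : x ≤ 1) : ‖a * b - 1‖ ≤ (A + B + A * B) * x := by
  have hx : x * x ≤ x := mul_le_of_le_one_left hx0 hx1
  calc ‖a * b - 1‖ = ‖(a - 1) + (b - 1) + (a - 1) * (b - 1)‖ := by congr 1; noncomm_ring
    _ ≤ ‖a - 1‖ + ‖b - 1‖ + ‖a - 1‖ * ‖b - 1‖ :=
        norm_add_le_of_le (norm_add_le _ _) (norm_mul_le _ _)
    _ ≤ A * x + B * x + A * x * (B * x) := by gcongr
    _ = (A + B) * x + A * B * (x * x) := by ring
    _ ≤ (A + B) * x + A * B * x := by gcongr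
    _ = (A + B + A * B) * x := by ring

lemma norm_one_sub_exp_neg_div_sub_one_le {z : ℂ} (hz0 : z ≠ 0) (hz1 : ‖z‖ ≤ 1) :
    ‖(1 - Complex.exp (-z)) / z - 1‖ ≤ ‖z‖ := by
  have hz : 0 < ‖z‖ := norm_pos_iff.2 hz0
  have hexp := Complex.norm_exp_sub_one_sub_id_le (x := -z) (by rwa [norm_neg])
  rw [show (1 - Complex.exp (-z)) / z - 1 = -(Complex.exp (-z) - 1 - -z) / z by field_simp; ring,
    norm_div, norm_neg, div_le_iff₀ hz]
  rwa [norm_neg, sq] at hexp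

lemma norm_exp_neg_div_sub_one_le {z : ℂ} (hz : ‖z‖ ≤ 1) :
    ‖Complex.exp (-z / 24) - 1‖ ≤ ‖z‖ := by
  have hnorm : ‖-z / 24‖ = ‖z‖ / 24 := by simp
  have hexp := Complex.norm_exp_sub_one_le (x := -z / 24) (by linarith [norm_nonneg z])
  linarith [norm_nonneg z]

lemma inv_norm_le_re_four_pi_sq_div {z : ℂ} (hz : 0 < z.re) (him : |z.im| ≤ z.re) :
    ‖z‖⁻¹ ≤ (4 * π ^ 2 / z : ℂ).re := by
  have hnorm : 0 < ‖z‖ := hz.trans_le (Complex.re_le_norm z)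
  have hle : ‖z‖ ≤ 2 * z.re := by
    linarith [Complex.norm_le_abs_re_add_abs_im z, abs_of_pos hz]
  rw [re_four_pi_sq_div, Complex.normSq_eq_norm_sq, inv_eq_one_div,
    div_le_div_iff₀ hnorm (by positivity)]
  calc 1 * ‖z‖ ^ 2 = ‖z‖ * ‖z‖ := by ring
    _ ≤ 2 * z.re * ‖z‖ := by gcongr
    _ ≤ 4 * π ^ 2 * z.re * ‖z‖ := by
        gcongr
        nlinarith [pi_gt_three]

lemma exists_norm_partitionGenFun_four_pi_sq_div_sub_one_le : ∃ C : ℝ, 0 < C ∧ ∀ z : ℂ,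
    0 < z.re → |z.im| ≤ z.re → ‖z‖ ≤ 1 → ‖partitionGenFun (4 * π ^ 2 / z) - 1‖ ≤ C * ‖z‖ := by
  obtain ⟨C, hC, hP⟩ := exists_norm_partitionGenFun_sub_one_le
  refine ⟨C, hC, fun z hz him hz1 ↦ ?_⟩
  have hnorm : 0 < ‖z‖ := hz.trans_le (Complex.re_le_norm z)
  have hre := inv_norm_le_re_four_pi_sq_div hz him
  refine (hP _ ((one_le_inv₀ hnorm).2 hz1 |>.trans hre)).trans ?_
  gcongr
  rw [exp_neg, inv_le_comm₀ (exp_pos _) hnorm]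
  linarith [add_one_le_exp (4 * π ^ 2 / z : ℂ).re]

/-- The holomorphic factor by which the Cauchy integrand deviates, near `z = 0`, from the explicit
function `z * √(z / 2π) * exp (n z + π² / 6z)`; it tends to `1` in the cone `|im z| ≤ re z`. -/
noncomputable def cuspCorrection (z : ℂ) : ℂ :=
  (1 - Complex.exp (-z)) / z * Complex.exp (-z / 24) * partitionGenFun (4 * π ^ 2 / z)

lemma cauchyIntegrand_eq {z : ℂ} (hz : 0 < z.re) (n : ℕ) : cauchyIntegrand n z =
    z * Complex.sqrt (z / (2 * π)) * cuspCorrection z * Complex.exp (n * z + π ^ 2 / (6 * z)) := by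
  have hz0 : z ≠ 0 := fun h ↦ by simp [h] at hz
  rw [cauchyIntegrand, cuspCorrection, partitionGenFun_modular hz, Complex.exp_add, sub_eq_add_neg _
    (z / 24), Complex.exp_add, neg_div]
  field_simp

lemma exists_norm_cuspCorrection_sub_one_le : ∃ C : ℝ, 0 < C ∧ ∀ z : ℂ,
    0 < z.re → |z.im| ≤ z.re → ‖z‖ ≤ 1 → ‖cuspCorrection z - 1‖ ≤ C * ‖z‖ := by
  obtain ⟨C, hC, hP⟩ := exists_norm_partitionGenFun_four_pi_sq_div_sub_one_le
  refine ⟨1 + 1 + 1 * 1 + C + (1 + 1 + 1 * 1) * C, by positivity, fun z hz him hz1 ↦ ?_⟩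
  have hz0 : z ≠ 0 := fun h ↦ by simp [h] at hz
  have hdiff := norm_one_sub_exp_neg_div_sub_one_le hz0 hz1
  have hexp := norm_exp_neg_div_sub_one_le hz1
  rw [← one_mul ‖z‖] at hdiff hexp
  exact norm_mul_sub_one_le_of_le
    (norm_mul_sub_one_le_of_le hdiff hexp zero_le_one zero_le_one (norm_nonneg z) hz1)
    (hP z hz him hz1) (by positivity) hC.le (norm_nonneg z) hz1

lemma complex_sqrt_ofReal_mul {r : ℝ} (hr : 0 < r) {w : ℂ} (hw : w ≠ 0) :
    Complex.sqrt (r * w) = √r * Complex.sqrt w := by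
  have hr0 : (r : ℂ) ≠ 0 := Complex.ofReal_ne_zero.2 hr.ne'
  have hsqrt : ((√r : ℝ) : ℂ) = Complex.exp (log r / 2 : ℝ) := by
    rw [← Complex.ofReal_exp, Real.sqrt_eq_rpow, rpow_def_of_pos hr]
    congr 2
    ring
  rw [sqrt_eq_exp (mul_ne_zero hr0 hw), sqrt_eq_exp hw, Complex.log_ofReal_mul hr hw, hsqrt,
    ← Complex.exp_add]
  congr 1
  push_cast
  ring

lemma norm_sqrt_one_add_mul_I_sub_one_le (t : ℝ) : ‖Complex.sqrt (1 + t * I) - 1‖ ≤ |t| := by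
  set s := Complex.sqrt (1 + t * I) with hs
  have hsq : s ^ 2 = 1 + t * I := by
    rw [hs, Complex.sqrt, ← Complex.cpow_nat_mul]
    norm_num
  have hre : 0 ≤ s.re := by
    rw [hs, Complex.sqrt, Complex.cpow_inv_two_re]
    positivity
  have hone : 1 ≤ ‖s + 1‖ := le_trans (by simpa using hre) (Complex.re_le_norm _)
  have hprod : ‖s - 1‖ * ‖s + 1‖ = |t| := by
    rw [← norm_mul, show (s - 1) * (s + 1) = t * I by linear_combination hsq]
    simp
  exact hprod ▸ le_mul_of_one_le_right (norm_nonneg _) hone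

lemma norm_one_add_mul_I_mul_sqrt_sub_one_le {t : ℝ} (ht : |t| ≤ 1) :
    ‖(1 + t * I) * Complex.sqrt (1 + t * I) - 1‖ ≤ 3 * |t| := by
  have hlin : ‖(1 + t * I) - 1‖ ≤ 1 * |t| := by simp
  have hsqrt := norm_sqrt_one_add_mul_I_sub_one_le t
  rw [← one_mul |t|] at hsqrt
  exact (norm_mul_sub_one_le_of_le hlin hsqrt zero_le_one zero_le_one (abs_nonneg t) ht).trans_eq
    (by norm_num)

lemma one_add_mul_I_ne_zero (t : ℝ) : (1 + t * I : ℂ) ≠ 0 := fun h ↦ by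
  simpa using congrArg Complex.re h

lemma norm_exp_sub_exp_le {a b : ℂ} {c : ℝ} (ha : a.re ≤ c) (hb : b.re ≤ c) :
    ‖Complex.exp a - Complex.exp b‖ ≤ exp c * ‖a - b‖ := by
  refine (convex_halfSpace_re_le c).norm_image_sub_le_of_norm_deriv_le (f := Complex.exp)
    (fun x _ ↦ Complex.differentiable_exp x) (fun x hx ↦ ?_) hb ha
  rw [Complex.deriv_exp, Complex.norm_exp]
  exact exp_le_exp.2 hx

lemma re_neg_div_one_add_mul_I_le {L t : ℝ} (hL : 0 ≤ L) (ht : |t| ≤ 1) :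
    (-(L * t ^ 2 / (1 + t * I)) : ℂ).re ≤ -(L * t ^ 2 / 2) := by
  have hnormSq : Complex.normSq (1 + t * I) = 1 + t ^ 2 := by simp [Complex.normSq_apply, sq]
  have hre : (-(L * t ^ 2 / (1 + t * I)) : ℂ).re = -(L * t ^ 2 / (1 + t ^ 2)) := by
    rw [Complex.neg_re, show (L * t ^ 2 / (1 + t * I) : ℂ) = ((L * t ^ 2 : ℝ) : ℂ) / (1 + t * I) by
      push_cast; rfl, Complex.div_re, hnormSq, Complex.ofReal_re, Complex.ofReal_im]
    simp
  have ht2 : t ^ 2 ≤ 1 := (sq_le_one_iff_abs_le_one t).2 ht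
  rw [hre, neg_le_neg_iff]
  gcongr
  linarith

lemma norm_exp_neg_div_one_add_mul_I_sub_le {L t : ℝ} (hL : 0 ≤ L) (ht : |t| ≤ 1) :
    ‖Complex.exp (-(L * t ^ 2 / (1 + t * I))) - exp (-(L * t ^ 2))‖ ≤
      exp (-(L * t ^ 2 / 2)) * (L * |t| ^ 3) := by
  have hre : (-(L * t ^ 2) : ℝ) ≤ -(L * t ^ 2 / 2) := by nlinarith [mul_nonneg hL (sq_nonneg t)]
  rw [Complex.ofReal_exp]
  refine (norm_exp_sub_exp_le (re_neg_div_one_add_mul_I_le hL ht)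
    (by rwa [Complex.ofReal_re])).trans ?_
  gcongr
  have hdiff : (-(L * t ^ 2 / (1 + t * I)) - (-(L * t ^ 2) : ℝ) : ℂ) =
      (L * t ^ 2 : ℝ) * (t * I / (1 + t * I)) := by
    have := one_add_mul_I_ne_zero t
    push_cast
    field_simp
    ring
  have hnorm : 1 ≤ ‖(1 + t * I : ℂ)‖ := le_trans (by simp) (Complex.re_le_norm _)
  have hquot : ‖(t * I / (1 + t * I) : ℂ)‖ ≤ |t| := by
    rw [norm_div, norm_mul, Complex.norm_I, mul_one, Complex.norm_real, norm_eq_abs]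
    exact div_le_self (abs_nonneg t) hnorm
  rw [hdiff, norm_mul, Complex.norm_real, norm_of_nonneg (by positivity), ← sq_abs t]
  calc L * |t| ^ 2 * ‖(t * I / (1 + t * I) : ℂ)‖ ≤ L * |t| ^ 2 * |t| := by gcongr
    _ = L * |t| ^ 3 := by ring

lemma add_abs_add_cube_le {α : ℝ} (h0 : 0 < α) (h1 : α ≤ 1) (t : ℝ) :
    α + |t| + π ^ 2 / (6 * α) * |t| ^ 3 ≤ 8 * √α * exp (t ^ 2 / (2 * α)) := by
  obtain ⟨r, hr0, rfl⟩ : ∃ r : ℝ, 0 < r ∧ α = r ^ 2 := ⟨√α, sqrt_pos.2 h0, (sq_sqrt h0.le).symm⟩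
  obtain ⟨y, hy0, hy⟩ : ∃ y : ℝ, 0 ≤ y ∧ |t| = r * y := ⟨|t| / r, by positivity, by field_simp⟩
  have hr1 : r ≤ 1 := (sq_le_one_iff₀ hr0.le).1 h1
  have hpi : π ^ 2 / 6 ≤ 2 := by nlinarith [pi_lt_d2, pi_gt_three]
  have hexp := quadratic_le_exp_of_nonneg (x := y ^ 2 / 2) (by positivity)
  have hpoly : 1 + y + 2 * y ^ 3 ≤ 8 * exp (y ^ 2 / 2) := by
    nlinarith [sq_nonneg (y - 1), sq_nonneg (y * (y - 1)), sq_nonneg y]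
  rw [← sq_abs t, hy, sqrt_sq hr0.le, show (r * y) ^ 2 / (2 * r ^ 2) = y ^ 2 / 2 by field_simp]
  calc r ^ 2 + r * y + π ^ 2 / (6 * r ^ 2) * (r * y) ^ 3
      = r * (r + y + π ^ 2 / 6 * y ^ 3) := by field_simp
    _ ≤ r * (1 + y + 2 * y ^ 3) := by gcongr
    _ ≤ r * (8 * exp (y ^ 2 / 2)) := by gcongr
    _ = 8 * r * exp (y ^ 2 / 2) := by ring

/-- The Gaussian approximation of the Cauchy integrand at `α + θ I`, where the saddle point `α` and
the index `n` are related by `n α² = π² / 6`. -/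
noncomputable def saddleGaussian (α θ : ℝ) : ℝ :=
  α * √(α / (2 * π)) * exp (π ^ 2 / (3 * α)) * exp (-(π ^ 2 / (6 * α ^ 3)) * θ ^ 2)

lemma cauchyIntegrand_mul_one_add_mul_I {α : ℝ} (h0 : 0 < α) {n : ℕ} (hn : n * α ^ 2 = π ^ 2 / 6)
    (t : ℝ) : cauchyIntegrand n (α * (1 + t * I)) =
      (α * √(α / (2 * π)) * exp (π ^ 2 / (3 * α)) : ℝ) *
        ((1 + t * I) * Complex.sqrt (1 + t * I) * cuspCorrection (α * (1 + t * I)) *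
          Complex.exp (-((π ^ 2 / (6 * α) : ℝ) * t ^ 2 / (1 + t * I)))) := by
  have hw := one_add_mul_I_ne_zero t
  have hα : (α : ℂ) ≠ 0 := Complex.ofReal_ne_zero.2 h0.ne'
  have hnα : (n : ℂ) * α ^ 2 = π ^ 2 / 6 := by exact_mod_cast hn
  have hsqrt : Complex.sqrt (α * (1 + t * I) / (2 * π)) =
      √(α / (2 * π)) * Complex.sqrt (1 + t * I) := by
    rw [← complex_sqrt_ofReal_mul (by positivity) hw]
    congr 1
    push_cast
    ring
  -- With `w = 1 + t I` the exponent is a multiple of `w + 1 / w = 2 - t² / w`.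
  have hexponent : n * (α * (1 + t * I)) + π ^ 2 / (6 * (α * (1 + t * I))) =
      (π ^ 2 / (3 * α) : ℝ) + -((π ^ 2 / (6 * α) : ℝ) * t ^ 2 / (1 + t * I)) := by
    rw [show n * (α * (1 + t * I)) = n * α ^ 2 * (1 + t * I) / α by field_simp, hnα]
    push_cast
    field_simp
    ring_nf
    simp only [Complex.I_sq]
    ring
  rw [cauchyIntegrand_eq (by simpa using h0), hsqrt, hexponent, Complex.exp_add, Complex.ofReal_mul,
    Complex.ofReal_mul, Complex.ofReal_exp]
  ring

lemma exists_norm_mul_cuspCorrection_sub_one_le : ∃ C : ℝ, 0 < C ∧ ∀ α t : ℝ, 0 < α → α ≤ 1 / 2 →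
    |t| ≤ 1 → ‖(1 + t * I) * Complex.sqrt (1 + t * I) * cuspCorrection (α * (1 + t * I)) - 1‖ ≤
      C * (α + |t|) := by
  obtain ⟨C, hC, hcusp⟩ := exists_norm_cuspCorrection_sub_one_le
  refine ⟨(6 + 4 * C + 6 * (4 * C)) / 2, by positivity, fun α t h0 h1 ht ↦ ?_⟩
  have hnorm : ‖(α * (1 + t * I) : ℂ)‖ ≤ 2 * α := by
    have hw : ‖(1 + t * I : ℂ)‖ ≤ 1 + |t| := (norm_add_le _ _).trans (by simp)
    rw [norm_mul, Complex.norm_real, norm_of_nonneg h0.le]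
    nlinarith
  have hcusp' := hcusp (α * (1 + t * I)) (by simpa using h0)
    (by simpa [abs_mul, abs_of_pos h0] using mul_le_of_le_one_right h0.le ht) (by linarith)
  have ht0 := abs_nonneg t
  refine (norm_mul_sub_one_le_of_le (x := (α + |t|) / 2) (A := 6) (B := 4 * C)
    ((norm_one_add_mul_I_mul_sqrt_sub_one_le ht).trans (by linarith)) (hcusp'.trans ?_)
    (by norm_num) (by positivity) (by positivity) (by linarith)).trans_eq (by ring)
  nlinarith

lemma exp_mul_exp_neg_pi_sq_le {α : ℝ} (h0 : 0 < α) (t : ℝ) :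
    exp (t ^ 2 / (2 * α)) * exp (-(π ^ 2 / (6 * α) * t ^ 2 / 2)) ≤ exp (-(t ^ 2 / (4 * α))) := by
  rw [← exp_add, exp_le_exp, ← sub_nonneg, show -(t ^ 2 / (4 * α)) - (t ^ 2 / (2 * α) +
    -(π ^ 2 / (6 * α) * t ^ 2 / 2)) = t ^ 2 / (12 * α) * (π ^ 2 - 9) by field_simp; ring]
  exact mul_nonneg (by positivity) (by nlinarith [pi_gt_three])

lemma exists_norm_mul_cuspCorrection_mul_exp_sub_exp_le : ∃ C : ℝ, 0 < C ∧ ∀ α t : ℝ, 0 < α →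
    α ≤ 1 / 2 → |t| ≤ 1 →
      ‖(1 + t * I) * Complex.sqrt (1 + t * I) * cuspCorrection (α * (1 + t * I)) *
          Complex.exp (-((π ^ 2 / (6 * α) : ℝ) * t ^ 2 / (1 + t * I))) -
            exp (-(π ^ 2 / (6 * α) * t ^ 2))‖ ≤ C * √α * exp (-(t ^ 2 / (4 * α))) := by
  obtain ⟨C, hC, hfactor⟩ := exists_norm_mul_cuspCorrection_sub_one_le
  refine ⟨8 * (C + 1), by positivity, fun α t h0 h1 ht ↦ ?_⟩
  set L := π ^ 2 / (6 * α)
  set c := (1 + t * I) * Complex.sqrt (1 + t * I) * cuspCorrection (α * (1 + t * I))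
  set a : ℂ := -(L * t ^ 2 / (1 + t * I))
  have hL0 : 0 ≤ L := by positivity
  have hexp : ‖Complex.exp a‖ ≤ exp (-(L * t ^ 2 / 2)) := by
    rw [Complex.norm_exp]
    exact exp_le_exp.2 (re_neg_div_one_add_mul_I_le hL0 ht)
  calc ‖c * Complex.exp a - exp (-(L * t ^ 2))‖
      = ‖(c - 1) * Complex.exp a + (Complex.exp a - exp (-(L * t ^ 2)))‖ := by congr 1; ring
    _ ≤ C * (α + |t|) * exp (-(L * t ^ 2 / 2)) + exp (-(L * t ^ 2 / 2)) * (L * |t| ^ 3) := by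
        refine norm_add_le_of_le ?_ (norm_exp_neg_div_one_add_mul_I_sub_le hL0 ht)
        rw [norm_mul]
        gcongr
        exact hfactor α t h0 h1 ht
    _ ≤ (C + 1) * (α + |t| + L * |t| ^ 3) * exp (-(L * t ^ 2 / 2)) := by
        rw [mul_comm (exp _), ← add_mul]
        gcongr
        nlinarith [abs_nonneg t, mul_nonneg hL0 (pow_nonneg (abs_nonneg t) 3)]
    _ ≤ (C + 1) * (8 * √α * exp (t ^ 2 / (2 * α))) * exp (-(L * t ^ 2 / 2)) := by
        gcongr
        exact add_abs_add_cube_le h0 (by linarith) t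
    _ = 8 * (C + 1) * √α * (exp (t ^ 2 / (2 * α)) * exp (-(L * t ^ 2 / 2))) := by ring
    _ ≤ 8 * (C + 1) * √α * exp (-(t ^ 2 / (4 * α))) := by
        gcongr
        exact exp_mul_exp_neg_pi_sq_le h0 t

lemma sqrt_div_two_pi_le {α : ℝ} (h0 : 0 ≤ α) : √(α / (2 * π)) ≤ √α :=
  sqrt_le_sqrt (div_le_self h0 (by linarith [pi_gt_three]))

lemma exists_norm_cauchyIntegrand_sub_saddleGaussian_le_of_abs_le : ∃ C : ℝ, 0 < C ∧
    ∀ (n : ℕ) (α t : ℝ), 0 < α → α ≤ 1 / 2 → n * α ^ 2 = π ^ 2 / 6 → |t| ≤ 1 →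
      ‖cauchyIntegrand n (α * (1 + t * I)) - saddleGaussian α (α * t)‖ ≤
        C * (α ^ 2 * exp (π ^ 2 / (3 * α)) * exp (-(t ^ 2 / (4 * α)))) := by
  obtain ⟨C, hC, hmain⟩ := exists_norm_mul_cuspCorrection_mul_exp_sub_exp_le
  refine ⟨C, hC, fun n α t h0 h1 hn ht ↦ ?_⟩
  have hgauss : saddleGaussian α (α * t) =
      α * √(α / (2 * π)) * exp (π ^ 2 / (3 * α)) * exp (-(π ^ 2 / (6 * α) * t ^ 2)) := by
    rw [saddleGaussian]
    congr 2
    field_simp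
  rw [cauchyIntegrand_mul_one_add_mul_I h0 hn, hgauss, Complex.ofReal_mul _
    (exp (-(π ^ 2 / (6 * α) * t ^ 2))), ← mul_sub, norm_mul, Complex.norm_real,
    norm_of_nonneg (by positivity)]
  calc _ ≤ α * √α * exp (π ^ 2 / (3 * α)) * (C * √α * exp (-(t ^ 2 / (4 * α)))) := by
        have hsqrt := sqrt_div_two_pi_le h0.le
        gcongr
        exact hmain α t h0 h1 ht
    _ = C * (α * (√α * √α) * exp (π ^ 2 / (3 * α)) * exp (-(t ^ 2 / (4 * α)))) := by ring
    _ = _ := by rw [mul_self_sqrt h0.le, ← sq]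

end MajorArc

section SaddlePoint

open MeasureTheory
open Complex (I)

lemma saddleGaussian_nonneg {α : ℝ} (h0 : 0 < α) (θ : ℝ) : 0 ≤ saddleGaussian α θ := by
  unfold saddleGaussian
  positivity

lemma saddleGaussian_le_of_le_abs {α θ : ℝ} (h0 : 0 < α) (hαθ : α ≤ |θ|) :
    saddleGaussian α θ ≤
      √α * (α ^ 2 * exp (π ^ 2 / (3 * α)) * exp (-(1 / (4 * α ^ 3)) * θ ^ 2)) := by
  have hθ : α ^ 2 ≤ θ ^ 2 := sq_abs θ ▸ pow_le_pow_left₀ h0.le hαθ 2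
  have hu : 1 / α ≤ θ ^ 2 / α ^ 3 := by
    rw [div_le_div_iff₀ h0 (by positivity)]
    nlinarith
  have hexponent : -(π ^ 2 / (6 * α ^ 3)) * θ ^ 2 ≤ -(1 / α) + -(1 / (4 * α ^ 3)) * θ ^ 2 := by
    have hsplit : -(1 / (4 * α ^ 3)) * θ ^ 2 - -(π ^ 2 / (6 * α ^ 3)) * θ ^ 2 =
      (π ^ 2 / 6 - 1 / 4) * (θ ^ 2 / α ^ 3) := by ring
    have hcoeff : 1 ≤ π ^ 2 / 6 - 1 / 4 := by nlinarith [pi_gt_three]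
    linarith [le_mul_of_one_le_left (show 0 ≤ θ ^ 2 / α ^ 3 by positivity) hcoeff]
  have hinv : exp (-(1 / α)) ≤ α := by
    rw [exp_neg, inv_le_comm₀ (exp_pos _) h0, ← one_div]
    linarith [add_one_le_exp (1 / α)]
  have hsqrt := sqrt_div_two_pi_le h0.le
  calc saddleGaussian α θ ≤ α * √α * exp (π ^ 2 / (3 * α)) *
        exp (-(1 / α) + -(1 / (4 * α ^ 3)) * θ ^ 2) := by
        unfold saddleGaussian
        gcongr
    _ ≤ α * √α * exp (π ^ 2 / (3 * α)) * (α * exp (-(1 / (4 * α ^ 3)) * θ ^ 2)) := by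
        rw [exp_add]
        gcongr
    _ = _ := by ring

lemma exp_neg_one_div_le {α : ℝ} (h0 : 0 < α) :
    exp (-(1 / (160 * α))) ≤ 24 * 160 ^ 4 * α ^ 4 := by
  have hfour := pow_div_factorial_le_exp (1 / (160 * α)) (by positivity) 4
  rw [exp_neg, inv_le_comm₀ (exp_pos _) (by positivity)]
  refine le_of_eq_of_le ?_ hfour
  rw [show ((4 : ℕ).factorial : ℝ) = 24 by norm_num [Nat.factorial]]
  field_simp

lemma exists_norm_cauchyIntegrand_le_of_le_abs : ∃ C : ℝ, 0 < C ∧ ∀ (n : ℕ) (α θ : ℝ), 0 < α →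
    α ≤ 1 / 2 → n * α ^ 2 = π ^ 2 / 6 → α ≤ |θ| → |θ| ≤ π →
      ‖cauchyIntegrand n (α + θ * I)‖ ≤ C * (α ^ 4 * exp (π ^ 2 / (3 * α))) := by
  obtain ⟨C, hC, hP⟩ := exists_norm_partitionGenFun_le_of_le_abs
  refine ⟨2 * C * (24 * 160 ^ 4), by positivity, fun n α θ h0 h1 hn hαθ hθ ↦ ?_⟩
  have hfactor : ‖1 - Complex.exp (-(α + θ * I))‖ ≤ 2 := by
    refine (norm_sub_le _ _).trans ?_
    rw [norm_one, norm_exp_neg_add_mul_I]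
    linarith [exp_le_one_iff.2 (neg_nonpos.2 h0.le)]
  have hpow : ‖Complex.exp (n * (α + θ * I))‖ = exp (π ^ 2 / (6 * α)) := by
    rw [Complex.norm_exp, show π ^ 2 / (6 * α) = n * α by field_simp; linarith]
    simp
  have hexp : exp (π ^ 2 / (6 * α) - 1 / (160 * α)) * exp (π ^ 2 / (6 * α)) =
      exp (-(1 / (160 * α))) * exp (π ^ 2 / (3 * α)) := by
    rw [← exp_add, ← exp_add]
    congr 1
    ring
  rw [cauchyIntegrand, norm_mul, norm_mul, hpow]
  calc _ ≤ 2 * (C * exp (π ^ 2 / (6 * α) - 1 / (160 * α))) * exp (π ^ 2 / (6 * α)) := by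
        gcongr
        exact hP α θ h0 h1 hαθ hθ
    _ = 2 * C * (exp (-(1 / (160 * α))) * exp (π ^ 2 / (3 * α))) := by rw [← hexp]; ring
    _ ≤ 2 * C * (24 * 160 ^ 4 * α ^ 4 * exp (π ^ 2 / (3 * α))) := by
        gcongr
        exact exp_neg_one_div_le h0
    _ = _ := by ring

lemma exists_norm_indicator_cauchyIntegrand_sub_saddleGaussian_le : ∃ C : ℝ, 0 < C ∧
    ∀ (n : ℕ) (α : ℝ), 0 < α → α ≤ 1 / 2 → n * α ^ 2 = π ^ 2 / 6 → ∀ θ : ℝ,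
      ‖(Set.Ioc (-π) π).indicator (fun θ : ℝ ↦ cauchyIntegrand n (α + θ * I)) θ -
          saddleGaussian α θ‖ ≤
        C * (α ^ 2 * exp (π ^ 2 / (3 * α)) * exp (-(1 / (4 * α ^ 3)) * θ ^ 2)) +
          (Set.Ioc (-π) π).indicator (fun _ ↦ C * (α ^ 4 * exp (π ^ 2 / (3 * α)))) θ := by
  obtain ⟨C₁, hC₁, hmajor⟩ := exists_norm_cauchyIntegrand_sub_saddleGaussian_le_of_abs_le
  obtain ⟨C₂, hC₂, hminor⟩ := exists_norm_cauchyIntegrand_le_of_le_abs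
  refine ⟨1 + C₁ + C₂, by positivity, fun n α h0 h1 hn θ ↦ ?_⟩
  set G := α ^ 2 * exp (π ^ 2 / (3 * α)) * exp (-(1 / (4 * α ^ 3)) * θ ^ 2) with hG
  have hG0 : 0 ≤ G := by positivity
  have hind : 0 ≤ (Set.Ioc (-π) π).indicator
      (fun _ ↦ (1 + C₁ + C₂) * (α ^ 4 * exp (π ^ 2 / (3 * α)))) θ :=
    Set.indicator_nonneg (fun _ _ ↦ by positivity) θ
  rcases le_total |θ| α with hθ | hθ
  · have hmem : θ ∈ Set.Ioc (-π) π := by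
      constructor <;> linarith [pi_gt_three, abs_le.1 hθ]
    have hnear := hmajor n α (θ / α) h0 h1 hn (by rwa [abs_div, abs_of_pos h0, div_le_one h0])
    have hpoint : (α * (1 + (θ / α : ℝ) * I) : ℂ) = α + θ * I := by
      have : (α : ℂ) ≠ 0 := Complex.ofReal_ne_zero.2 h0.ne'
      push_cast
      field_simp
    have hexponent : -((θ / α) ^ 2 / (4 * α)) = -(1 / (4 * α ^ 3)) * θ ^ 2 := by field_simp
    rw [hpoint, mul_div_cancel₀ θ h0.ne', hexponent, ← hG] at hnear
    rw [Set.indicator_of_mem hmem]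
    nlinarith
  · have hgauss : ‖(saddleGaussian α θ : ℂ)‖ ≤ (1 + C₁ + C₂) * G := by
      rw [Complex.norm_real, norm_of_nonneg (saddleGaussian_nonneg h0 θ)]
      refine (saddleGaussian_le_of_le_abs h0 hθ).trans ?_
      gcongr
      linarith [sqrt_le_one.2 (show α ≤ 1 by linarith)]
    by_cases hmem : θ ∈ Set.Ioc (-π) π
    · rw [Set.indicator_of_mem hmem, Set.indicator_of_mem hmem]
      refine (norm_sub_le_of_le (hminor n α θ h0 h1 hn hθ (abs_le.2 ⟨hmem.1.le, hmem.2⟩))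
        hgauss).trans ?_
      rw [add_comm]
      gcongr
      linarith
    · rw [Set.indicator_of_notMem hmem, zero_sub, norm_neg]
      linarith

lemma integrable_saddleGaussian {α : ℝ} (h0 : 0 < α) : Integrable (saddleGaussian α) :=
  (integrable_exp_neg_mul_sq (by positivity)).const_mul _

lemma integral_saddleGaussian {α : ℝ} (h0 : 0 < α) :
    ∫ θ, saddleGaussian α θ = √3 / π * α ^ 3 * exp (π ^ 2 / (3 * α)) := by
  have hsqrt : √(α / (2 * π)) * √(π / (π ^ 2 / (6 * α ^ 3))) = √3 / π * α ^ 2 := by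
    rw [← sqrt_mul (by positivity), show α / (2 * π) * (π / (π ^ 2 / (6 * α ^ 3))) =
      3 * (α ^ 2 / π) ^ 2 by field_simp; norm_num, sqrt_mul (by norm_num), sqrt_sq (by positivity)]
    ring
  simp only [saddleGaussian]
  rw [integral_const_mul, integral_gaussian]
  linear_combination (α * exp (π ^ 2 / (3 * α))) * hsqrt

lemma integral_exp_neg_div_mul_sq {α : ℝ} (h0 : 0 < α) :
    ∫ θ : ℝ, exp (-(1 / (4 * α ^ 3)) * θ ^ 2) = 2 * √π * α * √α := by
  rw [integral_gaussian, show π / (1 / (4 * α ^ 3)) = (2 * α) ^ 2 * (π * α) by field_simp; norm_num,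
    sqrt_mul (by positivity), sqrt_sq (by positivity), sqrt_mul pi_pos.le]
  ring

lemma exists_abs_integral_sub_integral_saddleGaussian_le : ∃ C : ℝ, 0 < C ∧ ∀ (n : ℕ) (α : ℝ),
    0 < α → α ≤ 1 / 2 → (n + 1 : ℝ) * α ^ 2 = π ^ 2 / 6 →
      |2 * π * ((partitionCount (n + 1) : ℝ) - partitionCount n) - ∫ θ, saddleGaussian α θ| ≤
        C * (α ^ 3 * √α * exp (π ^ 2 / (3 * α))) := by
  obtain ⟨C, hC, hbound⟩ := exists_norm_indicator_cauchyIntegrand_sub_saddleGaussian_le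
  refine ⟨C * (2 * √π) + 2 * π * C, by positivity, fun n α h0 h1 hn ↦ ?_⟩
  set M := exp (π ^ 2 / (3 * α))
  have hgauss : Integrable fun θ : ℝ ↦ C * (α ^ 2 * M * exp (-(1 / (4 * α ^ 3)) * θ ^ 2)) :=
    ((integrable_exp_neg_mul_sq (by positivity)).const_mul _).const_mul _
  have hconst : Integrable ((Set.Ioc (-π) π).indicator fun _ : ℝ ↦ C * (α ^ 4 * M)) :=
    (integrable_indicator_iff measurableSet_Ioc).2 continuous_const.integrableOn_Ioc
  have hcauchy : Integrable
      ((Set.Ioc (-π) π).indicator fun θ : ℝ ↦ cauchyIntegrand (n + 1) (α + θ * I)) :=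
    (integrable_indicator_iff measurableSet_Ioc).2
      (continuous_cauchyIntegrand h0 (n + 1)).integrableOn_Ioc
  have hsaddle : Integrable fun θ : ℝ ↦ (saddleGaussian α θ : ℂ) :=
    (integrable_saddleGaussian h0).ofReal
  have hle := norm_integral_le_of_norm_le (hgauss.add hconst)
    (ae_of_all _ (hbound (n + 1) α h0 h1 (by exact_mod_cast hn)))
  rw [integral_sub hcauchy hsaddle,
    integral_indicator measurableSet_Ioc, ← intervalIntegral.integral_of_le (by linarith [pi_pos]),
    integral_cauchyIntegrand h0, integral_complex_ofReal, integral_add' hgauss hconst,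
    integral_const_mul, integral_const_mul, integral_exp_neg_div_mul_sq h0,
    integral_indicator measurableSet_Ioc, setIntegral_const, volume_real_Ioc_of_le
    (by linarith [pi_pos]), smul_eq_mul] at hle
  have hpow : α ^ 4 ≤ α ^ 3 * √α := by
    rw [pow_succ]
    gcongr
    exact le_sqrt_of_sq_le (by nlinarith)
  calc _ = ‖(2 * π * ((partitionCount (n + 1) : ℂ) - partitionCount n) -
        (∫ θ, saddleGaussian α θ : ℝ) : ℂ)‖ := by
        rw [← norm_eq_abs, ← Complex.norm_real]
        push_cast
        rfl
    _ ≤ C * (α ^ 2 * M * (2 * √π * α * √α)) + (π - -π) * (C * (α ^ 4 * M)) := hle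
    _ ≤ C * (α ^ 2 * M * (2 * √π * α * √α)) + (π - -π) * (C * (α ^ 3 * √α * M)) := by
        gcongr
        linarith [pi_pos]
    _ = (C * (2 * √π) + 2 * π * C) * (α ^ 3 * √α * M) := by ring

/-- The exponential growth factor `e^{2π√x/√6}` of the partition function. -/
noncomputable def partitionExp (x : ℝ) : ℝ := exp (2 * π * √x / √6)

lemma partitionExp_pos (x : ℝ) : 0 < partitionExp x := exp_pos _

/-- The radius parameter at which the Cauchy integral for the coefficient of index `x` has its
saddle point: the solution `α > 0` of `x α² = π² / 6`. -/
noncomputable def saddlePoint (x : ℝ) : ℝ := π / √(6 * x)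

lemma saddlePoint_pos {x : ℝ} (hx : 0 < x) : 0 < saddlePoint x := by
  unfold saddlePoint
  positivity

lemma mul_saddlePoint_sq {x : ℝ} (hx : 0 < x) : x * saddlePoint x ^ 2 = π ^ 2 / 6 := by
  rw [saddlePoint, div_pow, sq_sqrt (by positivity)]
  field_simp

lemma saddlePoint_le_half {x : ℝ} (hx : 7 ≤ x) : saddlePoint x ≤ 1 / 2 := by
  have hsqrt : 2 * π ≤ √(6 * x) := le_sqrt_of_sq_le (by nlinarith [pi_lt_d2, pi_gt_three])
  rw [saddlePoint, div_le_div_iff₀ (by positivity) two_pos]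
  linarith

lemma exp_saddlePoint {x : ℝ} (hx : 0 < x) :
    exp (π ^ 2 / (3 * saddlePoint x)) = partitionExp x := by
  have hsix : √6 ^ 2 = 6 := sq_sqrt (by norm_num)
  rw [saddlePoint, partitionExp, sqrt_mul (by norm_num)]
  congr 1
  field_simp
  linear_combination hsix

lemma saddlePoint_eq_mul_rpow {x : ℝ} (hx : 0 < x) :
    saddlePoint x = π / √6 * x ^ (-(1 : ℝ) / 2) := by
  rw [saddlePoint, sqrt_mul (by norm_num), sqrt_eq_rpow x, neg_div, rpow_neg hx.le]
  field_simp

lemma saddlePoint_pow_three {x : ℝ} (hx : 0 < x) :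
    √3 / π * saddlePoint x ^ 3 = 2 * π * (π / (12 * √2) * x ^ (-(3 : ℝ) / 2)) := by
  have hpow : (x ^ (-(1 : ℝ) / 2)) ^ 3 = x ^ (-(3 : ℝ) / 2) := by
    rw [← rpow_natCast, ← rpow_mul hx.le]
    norm_num
  have hsix : √6 = √3 * √2 := by rw [← sqrt_mul (by norm_num)]; norm_num
  have htwo : √2 ^ 2 = 2 := sq_sqrt (by norm_num)
  have hthree : √3 ^ 2 = 3 := sq_sqrt (by norm_num)
  rw [saddlePoint_eq_mul_rpow hx, mul_pow, hpow, hsix]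
  field_simp
  rw [htwo, hthree]
  norm_num

lemma saddlePoint_pow_three_mul_sqrt {x : ℝ} (hx : 0 < x) :
    saddlePoint x ^ 3 * √(saddlePoint x) = (π / √6) ^ ((7 : ℝ) / 2) * x ^ (-(7 : ℝ) / 4) := by
  rw [sqrt_eq_rpow, ← rpow_natCast, ← rpow_add (saddlePoint_pos hx), saddlePoint_eq_mul_rpow hx,
    mul_rpow (by positivity) (by positivity), ← rpow_mul hx.le]
  norm_num

/-- The main term `π/(12√2) x^{-3/2} e^{2π√x/√6}` in the asymptotics of `p(x) - p(x - 1)`. -/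
noncomputable def partitionDiffMain (x : ℝ) : ℝ :=
  π / (12 * √2) * x ^ (-(3 : ℝ) / 2) * partitionExp x

/-- The error term `x^{-7/4} e^{2π√x/√6}` in the asymptotics of `p(x) - p(x - 1)`. -/
noncomputable def partitionDiffError (x : ℝ) : ℝ := x ^ (-(7 : ℝ) / 4) * partitionExp x

theorem isBigO_partitionCount_succ_sub :
    (fun n : ℕ ↦ (partitionCount (n + 1) : ℝ) - partitionCount n - partitionDiffMain (n + 1))
      =O[Filter.atTop] fun n : ℕ ↦ partitionDiffError (n + 1) := by
  obtain ⟨C, -, hC⟩ := exists_abs_integral_sub_integral_saddleGaussian_le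
  refine Asymptotics.IsBigO.of_bound (C * (π / √6) ^ ((7 : ℝ) / 2) / (2 * π)) ?_
  filter_upwards [Filter.eventually_ge_atTop 6] with n hn
  have hx7 : (7 : ℝ) ≤ n + 1 := by exact_mod_cast Nat.succ_le_succ hn
  have hx : (0 : ℝ) < n + 1 := by positivity
  have hle := hC n (saddlePoint (n + 1)) (saddlePoint_pos hx) (saddlePoint_le_half hx7)
    (mul_saddlePoint_sq hx)
  rw [integral_saddleGaussian (saddlePoint_pos hx), saddlePoint_pow_three hx, exp_saddlePoint hx,
    saddlePoint_pow_three_mul_sqrt hx, mul_assoc (2 * π), ← partitionDiffMain, ← mul_sub, abs_mul,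
    abs_of_pos (by positivity)] at hle
  rw [partitionDiffError, norm_eq_abs, norm_of_nonneg (mul_nonneg (by positivity)
    (partitionExp_pos _).le), div_mul_eq_mul_div, le_div_iff₀' (by positivity)]
  exact hle.trans_eq (by ring)

end SaddlePoint

section DifferenceAsymptotics

lemma one_le_two_pi_div_sqrt_six : 1 ≤ 2 * π / √6 := by
  rw [one_le_div (by positivity), sqrt_le_left (by positivity)]
  nlinarith [pi_gt_three]

lemma rpow_neg_mul_partitionExp_le {a x y : ℝ} (ha : a ≤ 2) (hx : 1 ≤ x) (hxy : x ≤ y) :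
    x ^ (-a) * partitionExp x ≤ 24 * exp 1 * (y ^ (-a) * partitionExp y) := by
  have hx0 : 0 < x := by linarith
  have hy0 : 0 < y := by linarith
  set s := √(y / x) with hs
  have hone : 1 ≤ y / x := (one_le_div hx0).2 hxy
  have hs1 : 1 ≤ s := one_le_sqrt.2 hone
  have hsx : √y = √x * s := by rw [hs, ← sqrt_mul hx0.le, mul_div_cancel₀ y hx0.ne']
  have hratio : (y / x) ^ a ≤ s ^ 4 := calc
    (y / x) ^ a ≤ (y / x) ^ (2 : ℝ) := rpow_le_rpow_of_exponent_le hone ha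
    _ = s ^ 4 := by rw [rpow_two, ← sq_sqrt (zero_le_one.trans hone), ← hs]; ring
  have hexp : s ^ 4 ≤ 24 * exp s := by
    have := pow_div_factorial_le_exp s (by positivity) 4
    rw [show ((4 : ℕ).factorial : ℝ) = 24 by norm_num [Nat.factorial], div_le_iff₀ (by norm_num)]
      at this
    linarith
  have hexponent : s ≤ 1 + (2 * π * √y / √6 - 2 * π * √x / √6) := by
    have hcoeff : 1 ≤ 2 * π / √6 * √x :=
      one_le_mul_of_one_le_of_one_le one_le_two_pi_div_sqrt_six (one_le_sqrt.2 hx)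
    rw [show 2 * π * √y / √6 - 2 * π * √x / √6 = 2 * π / √6 * √x * (s - 1) by rw [hsx]; ring]
    nlinarith
  have hgrowth : (y / x) ^ a * partitionExp x ≤ 24 * exp 1 * partitionExp y := calc
    _ ≤ 24 * exp (1 + (2 * π * √y / √6 - 2 * π * √x / √6)) * partitionExp x := by
      have := partitionExp_pos x
      gcongr
      exact hratio.trans (hexp.trans (by gcongr))
    _ = 24 * exp 1 * partitionExp y := by
      rw [exp_add, exp_sub, ← partitionExp, ← partitionExp]
      field_simp [(partitionExp_pos x).ne']
  calc x ^ (-a) * partitionExp x = y ^ (-a) * ((y / x) ^ a * partitionExp x) := by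
        rw [div_rpow hy0.le hx0.le, rpow_neg hx0.le, rpow_neg hy0.le]
        field_simp
    _ ≤ y ^ (-a) * (24 * exp 1 * partitionExp y) := by gcongr
    _ = _ := by ring

lemma hasDerivAt_partitionExp {x : ℝ} (hx : 0 < x) :
    HasDerivAt partitionExp (π / √6 * x ^ (-(1 / 2) : ℝ) * partitionExp x) x := by
  have hsqrt := (((hasDerivAt_id x).sqrt hx.ne').const_mul (2 * π)).div_const √6
  refine hsqrt.exp.congr_deriv ?_
  rw [rpow_neg hx.le, ← sqrt_eq_rpow, partitionExp, id]
  field_simp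

lemma hasDerivAt_partitionDiffMain {x : ℝ} (hx : 0 < x) : HasDerivAt partitionDiffMain
    (π / (12 * √2) *
      ((π / √6 - 3 / 2 * x ^ (-(1 / 2) : ℝ)) * (x ^ (-2 : ℝ) * partitionExp x))) x := by
  have hderiv := (((hasDerivAt_rpow_const (p := -(3 : ℝ) / 2) (.inl hx.ne')).const_mul
    (π / (12 * √2))).mul (hasDerivAt_partitionExp hx))
  have hlow : x ^ (-(3 : ℝ) / 2 - 1) = x ^ (-(1 / 2) : ℝ) * x ^ (-2 : ℝ) := by
    rw [← rpow_add hx]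
    norm_num
  have hhigh : x ^ (-(3 : ℝ) / 2) * x ^ (-(1 / 2) : ℝ) = x ^ (-2 : ℝ) := by
    rw [← rpow_add hx]
    norm_num
  refine hderiv.congr_deriv ?_
  rw [hlow, ← hhigh]
  ring

lemma pi_div_twelve_sqrt_two_le_one : π / (12 * √2) ≤ 1 := by
  have : 1 ≤ √2 := one_le_sqrt.2 one_le_two
  rw [div_le_one (by positivity)]
  linarith [pi_lt_d2]

lemma abs_deriv_partitionDiffMain_coeff_le {x : ℝ} (hx : 1 ≤ x) :
    |π / (12 * √2) * (π / √6 - 3 / 2 * x ^ (-(1 / 2) : ℝ))| ≤ 2 := by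
  have hpow : x ^ (-(1 / 2) : ℝ) ≤ 1 := rpow_le_one_of_one_le_of_nonpos hx (by norm_num)
  have hpow0 : 0 ≤ x ^ (-(1 / 2) : ℝ) := by positivity
  have hpi : π / √6 ≤ 2 := by
    have : 2 ≤ √6 := le_sqrt_of_sq_le (by norm_num)
    rw [div_le_iff₀ (by positivity)]
    linarith [pi_lt_d2]
  have hpi0 : 0 ≤ π / √6 := by positivity
  rw [abs_mul, abs_of_nonneg (by positivity)]
  calc _ ≤ (1 : ℝ) * 2 := by
        gcongr
        · exact pi_div_twelve_sqrt_two_le_one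
        · exact abs_le.2 ⟨by linarith, by linarith⟩
    _ = 2 := one_mul 2

lemma abs_partitionDiffMain_sub_le {x y : ℝ} (hx : 1 ≤ x) (hxy : x ≤ y) :
    |partitionDiffMain y - partitionDiffMain x| ≤
      2 * (24 * exp 1 * (y ^ (-2 : ℝ) * partitionExp y)) * (y - x) := by
  have hbound : ∀ t ∈ Set.Icc x y, ‖π / (12 * √2) *
      ((π / √6 - 3 / 2 * t ^ (-(1 / 2) : ℝ)) * (t ^ (-2 : ℝ) * partitionExp t))‖ ≤
        2 * (24 * exp 1 * (y ^ (-2 : ℝ) * partitionExp y)) := fun t ht ↦ by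
    have ht1 : 1 ≤ t := hx.trans ht.1
    have hnonneg : 0 ≤ t ^ (-2 : ℝ) * partitionExp t :=
      mul_nonneg (by positivity) (partitionExp_pos t).le
    rw [← mul_assoc, norm_mul, norm_of_nonneg hnonneg]
    exact mul_le_mul (abs_deriv_partitionDiffMain_coeff_le ht1)
      (rpow_neg_mul_partitionExp_le le_rfl ht1 ht.2) hnonneg zero_le_two
  refine (Convex.norm_image_sub_le_of_norm_hasDerivWithin_le
    (fun t ht ↦ (hasDerivAt_partitionDiffMain (by linarith [ht.1])).hasDerivWithinAt) hbound
    (convex_Icc x y) (Set.left_mem_Icc.2 hxy) (Set.right_mem_Icc.2 hxy)).trans_eq ?_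
  rw [norm_of_nonneg (sub_nonneg.2 hxy)]

lemma exists_abs_partitionCount_succ_sub_le : ∃ C : ℝ, 0 < C ∧ ∀ n : ℕ,
    |(partitionCount (n + 1) : ℝ) - partitionCount n - partitionDiffMain (n + 1)| ≤
      C * partitionDiffError (n + 1) := by
  obtain ⟨C, hC, hbound⟩ := Asymptotics.bound_of_isBigO_nat_atTop isBigO_partitionCount_succ_sub
  refine ⟨C, hC, fun n ↦ ?_⟩
  have hpos : 0 < partitionDiffError (n + 1) :=
    mul_pos (by positivity) (partitionExp_pos _)
  simpa only [norm_eq_abs, abs_of_pos hpos] using hbound hpos.ne'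

/-- The first difference `p(m) - p(m - 1)` of the partition function on the integers. -/
noncomputable def partitionDiff (m : ℤ) : ℤ := pZ m - pZ (m - 1)

lemma partitionDiff_natCast_succ (n : ℕ) :
    partitionDiff (n + 1 : ℕ) = partitionCount (n + 1) - partitionCount n := by
  have hpos : (0 : ℤ) ≤ (n + 1 : ℕ) := Int.natCast_nonneg _
  rw [partitionDiff, show ((n + 1 : ℕ) : ℤ) - 1 = n by push_cast; ring, pZ, pZ, if_pos hpos,
    if_pos (Int.natCast_nonneg n)]
  rfl

lemma abs_partitionDiff_le_one_of_nonpos {m : ℤ} (hm : m ≤ 0) : |(partitionDiff m : ℝ)| ≤ 1 := by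
  rcases hm.lt_or_eq with hneg | rfl
  · rw [partitionDiff, pZ, pZ, if_neg (by omega), if_neg (by omega)]
    simp
  · simp [partitionDiff, pZ, partitionCount]

lemma one_le_partitionExp (x : ℝ) : 1 ≤ partitionExp x := one_le_exp (by positivity)

lemma partitionDiffMain_nonneg {x : ℝ} (hx : 0 ≤ x) : 0 ≤ partitionDiffMain x :=
  mul_nonneg (by positivity) (partitionExp_pos x).le

lemma partitionDiffMain_le {x : ℝ} (hx : 0 ≤ x) :
    partitionDiffMain x ≤ x ^ (-(3 : ℝ) / 2) * partitionExp x :=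
  mul_le_mul_of_nonneg_right
    (mul_le_of_le_one_left (by positivity) pi_div_twelve_sqrt_two_le_one) (partitionExp_pos x).le

lemma partitionDiffError_le {x : ℝ} (hx : 1 ≤ x) :
    partitionDiffError x ≤ x ^ (-(3 : ℝ) / 2) * partitionExp x :=
  mul_le_mul_of_nonneg_right (rpow_le_rpow_of_exponent_le hx (by norm_num)) (partitionExp_pos x).le

lemma exists_abs_partitionDiff_le : ∃ C : ℝ, 0 < C ∧ ∀ (n : ℕ) (m : ℤ), 0 < n → m ≤ n →
    |(partitionDiff m : ℝ)| ≤ C * ((n : ℝ) ^ (-(3 : ℝ) / 2) * partitionExp n) := by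
  obtain ⟨C, hC, hdiff⟩ := exists_abs_partitionCount_succ_sub_le
  refine ⟨(C + 1) * (24 * exp 1), by positivity, fun n m hn hmn ↦ ?_⟩
  have hmono : ∀ x : ℝ, 1 ≤ x → x ≤ n → x ^ (-(3 : ℝ) / 2) * partitionExp x ≤
      24 * exp 1 * ((n : ℝ) ^ (-(3 : ℝ) / 2) * partitionExp n) := fun x hx hxn ↦ by
    rw [neg_div]
    exact rpow_neg_mul_partitionExp_le (by norm_num) hx hxn
  rw [mul_assoc]
  rcases le_or_gt m 0 with hm | hm
  · have hone := hmono 1 le_rfl (by exact_mod_cast hn)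
    rw [one_rpow, one_mul] at hone
    replace hone := (one_le_partitionExp 1).trans hone
    exact (abs_partitionDiff_le_one_of_nonpos hm).trans (hone.trans
      (le_mul_of_one_le_left (zero_le_one.trans hone) (by linarith)))
  · obtain ⟨l, rfl⟩ : ∃ l : ℕ, m = (l + 1 : ℕ) := ⟨(m - 1).toNat, by omega⟩
    have hl1 : (1 : ℝ) ≤ l + 1 := by linarith [l.cast_nonneg (α := ℝ)]
    have hln : (l + 1 : ℝ) ≤ n := by exact_mod_cast hmn
    have hmain := partitionDiffMain_le (zero_le_one.trans hl1)
    have hmain0 := partitionDiffMain_nonneg (zero_le_one.trans hl1)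
    have herror := mul_le_mul_of_nonneg_left (partitionDiffError_le hl1) hC.le
    have happrox := abs_le.1 (hdiff l)
    rw [partitionDiff_natCast_succ]
    push_cast
    calc _ ≤ (C + 1) * ((l + 1 : ℝ) ^ (-(3 : ℝ) / 2) * partitionExp (l + 1)) :=
          abs_le.2 ⟨by linarith, by linarith⟩
      _ ≤ _ := mul_le_mul_of_nonneg_left (hmono _ hl1 hln) (by positivity)

lemma exists_abs_partitionDiff_sub_main_le_of_pos : ∃ C : ℝ, 0 < C ∧
    ∀ (n : ℕ) (m : ℤ), 0 < m → m ≤ n → |partitionDiff m - partitionDiffMain n| ≤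
      C * (partitionDiffError n + (n - m) * ((n : ℝ) ^ (-2 : ℝ) * partitionExp n)) := by
  obtain ⟨C, hC, hdiff⟩ := exists_abs_partitionCount_succ_sub_le
  refine ⟨24 * exp 1 * (C + 2), by positivity, fun n m hm hmn ↦ ?_⟩
  obtain ⟨l, rfl⟩ : ∃ l : ℕ, m = (l + 1 : ℕ) := ⟨(m - 1).toNat, by omega⟩
  have hl1 : (1 : ℝ) ≤ l + 1 := by linarith [l.cast_nonneg (α := ℝ)]
  have hln : (l + 1 : ℝ) ≤ n := by exact_mod_cast hmn
  have hE := partitionExp_pos n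
  have herror : partitionDiffError (l + 1) ≤ 24 * exp 1 * partitionDiffError n := by
    rw [partitionDiffError, partitionDiffError, neg_div]
    exact rpow_neg_mul_partitionExp_le (by norm_num) hl1 hln
  have hshift := abs_partitionDiffMain_sub_le hl1 hln
  rw [abs_sub_comm] at hshift
  have herror0 : 0 ≤ partitionDiffError n := mul_nonneg (by positivity) hE.le
  have hshift0 : 0 ≤ (n - (l + 1)) * ((n : ℝ) ^ (-2 : ℝ) * partitionExp n) :=
    mul_nonneg (by linarith) (by positivity)
  rw [partitionDiff_natCast_succ]
  push_cast
  calc _ ≤ C * (24 * exp 1 * partitionDiffError n) +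
        2 * (24 * exp 1 * (n ^ (-2 : ℝ) * partitionExp n)) * (n - (l + 1)) :=
        (abs_sub_le _ (partitionDiffMain (l + 1)) _).trans
          (add_le_add ((hdiff l).trans (mul_le_mul_of_nonneg_left herror hC.le)) hshift)
    _ = 24 * exp 1 * (C * partitionDiffError n +
        2 * ((n - (l + 1)) * (n ^ (-2 : ℝ) * partitionExp n))) := by ring
    _ ≤ 24 * exp 1 * ((C + 2) * partitionDiffError n +
        (C + 2) * ((n - (l + 1)) * (n ^ (-2 : ℝ) * partitionExp n))) :=
        mul_le_mul_of_nonneg_left (add_le_add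
          (mul_le_mul_of_nonneg_right (by linarith) herror0)
          (mul_le_mul_of_nonneg_right (by linarith) hshift0)) (by positivity)
    _ = _ := by ring

lemma rpow_quarter_mul_partitionDiffError {x : ℝ} (hx : 0 < x) :
    x ^ ((1 : ℝ) / 4) * partitionDiffError x = x ^ (-(3 : ℝ) / 2) * partitionExp x := by
  rw [partitionDiffError, ← mul_assoc, ← rpow_add hx]
  norm_num

lemma rpow_quarter_mul_rpow_neg_two_mul_partitionExp {x : ℝ} (hx : 0 < x) :
    x ^ ((1 : ℝ) / 4) * (x ^ (-2 : ℝ) * partitionExp x) = partitionDiffError x := by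
  rw [partitionDiffError, ← mul_assoc, ← rpow_add hx]
  norm_num

lemma exists_abs_partitionDiff_sub_main_le_rpow_mul : ∃ C : ℝ, 0 < C ∧ ∀ (n : ℕ) (m : ℤ),
    0 < n → m ≤ n → |partitionDiff m - partitionDiffMain n| ≤
      C * ((n : ℝ) ^ ((1 : ℝ) / 4) * partitionDiffError n) := by
  obtain ⟨C, hC, hdiff⟩ := exists_abs_partitionDiff_le
  refine ⟨C + 1, by positivity, fun n m hn hmn ↦ ?_⟩
  rw [rpow_quarter_mul_partitionDiffError (by exact_mod_cast hn), add_mul, one_mul]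
  refine (abs_sub _ _).trans (add_le_add (hdiff n m hn hmn) ?_)
  rw [abs_of_nonneg (partitionDiffMain_nonneg n.cast_nonneg)]
  exact partitionDiffMain_le n.cast_nonneg

lemma exists_abs_partitionDiff_sub_main_le : ∃ C : ℝ, 0 < C ∧ ∀ (n k : ℕ) (m : ℤ),
    0 < n → 0 < k → m ≤ n → n ≤ m + 2 * k ^ 2 →
      |partitionDiff m - partitionDiffMain n| ≤ C * k * partitionDiffError n := by
  obtain ⟨A, hA, hcrude⟩ := exists_abs_partitionDiff_sub_main_le_rpow_mul
  obtain ⟨B, hB, hfine⟩ := exists_abs_partitionDiff_sub_main_le_of_pos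
  refine ⟨2 * (A + B), by positivity, fun n k m hn hk hmn hnm ↦ ?_⟩
  have hn0 : (0 : ℝ) < n := by exact_mod_cast hn
  have hk1 : (1 : ℝ) ≤ k := by exact_mod_cast hk
  have hnm' : (n : ℝ) ≤ m + 2 * k ^ 2 := by exact_mod_cast hnm
  have hE := partitionExp_pos n
  have herror0 : 0 < partitionDiffError n := mul_pos (by positivity) hE
  set y := (n : ℝ) ^ ((1 : ℝ) / 4) with hy
  have hy1 : 1 ≤ y := one_le_rpow (by exact_mod_cast hn) (by norm_num)
  rcases le_or_gt y (2 * k) with hyk | hky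
  · calc _ ≤ A * (y * partitionDiffError n) := hcrude n m hn hmn
      _ ≤ (A + B) * (2 * k * partitionDiffError n) := by
          gcongr
          linarith
      _ = _ := by ring
  · have hm : 0 < m := by
      have hy4 : y ^ 4 = n := by
        rw [hy, ← rpow_natCast, ← rpow_mul hn0.le]
        norm_num
      have : (0 : ℝ) < m := by nlinarith [pow_le_pow_right₀ hy1 (show 2 ≤ 4 by norm_num)]
      exact_mod_cast this
    calc _ ≤ B * (partitionDiffError n + (n - m) * (n ^ (-2 : ℝ) * partitionExp n)) :=
          hfine n m hm hmn
      _ ≤ B * (partitionDiffError n + k * y * (n ^ (-2 : ℝ) * partitionExp n)) := by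
          gcongr
          nlinarith
      _ = B * ((1 + k) * partitionDiffError n) := by
          rw [mul_assoc (k : ℝ), rpow_quarter_mul_rpow_neg_two_mul_partitionExp hn0]
          ring
      _ ≤ (A + B) * ((k + k) * partitionDiffError n) := by
          gcongr
          linarith
      _ = _ := by ring

end DifferenceAsymptotics

section AndrewsMerca

lemma sum_range_two_mul_add_one (k : ℕ) : ∑ j ∈ range k, (2 * (j : ℝ) + 1) = k ^ 2 := by
  induction k with
  | zero => simp
  | succ k ih =>
    rw [sum_range_succ, ih]
    push_cast
    ring

lemma sum_range_neg_one_pow_mul_two_mul_add_one (k : ℕ) :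
    ∑ j ∈ range k, (-1 : ℝ) ^ j * (2 * (j : ℝ) + 1) = -(-1) ^ k * k := by
  induction k with
  | zero => simp
  | succ k ih =>
    rw [sum_range_succ, ih]
    push_cast
    ring

lemma sum_range_partitionDiff_sub (m : ℤ) (l : ℕ) :
    ∑ i ∈ range l, partitionDiff (m - i) = pZ m - pZ (m - l) := by
  induction l with
  | zero => simp
  | succ l ih =>
    rw [sum_range_succ, ih, partitionDiff, show m - (l + 1 : ℕ) = m - l - 1 by push_cast; ring]
    ring

lemma two_dvd_mul_three_mul_add_one (j : ℤ) : 2 ∣ j * (3 * j + 1) := by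
  rcases Int.even_or_odd' j with ⟨c, rfl | rfl⟩
  · exact ⟨c * (3 * (2 * c) + 1), by ring⟩
  · exact ⟨(2 * c + 1) * (3 * c + 2), by ring⟩

lemma sum_range_partitionDiff_pentagonal_sub (n : ℤ) (j : ℕ) :
    ∑ i ∈ range (2 * j + 1), partitionDiff (n - (j : ℤ) * (3 * j + 1) / 2 - i) =
      pZ (n - (j : ℤ) * (3 * j + 1) / 2) - pZ (n - (j : ℤ) * (3 * j + 5) / 2 - 1) := by
  have hpentagonal : (j : ℤ) * (3 * j + 5) / 2 = (j : ℤ) * (3 * j + 1) / 2 + 2 * j := by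
    rw [show (j : ℤ) * (3 * j + 5) = (j : ℤ) * (3 * j + 1) + 2 * j * 2 by ring,
      Int.add_mul_ediv_right _ _ two_ne_zero]
  rw [sum_range_partitionDiff_sub, hpentagonal]
  congr 2
  push_cast
  ring

lemma abs_pZ_pentagonal_sub_le {n k j : ℕ} {G H : ℝ} (hj : j < k)
    (hdiff : ∀ m : ℤ, m ≤ n → n ≤ m + 2 * k ^ 2 → |partitionDiff m - G| ≤ H) :
    |((pZ (n - (j : ℤ) * (3 * j + 1) / 2) - pZ (n - (j : ℤ) * (3 * j + 5) / 2 - 1) : ℤ) : ℝ) -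
      (2 * j + 1) * G| ≤ (2 * j + 1) * H := by
  obtain ⟨a, ha⟩ := two_dvd_mul_three_mul_add_one j
  have ha0 : 0 ≤ a := by nlinarith
  have hspan : a + 2 * j < 2 * (k : ℤ) ^ 2 := by
    have : (j : ℤ) + 1 ≤ k := by exact_mod_cast hj
    nlinarith
  rw [← sum_range_partitionDiff_pentagonal_sub, ha, Int.mul_ediv_cancel_left _ two_ne_zero,
    Int.cast_sum, show (2 * j + 1) * G = ∑ _i ∈ range (2 * j + 1), G by simp, ← sum_sub_distrib]
  calc _ ≤ ∑ _i ∈ range (2 * j + 1), H := (abs_sum_le_sum_abs _ _).trans <|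
        sum_le_sum fun i hi ↦ by
          have := mem_range.1 hi
          exact hdiff _ (by omega) (by omega)
    _ = _ := by simp

lemma abs_andrewsMercaM_sub_le {n k : ℕ} {G H : ℝ} (hk : 0 < k)
    (hdiff : ∀ m : ℤ, m ≤ n → n ≤ m + 2 * k ^ 2 → |partitionDiff m - G| ≤ H) :
    |andrewsMercaM k n - k * G| ≤ k ^ 2 * H := by
  obtain ⟨l, rfl⟩ := Nat.exists_eq_add_of_lt hk
  have hmain : ((0 + l + 1 : ℕ) : ℝ) * G = (-1) ^ (0 + l + 1 - 1) *
      ∑ j ∈ range (0 + l + 1), (-1 : ℝ) ^ j * ((2 * (j : ℝ) + 1) * G) := by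
    have hsign : (-1 : ℝ) ^ l * (-1) ^ l = 1 := by rw [← mul_pow]; norm_num
    simp_rw [← mul_assoc]
    rw [← sum_mul, sum_range_neg_one_pow_mul_two_mul_add_one, Nat.zero_add, Nat.add_sub_cancel,
      pow_succ]
    linear_combination -((l + 1 : ℕ) * G) * hsign
  rw [hmain, andrewsMercaM, Int.cast_mul, Int.cast_pow, Int.cast_neg, Int.cast_one, Int.cast_sum,
    ← mul_sub, ← sum_sub_distrib, abs_mul, abs_neg_one_pow, one_mul]
  calc _ ≤ ∑ j ∈ range (0 + l + 1), (2 * (j : ℝ) + 1) * H := by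
        refine (abs_sum_le_sum_abs _ _).trans (sum_le_sum fun j hj ↦ ?_)
        rw [Int.cast_mul, Int.cast_pow, Int.cast_neg, Int.cast_one, ← mul_sub, abs_mul,
          abs_neg_one_pow, one_mul]
        exact abs_pZ_pentagonal_sub_le (mem_range.1 hj) hdiff
    _ = _ := by rw [← sum_mul, sum_range_two_mul_add_one]

end AndrewsMerca

theorem andrewsMercaM_asymptotic_general :
    ∃ C : ℝ, 0 < C ∧ ∀ n : ℕ, 0 < n → ∀ k : ℕ, 0 < k →
      |(andrewsMercaM k n : ℝ) -
          π / (12 * √2) * k * (n : ℝ) ^ (-(3 : ℝ) / 2) * exp (2 * π * √n / √6)| ≤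
        C * k ^ 3 * (n : ℝ) ^ (-(7 : ℝ) / 4) * exp (2 * π * √n / √6) := by
  obtain ⟨C, hC, hdiff⟩ := exists_abs_partitionDiff_sub_main_le
  refine ⟨C, hC, fun n hn k hk ↦ ?_⟩
  have hM := abs_andrewsMercaM_sub_le hk fun m ↦ hdiff n k m hn hk
  have hmain : π / (12 * √2) * k * (n : ℝ) ^ (-(3 : ℝ) / 2) * exp (2 * π * √n / √6) =
      k * partitionDiffMain n := by
    rw [partitionDiffMain, partitionExp]
    ring
  rw [hmain]
  refine hM.trans_eq ?_
  rw [partitionDiffError, partitionExp]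
  ring

theorem andrewsMercaM_asymptotic (ε : ℝ) (hε : 0 < ε) :
    ∃ C : ℝ, 0 < C ∧ ∃ N : ℕ, ∀ n : ℕ, N ≤ n → ∀ k : ℕ, 0 < k →
      (k : ℝ) ≤ (n : ℝ) ^ ((1 : ℝ) / 8 - ε) →
      |(andrewsMercaM k n : ℝ) -
          π / (12 * Real.sqrt 2) * k * (n : ℝ) ^ (-(3 : ℝ) / 2) *
            Real.exp (2 * π * Real.sqrt n / Real.sqrt 6)| ≤
        C * k ^ 3 * (n : ℝ) ^ (-(7 : ℝ) / 4) * Real.exp (2 * π * Real.sqrt n / Real.sqrt 6) := by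
  obtain ⟨C, hC, hbound⟩ := andrewsMercaM_asymptotic_general
  exact ⟨C, hC, 1, fun n hn k hk _ ↦ hbound n hn k hk⟩
end

section
/- For every fixed positive integer k, there exists N such that M_k(n) > 0 for all n ≥ N. -/
open Finset

/-!
Let `P` be the partition generating function. Up to sign, `M_k` has generating function `P` times a
truncation of the pentagonal series `∏ (1 - X ^ i)`, and apart from its constant term it equals
`∑ₘ X ^ (k * (3 * k + 1) / 2 + k * m) * ∏_{k ≤ i ≤ k + m} (1 - X ^ i) * P`,
the truncation error in Euler's proof of the pentagonal number theorem. Multiplying `P` by the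
finite product forbids the parts `k, …, k + m`, so `M_k(n)` is a sum of numbers of partitions, and
its terms with `m ≤ 1` already contribute as soon as `k * (3 * k + 1) / 2 ≤ n`.
-/

open PowerSeries

section AvoidingSeries

variable (R : Type*)

/-- The generating function of the partitions having no part in the finite set `s`. -/
noncomputable def avoidingSeries [Semiring R] (s : Finset ℕ) : R⟦X⟧ :=
  PowerSeries.mk fun n ↦ (#(Nat.Partition.restricted n (· ∉ s)) : R)

lemma coeff_avoidingSeries [Semiring R] (s : Finset ℕ) (n : ℕ) :
    coeff n (avoidingSeries R s) = #(Nat.Partition.restricted n (· ∉ s)) :=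
  coeff_mk _ _

lemma coeff_avoidingSeries_empty [Semiring R] (n : ℕ) :
    coeff n (avoidingSeries R ∅) = partitionCount n := by
  simp [coeff_avoidingSeries, Nat.Partition.restricted, partitionCount]

lemma coeff_avoidingSeries_Ioc_zero_eq_zero [Semiring R] {n N : ℕ} (hn : 0 < n) (hN : n ≤ N) :
    coeff n (avoidingSeries R (Ioc 0 N)) = 0 := by
  have no_partition : Nat.Partition.restricted n (· ∉ Ioc 0 N) = ∅ := by
    refine filter_eq_empty_iff.mpr fun p _ hp ↦ ?_
    have parts_ne_zero : p.parts ≠ 0 := fun h ↦ hn.ne (by simpa [h] using p.parts_sum)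
    obtain ⟨i, hi⟩ := Multiset.exists_mem_of_ne_zero parts_ne_zero
    exact hp i hi (mem_Ioc.mpr ⟨p.parts_pos hi, (Nat.Partition.le_of_mem_parts hi).trans hN⟩)
  rw [coeff_avoidingSeries, no_partition, card_empty, Nat.cast_zero]

lemma coeff_avoidingSeries_nonneg [Semiring R] [PartialOrder R] [IsOrderedRing R]
    (s : Finset ℕ) (n : ℕ) : 0 ≤ coeff n (avoidingSeries R s) := by
  rw [coeff_avoidingSeries]
  exact Nat.cast_nonneg _

lemma coeff_avoidingSeries_pos [Semiring R] [PartialOrder R] [IsOrderedRing R] [Nontrivial R]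
    {s : Finset ℕ} {n : ℕ} (hn : n ∉ s) : 0 < coeff n (avoidingSeries R s) := by
  rw [coeff_avoidingSeries, Nat.cast_pos, card_pos]
  refine ⟨Nat.Partition.indiscrete n, mem_filter.mpr ⟨mem_univ _, fun i hi ↦ ?_⟩⟩
  rcases eq_or_ne n 0 with rfl | hn0
  · simp at hi
  · rw [Nat.Partition.indiscrete_parts hn0, Multiset.mem_singleton] at hi
    rwa [hi]

open PowerSeries.WithPiTopology in
lemma avoidingSeries_insert [CommRing R] {s : Finset ℕ} {a : ℕ} (ha : a ≠ 0) (has : a ∉ s) :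
    avoidingSeries R (insert a s) = (1 - X ^ a) * avoidingSeries R s := by
  let : TopologicalSpace R := ⊥
  have : DiscreteTopology R := ⟨rfl⟩
  obtain ⟨b, rfl⟩ := Nat.exists_eq_add_one_of_ne_zero ha
  let factor (s : Finset ℕ) (i : ℕ) : R⟦X⟧ := if i + 1 ∉ s then ∑' j, X ^ ((i + 1) * j) else 1
  have factor_insert : factor (insert (b + 1) s) = Function.update (factor s) b 1 := by
    ext1 i
    by_cases hi : i = b <;> simp [factor, hi]
  have avoidingSeries_eq (s) : avoidingSeries R s = ∏' i, factor s i :=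
    Nat.Partition.powerSeriesMk_card_restricted_eq_tprod R (· ∉ s)
  have multipliable_update : Multipliable (Function.update (factor s) b 1) :=
    factor_insert ▸
      Nat.Partition.multipliable_powerSeriesMk_card_restricted R (· ∉ insert (b + 1) s)
  have geometric : (1 - X ^ (b + 1)) * factor s b = 1 := by
    simp only [factor, if_pos has, pow_mul]
    exact one_sub_mul_tsum_pow_of_constantCoeff_eq_zero (by simp)
  rw [avoidingSeries_eq, avoidingSeries_eq, multipliable_update.tprod_eq_mul_tprod_ite',
    ← mul_assoc, geometric, one_mul, factor_insert]
  simp [Function.update_apply]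

lemma avoidingSeries_Ioc_add_one [CommRing R] {a b : ℕ} (hab : a ≤ b) :
    avoidingSeries R (Ioc a (b + 1)) = (1 - X ^ (b + 1)) * avoidingSeries R (Ioc a b) := by
  rw [← insert_Ioc_right_eq_Ioc_add_one hab, avoidingSeries_insert R (by lia) (by simp)]

end AvoidingSeries

section GapSeries

variable (R : Type*)

/-- The first `N` terms of `∑ₘ X ^ (k * m) * Gₘ`, where `Gₘ` is the generating function of the
partitions having no part between `k` and `k + m`. -/
noncomputable def gapSeries [Semiring R] (k N : ℕ) : R⟦X⟧ :=
  ∑ m ∈ range N, X ^ (k * m) * avoidingSeries R (Icc k (k + m))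

lemma gapSeries_add_one [Semiring R] (k N : ℕ) :
    gapSeries R k (N + 1) =
      gapSeries R k N + X ^ (k * N) * avoidingSeries R (Icc k (k + N)) :=
  sum_range_succ _ _

lemma X_sq_mul_gapSeries_one [CommRing R] (N : ℕ) :
    X ^ 2 * gapSeries R 1 N =
      (1 - X) * avoidingSeries R ∅ - avoidingSeries R (Ioc 0 (N + 1)) := by
  induction N with
  | zero => rw [avoidingSeries_Ioc_add_one R le_rfl]; simp [gapSeries]
  | succ N ih =>
    rw [gapSeries_add_one, mul_add, ih, avoidingSeries_Ioc_add_one R (N + 1).zero_le,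
      show Icc 1 (1 + N) = Ioc 0 (N + 1) by ext; simp only [mem_Icc, mem_Ioc]; lia]
    ring

lemma gapSeries_add_gapSeries_add_one [CommRing R] {k : ℕ} (hk : 0 < k) (N : ℕ) :
    gapSeries R k N + X ^ (3 * k + 2) * gapSeries R (k + 1) N =
      (1 - X ^ (2 * k + 1)) * avoidingSeries R ∅ -
        X ^ (k * N) * ((1 - X ^ (2 * k + N + 1)) * avoidingSeries R (Ioc k (k + N))) := by
  -- The `m`-th terms of the two sums add up to `Bₘ - Bₘ₊₁`, where `Bₘ` is the last term of the
  -- right-hand side for `N = m`.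
  induction N with
  | zero => simp [gapSeries]
  | succ N ih =>
    have gap_left : avoidingSeries R (Icc k (k + N)) =
        (1 - X ^ k) * avoidingSeries R (Ioc k (k + N)) := by
      rw [← Ioc_insert_left (by lia), avoidingSeries_insert R hk.ne' (by simp)]
    have gap_right : avoidingSeries R (Icc (k + 1) (k + 1 + N)) =
        (1 - X ^ (k + N + 1)) * avoidingSeries R (Ioc k (k + N)) := by
      rw [Icc_add_one_left_eq_Ioc, add_right_comm, avoidingSeries_Ioc_add_one R (by lia)]
    rw [gapSeries_add_one, gapSeries_add_one, gap_left, gap_right, ← add_assoc k N 1,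
      avoidingSeries_Ioc_add_one R (by lia)]
    linear_combination ih

lemma coeff_gapSeries_pos [Semiring R] [PartialOrder R] [IsStrictOrderedRing R] {k N : ℕ}
    (hk : 0 < k) (hN : 2 ≤ N) (n : ℕ) : 0 < coeff n (gapSeries R k N) := by
  simp only [gapSeries, map_sum, coeff_X_pow_mul']
  have term_nonneg (m : ℕ) : 0 ≤ if k * m ≤ n then
      coeff (n - k * m) (avoidingSeries R (Icc k (k + m))) else 0 := by
    split_ifs
    exacts [coeff_avoidingSeries_nonneg R _ _, le_rfl]
  refine sum_pos' (fun m _ ↦ term_nonneg m) ?_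
  rcases eq_or_ne n k with rfl | hnk
  · refine ⟨1, mem_range.mpr (by lia), ?_⟩
    rw [if_pos (by lia)]
    exact coeff_avoidingSeries_pos R (by rw [mem_Icc]; lia)
  · refine ⟨0, mem_range.mpr (by lia), ?_⟩
    rw [if_pos (by lia)]
    exact coeff_avoidingSeries_pos R (by rw [mem_Icc]; lia)

end GapSeries

lemma coeff_X_pow_mul_avoidingSeries_empty (n a : ℕ) :
    coeff n (X ^ a * avoidingSeries ℤ ∅) = pZ (n - a) := by
  rw [coeff_X_pow_mul', coeff_avoidingSeries_empty, pZ, Int.toNat_sub]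
  simp

lemma pentagonal_neg_add_one (k : ℕ) :
    pentagonal (-(k + 1 : ℕ)) = pentagonal (-k) + (3 * k + 2) := by
  grind [natCast_pentagonal]

lemma andrewsMercaM_add_one_add_andrewsMercaM (k n : ℕ) :
    andrewsMercaM (k + 1) n + andrewsMercaM k n =
      coeff n (X ^ pentagonal (-k) * ((1 - X ^ (2 * k + 1)) * avoidingSeries ℤ ∅)) := by
  have exponent_left : (k : ℤ) * (3 * k + 1) / 2 = pentagonal (-k) := by
    grind [natCast_pentagonal]
  have exponent_right : (k : ℤ) * (3 * k + 5) / 2 + 1 = (pentagonal (-k) + (2 * k + 1) : ℕ) := by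
    grind [natCast_pentagonal]
  have sign_mul_self : (-1 : ℤ) ^ k * (-1) ^ k = 1 := by simp [← mul_pow]
  rw [sub_mul, one_mul, mul_sub, map_sub, ← mul_assoc, ← pow_add,
    coeff_X_pow_mul_avoidingSeries_empty, coeff_X_pow_mul_avoidingSeries_empty, andrewsMercaM,
    andrewsMercaM, sum_range_succ, exponent_left, sub_sub _ _ 1, exponent_right,
    Nat.add_sub_cancel]
  cases k with
  | zero => simp
  | succ k =>
    rw [Nat.add_sub_cancel]
    linear_combination (pZ (n - pentagonal (-(k + 1 : ℕ))) -
      pZ (n - (pentagonal (-(k + 1 : ℕ)) + (2 * (k + 1) + 1) : ℕ))) * sign_mul_self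

theorem andrewsMercaM_eq_coeff_gapSeries {k n N : ℕ} (hk : 0 < k) (hn : 0 < n) (hN : n < N) :
    andrewsMercaM k n = coeff n (X ^ pentagonal (-k) * gapSeries ℤ k N) := by
  induction k, hk using Nat.le_induction with
  | base =>
    have M_one : andrewsMercaM 1 n = coeff n ((1 - X) * avoidingSeries ℤ ∅) := by
      simpa [andrewsMercaM, pentagonal_def] using andrewsMercaM_add_one_add_andrewsMercaM 0 n
    have pentagonal_neg_one : pentagonal (-(1 : ℕ)) = 2 := rfl
    rw [M_one, pentagonal_neg_one, X_sq_mul_gapSeries_one, map_sub,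
      coeff_avoidingSeries_Ioc_zero_eq_zero ℤ hn (by lia), sub_zero]
  | succ k hk ih =>
    set tail := (1 - X ^ (2 * k + N + 1)) * avoidingSeries ℤ (Ioc k (k + N))
    have coeff_tail : coeff n (X ^ pentagonal (-k) * (X ^ (k * N) * tail)) = 0 := by
      have : n < pentagonal (-k) + k * N := by nlinarith
      rw [← mul_assoc, ← pow_add, coeff_X_pow_mul', if_neg this.not_ge]
    calc andrewsMercaM (k + 1) n
      _ = coeff n (X ^ pentagonal (-k) * ((1 - X ^ (2 * k + 1)) * avoidingSeries ℤ ∅)) -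
            coeff n (X ^ pentagonal (-k) * gapSeries ℤ k N) := by
        rw [← ih, ← andrewsMercaM_add_one_add_andrewsMercaM, add_sub_cancel_right]
      _ = coeff n (X ^ pentagonal (-(k + 1 : ℕ)) * gapSeries ℤ (k + 1) N +
            X ^ pentagonal (-k) * (X ^ (k * N) * tail)) := by
        rw [← map_sub, pentagonal_neg_add_one]
        congr 1
        linear_combination -X ^ pentagonal (-k) * gapSeries_add_gapSeries_add_one ℤ hk N
      _ = coeff n (X ^ pentagonal (-(k + 1 : ℕ)) * gapSeries ℤ (k + 1) N) := by
        rw [map_add, coeff_tail, add_zero]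

theorem andrewsMercaM_pos {k n : ℕ} (hk : 0 < k) (hn : pentagonal (-k) ≤ n) :
    0 < andrewsMercaM k n := by
  have pentagonal_ne_zero : pentagonal (-k) ≠ pentagonal 0 :=
    pentagonal_injective.ne (neg_ne_zero.mpr (Nat.cast_ne_zero.mpr hk.ne'))
  have n_pos : 0 < n := (Nat.pos_of_ne_zero pentagonal_ne_zero).trans_le hn
  rw [andrewsMercaM_eq_coeff_gapSeries hk n_pos n.lt_add_one, coeff_X_pow_mul', if_pos hn]
  exact coeff_gapSeries_pos ℤ hk (Nat.succ_le_succ n_pos) _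

theorem andrewsMercaM_eventually_pos (k : ℕ) (hk : 0 < k) :
    ∃ N : ℤ, ∀ n : ℤ, N ≤ n → 0 < andrewsMercaM k n := by
  refine ⟨pentagonal (-k), fun n hn ↦ ?_⟩
  lift n to ℕ using (Int.natCast_nonneg _).trans hn
  exact andrewsMercaM_pos hk (Int.ofNat_le.mp hn)
end

section
/- Let ε > 0. There exist constants C > 0 and N such that for all integers n ≥ N and all positive integers k with k ≤ n^{1/12−ε}, one has | M̄_k(n) − (1/8) n^{−1} e^{π√n} | ≤ C k³ n^{−5/4} e^{π√n}. -/
open Finset Real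

/-- The number of partitions of `m` into distinct parts. -/
noncomputable def distinctPartitionCount (m : ℕ) : ℕ :=
  Nat.card {P : Nat.Partition m // P.parts.Nodup}

/-- The number of overpartitions of `m`. -/
noncomputable def overpartitionCount (m : ℕ) : ℕ :=
  ∑ j ∈ Finset.range (m + 1), distinctPartitionCount j * partitionCount (m - j)

/-- The overpartition function extended to integers, vanishing for negative arguments. -/
noncomputable def pbarZ (m : ℤ) : ℤ := if 0 ≤ m then (overpartitionCount m.toNat : ℤ) else 0

/-- The Andrews–Merca overpartition function `M̄_k(n)`. -/
noncomputable def Mbar (k : ℕ) (n : ℤ) : ℤ :=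
  (-1) ^ k * ∑ j ∈ Finset.Icc (-(k : ℤ)) (k : ℤ), (-1) ^ j.natAbs * pbarZ (n - j ^ 2)

/-!
On the circle `|q| = e ^ (-t)` with `t = π / (2 √n)`, Cauchy's formula expresses `p̄(n)` through the
generating function `P(q) = ∏ (1 + q ^ m) / (1 - q ^ m)`, a quotient of Dedekind eta functions. The
inversion of eta gives `P(e ^ (-s)) = (1/2) √(s / π) e ^ (π² / (4 s)) (1 + O(t))` for
`s = t (1 + i x)`, `|x| ≤ 1`, and `t` is the saddle point of `n s + π² / (4 s)`. Laplace's method on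
this major arc yields `e ^ (π √n) / (8 n)` with an error `O(n ^ (-5/4) e ^ (π √n))`. On the rest of
the circle the `m`th factor of `P(q)` is smaller than that of `P(|q|)` by
`exp (-(|q| ^ m - Re (q ^ m)) / 8)`, and the geometric series turns these savings into
`e ^ (-1 / (200 t))`.

By the mean value theorem, replacing `n` by `n - j²` changes the main term by
`O(j² n ^ (-5/4) e ^ (π √n))`. Since `∑ (-1) ^ j` over `|j| ≤ k` equals `(-1) ^ k`, a single main
term survives in `M̄_k(n)`, and the errors add up to `O(k³ n ^ (-5/4) e ^ (π √n))`.
-/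

namespace Overpartition

open Filter Topology MeasureTheory PowerSeries

/-! ### Absolutely convergent evaluation of power series -/

section Evaluation

variable {K : Type*} [NormedField K] [NormedAlgebra ℝ K]

/-- The real power series `f` converges absolutely at the point `q` of `K`, with sum `v`. The field
`K` is `ℝ` or `ℂ` in applications. -/
def HasAbsSumAt (f : ℝ⟦X⟧) (q v : K) : Prop :=
  Summable (fun n => ‖coeff n f • q ^ n‖) ∧ HasSum (fun n => coeff n f • q ^ n) v

theorem hasAbsSumAt_coe (p : Polynomial ℝ) (q : K) :
    HasAbsSumAt (p : ℝ⟦X⟧) q (Polynomial.aeval q p) := by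
  have h0 : ∀ n ∉ range (p.natDegree + 1), coeff n (p : ℝ⟦X⟧) • q ^ n = 0 := fun n hn => by
    rw [Polynomial.coeff_coe, Polynomial.coeff_eq_zero_of_natDegree_lt (by simpa using hn),
      zero_smul]
  refine ⟨summable_of_ne_finset_zero fun n hn => by rw [h0 n hn, norm_zero], ?_⟩
  simpa only [Polynomial.coeff_coe, Polynomial.aeval_eq_sum_range] using
    hasSum_sum_of_ne_finset_zero h0

theorem HasAbsSumAt.expand {f : ℝ⟦X⟧} {d : ℕ} (hd : d ≠ 0) {q v : K}
    (h : HasAbsSumAt f (q ^ d) v) : HasAbsSumAt (f.expand d hd) q v := by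
  have hinj : Function.Injective (d * ·) := mul_right_injective₀ hd
  have h0 : ∀ n ∉ Set.range (d * ·), coeff n (f.expand d hd) • q ^ n = 0 := fun n hn => by
    rw [coeff_expand_of_not_dvd d hd f fun ⟨m, hm⟩ => hn ⟨m, hm.symm⟩, zero_smul]
  have hcomp : (fun n => coeff n (f.expand d hd) • q ^ n) ∘ (d * ·) =
      fun n => coeff n f • (q ^ d) ^ n :=
    funext fun n => by simp only [Function.comp_apply, coeff_expand_mul, pow_mul]
  refine ⟨(hinj.summable_iff fun n hn => by rw [h0 n hn, norm_zero]).mp ?_,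
    (hinj.hasSum_iff h0).mp (hcomp ▸ h.2)⟩
  rw [← Function.comp_def norm, Function.comp_assoc, hcomp]
  exact h.1

theorem hasAbsSumAt_mk_one {q : K} (hq : ‖q‖ < 1) : HasAbsSumAt (PowerSeries.mk 1) q (1 - q)⁻¹ := by
  simp only [HasAbsSumAt, coeff_mk, Pi.one_apply, one_smul, norm_pow]
  exact ⟨summable_geometric_of_lt_one (norm_nonneg q) hq, hasSum_geometric_of_norm_lt_one hq⟩

variable [CompleteSpace K]

theorem HasAbsSumAt.mul {f g : ℝ⟦X⟧} {q v w : K} (hf : HasAbsSumAt f q v)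
    (hg : HasAbsSumAt g q w) : HasAbsSumAt (f * g) q (v * w) := by
  have hcoeff : (fun n => coeff n (f * g) • q ^ n) = fun n =>
      ∑ kl ∈ antidiagonal n, (coeff kl.1 f • q ^ kl.1) * (coeff kl.2 g • q ^ kl.2) := by
    funext n
    rw [coeff_mul, Finset.sum_smul]
    refine Finset.sum_congr rfl fun kl hkl => ?_
    rw [← mem_antidiagonal.mp hkl, pow_add, smul_mul_smul_comm]
  have hsum := summable_norm_sum_mul_antidiagonal_of_summable_norm hf.1 hg.1
  have htsum := tsum_mul_tsum_eq_tsum_sum_antidiagonal_of_summable_norm hf.1 hg.1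
  rw [hf.2.tsum_eq, hg.2.tsum_eq] at htsum
  unfold HasAbsSumAt
  simp only [funext_iff] at hcoeff
  simp only [hcoeff, htsum]
  exact ⟨hsum, hsum.of_norm.hasSum⟩

theorem HasAbsSumAt.prod {ι : Type*} {f : ι → ℝ⟦X⟧} {q : K} {v : ι → K} (s : Finset ι)
    (h : ∀ i ∈ s, HasAbsSumAt (f i) q (v i)) :
    HasAbsSumAt (∏ i ∈ s, f i) q (∏ i ∈ s, v i) := by
  classical
  induction s using Finset.induction_on with
  | empty => simpa using hasAbsSumAt_coe 1 q
  | insert i s hi ih =>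
    rw [prod_insert hi, prod_insert hi]
    exact (h i (mem_insert_self i s)).mul (ih fun j hj => h j (mem_insert_of_mem hj))

/-- Monotone convergence at the point `‖q‖` provides the domination for the convergence at `q`. -/
theorem hasAbsSumAt_of_tendsto {F : ℕ → ℝ⟦X⟧} {f : ℝ⟦X⟧}
    (hF : ∀ N n, 0 ≤ coeff n (F N)) (hmono : ∀ n, Monotone fun N => coeff n (F N))
    (hlim : ∀ n, Tendsto (fun N => coeff n (F N)) atTop (𝓝 (coeff n f))) {q v : K} {b : ℝ}
    {V : ℕ → K} {B : ℕ → ℝ} (hV : ∀ N, HasAbsSumAt (F N) q (V N)) (hVlim : Tendsto V atTop (𝓝 v))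
    (hB : ∀ N, HasAbsSumAt (F N) ‖q‖ (B N)) (hBlim : Tendsto B atTop (𝓝 b)) :
    HasAbsSumAt f q v := by
  have hFf : ∀ N n, coeff n (F N) ≤ coeff n f := fun N n => (hmono n).ge_of_tendsto (hlim n) N
  have hnorm : ∀ n, ‖coeff n f • q ^ n‖ = coeff n f * ‖q‖ ^ n := fun n => by
    rw [norm_smul, norm_pow, Real.norm_of_nonneg ((hF 0 n).trans (hFf 0 n))]
  have hsum : Summable fun n => ‖coeff n f • q ^ n‖ := by
    refine summable_of_sum_range_le (c := b) (fun n => norm_nonneg _) fun M => ?_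
    simp only [hnorm]
    refine le_of_tendsto_of_tendsto' (tendsto_finsetSum _ fun n _ => (hlim n).mul_const _) hBlim
      fun N => sum_le_hasSum _ (fun n _ => ?_) (hB N).2
    exact mul_nonneg (hF N n) (by positivity)
  have htsum : Tendsto (fun N => ∑' n, coeff n (F N) • q ^ n) atTop
      (𝓝 (∑' n, coeff n f • q ^ n)) := by
    refine tendsto_tsum_of_dominated_convergence hsum (fun n => (hlim n).smul_const _)
      (Eventually.of_forall fun N n => ?_)
    rw [norm_smul, norm_smul, Real.norm_of_nonneg (hF N n)]
    gcongr
    exact (hFf N n).trans (le_abs_self _)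
  refine ⟨hsum, ?_⟩
  rw [← tendsto_nhds_unique htsum (hVlim.congr fun N => (hV N).2.tsum_eq.symm)]
  exact hsum.of_norm.hasSum

end Evaluation

/-! ### The generating function of overpartitions -/

section GeneratingFunction

/-- The real power series with nonnegative coefficients. -/
def nonnegCoeff : Subsemiring ℝ⟦X⟧ where
  carrier := {f | ∀ n, 0 ≤ coeff n f}
  mul_mem' hf hg n := by
    rw [coeff_mul]
    exact Finset.sum_nonneg fun kl _ => mul_nonneg (hf _) (hg _)
  one_mem' n := by
    rw [coeff_one]
    split_ifs <;> norm_num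
  add_mem' hf hg n := by
    rw [map_add]
    exact add_nonneg (hf n) (hg n)
  zero_mem' n := by rw [map_zero]

theorem mk_one_mem_nonnegCoeff : (PowerSeries.mk 1 : ℝ⟦X⟧) ∈ nonnegCoeff := fun n => by
  rw [coeff_mk, Pi.one_apply]
  exact zero_le_one

theorem X_mem_nonnegCoeff : (X : ℝ⟦X⟧) ∈ nonnegCoeff := fun n => by
  rw [coeff_X]
  split_ifs <;> norm_num

theorem expand_mem_nonnegCoeff {f : ℝ⟦X⟧} (hf : f ∈ nonnegCoeff) {d : ℕ} (hd : d ≠ 0) :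
    f.expand d hd ∈ nonnegCoeff := fun n => by
  rw [coeff_expand]
  split_ifs
  exacts [hf _, le_rfl]

/-- The factor `(1 + X ^ (i + 1)) / (1 - X ^ (i + 1))` of the generating function of overpartitions,
which counts the overlined and non-overlined parts of size `i + 1`. -/
noncomputable def partFactor (i : ℕ) : ℝ⟦X⟧ :=
  PowerSeries.expand (i + 1) i.succ_ne_zero ((1 + X) * PowerSeries.mk 1)

theorem partFactor_mem_nonnegCoeff (i : ℕ) : partFactor i ∈ nonnegCoeff :=
  expand_mem_nonnegCoeff
    (mul_mem (add_mem (one_mem _) X_mem_nonnegCoeff) mk_one_mem_nonnegCoeff) _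

theorem partFactor_sub_one_mem_nonnegCoeff (i : ℕ) : partFactor i - 1 ∈ nonnegCoeff := by
  have h : (1 + X) * PowerSeries.mk 1 - 1 =
      (X * PowerSeries.mk 1 + X * PowerSeries.mk 1 : ℝ⟦X⟧) := by
    linear_combination mk_one_mul_one_sub_eq_one ℝ
  have hX := mul_mem X_mem_nonnegCoeff mk_one_mem_nonnegCoeff
  have hmem := expand_mem_nonnegCoeff (add_mem hX hX) i.succ_ne_zero
  rwa [← h, map_sub, map_one] at hmem

theorem monotone_coeff_prod_partFactor (n : ℕ) :
    Monotone fun N => coeff n (∏ i ∈ range N, partFactor i) := by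
  refine monotone_nat_of_le_succ fun N => ?_
  rw [← sub_nonneg, ← map_sub, prod_range_succ, ← mul_sub_one]
  exact mul_mem (prod_mem fun i _ => partFactor_mem_nonnegCoeff i)
    (partFactor_sub_one_mem_nonnegCoeff N) n

open scoped PowerSeries.WithPiTopology in
theorem tsum_X_pow_mul (i : ℕ) :
    ∑' j : ℕ, (X : ℝ⟦X⟧) ^ ((i + 1) * j) = (PowerSeries.mk 1).expand (i + 1) i.succ_ne_zero := by
  have h1 := WithPiTopology.tsum_pow_mul_one_sub_of_constantCoeff_eq_zero
    (f := (X ^ (i + 1) : ℝ⟦X⟧)) (by simp)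
  have h2 := congr(PowerSeries.expand (i + 1) i.succ_ne_zero $(mk_one_mul_one_sub_eq_one ℝ))
  simp only [map_mul, map_sub, map_one, expand_X] at h2
  simp_rw [pow_mul]
  exact mul_right_cancel₀ (right_ne_zero_of_mul_eq_one h2) (h1.trans h2.symm)

/-- The generating series of overpartitions. -/
noncomputable def overpartitionSeries : ℝ⟦X⟧ := PowerSeries.mk fun n => (overpartitionCount n : ℝ)

theorem overpartitionSeries_eq_mul : overpartitionSeries =
    (PowerSeries.mk fun n => (#(Nat.Partition.countRestricted n 2) : ℝ)) *
      PowerSeries.mk fun n => (#(Nat.Partition.restricted n fun _ => True) : ℝ) := by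
  ext n
  rw [coeff_mul, overpartitionSeries, coeff_mk, overpartitionCount,
    Finset.Nat.sum_antidiagonal_eq_sum_range_succ_mk]
  push_cast
  refine sum_congr rfl fun j _ => ?_
  rw [coeff_mk, coeff_mk, distinctPartitionCount, partitionCount, Nat.card_eq_fintype_card,
    Nat.card_eq_fintype_card, Fintype.card_subtype, Nat.Partition.countRestricted_two,
    Nat.Partition.distincts, Nat.Partition.restricted]
  simp

open scoped PowerSeries.WithPiTopology in
theorem tendsto_coeff_prod_partFactor (n : ℕ) :
    Tendsto (fun N => coeff n (∏ i ∈ range N, partFactor i)) atTop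
      (𝓝 (coeff n overpartitionSeries)) := by
  have hdistinct := Nat.Partition.hasProd_powerSeriesMk_card_countRestricted ℝ two_pos
  have hall := Nat.Partition.hasProd_powerSeriesMk_card_restricted ℝ fun _ => True
  have hprod := (hdistinct.mul hall).tendsto_prod_nat
  rw [← overpartitionSeries_eq_mul] at hprod
  have hfactor : ∀ i, (∑ j ∈ range 2, (X : ℝ⟦X⟧) ^ ((i + 1) * j)) *
      (if True then ∑' j : ℕ, X ^ ((i + 1) * j) else 1) = partFactor i := fun i => by
    rw [if_pos trivial, tsum_X_pow_mul, partFactor, map_mul, map_add, map_one, expand_X,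
      sum_range_succ, sum_range_one, mul_zero, pow_zero, mul_one]
  simp only [hfactor] at hprod
  exact ((WithPiTopology.continuous_coeff ℝ n).tendsto _).comp hprod

variable {K : Type*} [NormedField K]

/-- The Euler product `∏ (1 - q ^ n)` over `n ≥ 1`, for `‖q‖ < 1`. -/
noncomputable def eulerProduct (q : K) : K := ∏' n : ℕ, (1 - q ^ (n + 1))

/-- The sum of the generating series of overpartitions, in the closed form
`∏ (1 + q ^ n) / (1 - q ^ n) = ∏ (1 - q ^ (2 n)) / ∏ (1 - q ^ n) ^ 2`. -/
noncomputable def overpartitionGF (q : K) : K := eulerProduct (q ^ 2) / eulerProduct q ^ 2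

theorem norm_pow_succ_lt_one {q : K} (hq : ‖q‖ < 1) (n : ℕ) : ‖q ^ (n + 1)‖ < 1 := by
  rw [norm_pow]
  exact pow_lt_one₀ (norm_nonneg q) hq n.succ_ne_zero

theorem one_sub_pow_succ_ne_zero {q : K} (hq : ‖q‖ < 1) (n : ℕ) : 1 - q ^ (n + 1) ≠ 0 := fun h =>
  (norm_pow_succ_lt_one hq n).ne (by rw [← sub_eq_zero.mp h, norm_one])

theorem summable_norm_neg_pow_succ {q : K} (hq : ‖q‖ < 1) :
    Summable fun n : ℕ => ‖-q ^ (n + 1)‖ := by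
  simpa only [norm_neg, norm_pow] using
    (summable_nat_add_iff 1).mpr (summable_geometric_of_lt_one (norm_nonneg q) hq)

variable [CompleteSpace K]

theorem eulerProduct_ne_zero {q : K} (hq : ‖q‖ < 1) : eulerProduct q ≠ 0 := by
  simp only [eulerProduct, sub_eq_add_neg]
  refine tprod_one_add_ne_zero_of_summable (fun n => ?_) (summable_norm_neg_pow_succ hq)
  rw [← sub_eq_add_neg]
  exact one_sub_pow_succ_ne_zero hq n

theorem tendsto_eulerProduct {q : K} (hq : ‖q‖ < 1) :
    Tendsto (fun N => ∏ i ∈ range N, (1 - q ^ (i + 1))) atTop (𝓝 (eulerProduct q)) := by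
  simp only [eulerProduct, sub_eq_add_neg]
  exact (multipliable_one_add_of_summable (f := fun n : ℕ => -q ^ (n + 1))
    (summable_norm_neg_pow_succ hq)).hasProd.tendsto_prod_nat

theorem tendsto_overpartitionGF {q : K} (hq : ‖q‖ < 1) :
    Tendsto (fun N => ∏ i ∈ range N, (1 + q ^ (i + 1)) / (1 - q ^ (i + 1))) atTop
      (𝓝 (overpartitionGF q)) := by
  have hq2 : ‖q ^ 2‖ < 1 := norm_pow_succ_lt_one hq 1
  refine ((tendsto_eulerProduct hq2).div ((tendsto_eulerProduct hq).pow 2)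
    (pow_ne_zero 2 (eulerProduct_ne_zero hq))).congr fun N => ?_
  rw [Pi.div_apply, ← prod_pow, ← prod_div_distrib]
  refine prod_congr rfl fun i _ => ?_
  have hne := one_sub_pow_succ_ne_zero hq i
  field_simp
  ring

variable [NormedAlgebra ℝ K]

theorem hasAbsSumAt_partFactor {q : K} (hq : ‖q‖ < 1) (i : ℕ) :
    HasAbsSumAt (partFactor i) q ((1 + q ^ (i + 1)) / (1 - q ^ (i + 1))) := by
  have h1 := hasAbsSumAt_coe (1 + Polynomial.X) (q ^ (i + 1))
  have h2 := h1.mul (hasAbsSumAt_mk_one (norm_pow_succ_lt_one hq i))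
  rw [div_eq_mul_inv]
  simpa only [partFactor, Polynomial.coe_add, Polynomial.coe_one, Polynomial.coe_X, map_add,
    map_one, Polynomial.aeval_X] using h2.expand i.succ_ne_zero

theorem hasAbsSumAt_overpartitionSeries {q : K} (hq : ‖q‖ < 1) :
    HasAbsSumAt overpartitionSeries q (overpartitionGF q) := by
  have hq' : ‖‖q‖‖ < 1 := by rwa [norm_norm]
  exact hasAbsSumAt_of_tendsto (fun N => prod_mem fun i _ => partFactor_mem_nonnegCoeff i)
    monotone_coeff_prod_partFactor tendsto_coeff_prod_partFactor
    (fun N => .prod _ fun i _ => hasAbsSumAt_partFactor hq i) (tendsto_overpartitionGF hq)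
    (fun N => .prod _ fun i _ => hasAbsSumAt_partFactor hq' i) (tendsto_overpartitionGF hq')

theorem overpartitionGF_ofReal {r : ℝ} (hr : ‖r‖ < 1) :
    overpartitionGF (r : ℂ) = (overpartitionGF r : ℝ) := by
  have hr' : ‖(r : ℂ)‖ < 1 := by rwa [Complex.norm_real]
  refine (hasAbsSumAt_overpartitionSeries hr').2.unique ?_
  have h := Complex.hasSum_ofReal.mpr (hasAbsSumAt_overpartitionSeries hr).2
  simpa using h

end GeneratingFunction

/-! ### Coefficients as integrals over a circle -/

section CoefficientIntegral

open Complex (I)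

theorem integral_exp_int_mul_I (k : ℤ) :
    ∫ θ in (-π)..π, Complex.exp (k * I * θ) = if k = 0 then 2 * (π : ℂ) else 0 := by
  split_ifs with hk
  · simp only [hk, Int.cast_zero, zero_mul, Complex.exp_zero, intervalIntegral.integral_const,
      sub_neg_eq_add, ← two_mul, Complex.real_smul, Complex.ofReal_mul, Complex.ofReal_ofNat,
      mul_one]
  · have hkI : (k : ℂ) * I ≠ 0 := mul_ne_zero (by exact_mod_cast hk) Complex.I_ne_zero
    rw [integral_exp_mul_complex hkI, div_eq_zero_iff, sub_eq_zero,
      Complex.exp_eq_exp_iff_exists_int]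
    refine .inl ⟨k, ?_⟩
    push_cast
    ring

theorem norm_exp_neg_add_mul_I (t θ : ℝ) :
    ‖Complex.exp (-(t + θ * I))‖ = Real.exp (-t) := by
  simp [Complex.norm_exp]

theorem norm_exp_neg_add_mul_I_lt_one {t : ℝ} (ht : 0 < t) (θ : ℝ) :
    ‖Complex.exp (-(t + θ * I))‖ < 1 := by
  rw [norm_exp_neg_add_mul_I, Real.exp_lt_one_iff]
  exact neg_neg_of_pos ht

theorem HasAbsSumAt.integral_mul_exp {f : ℝ⟦X⟧} {t : ℝ} {v : ℝ → ℂ}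
    (h : ∀ θ : ℝ, HasAbsSumAt f (Complex.exp (-(t + θ * I))) (v θ)) (n : ℕ) :
    ∫ θ in (-π)..π, v θ * Complex.exp (n * (t + θ * I)) = 2 * π * (coeff n f : ℝ) := by
  set F : ℕ → ℝ → ℂ := fun m θ =>
    coeff m f • Complex.exp (-(t + θ * I)) ^ m * Complex.exp (n * (t + θ * I)) with hF
  have hnorm : ∀ m θ, ‖F m θ‖ = ‖coeff m f‖ * Real.exp (-t) ^ m * Real.exp (n * t) := fun m θ => by
    rw [hF, norm_mul, norm_smul, norm_pow, norm_exp_neg_add_mul_I, Complex.norm_exp]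
    simp
  have hsum : Summable fun m => ‖coeff m f‖ * Real.exp (-t) ^ m * Real.exp (n * t) := by
    refine Summable.mul_right _ ((h 0).1.congr fun m => ?_)
    rw [norm_smul, norm_pow, norm_exp_neg_add_mul_I]
  have hswap := intervalIntegral.hasSum_integral_of_dominated_convergence (μ := volume)
    (a := -π) (b := π) (F := F) (fun m _ => ‖coeff m f‖ * Real.exp (-t) ^ m * Real.exp (n * t))
    (fun m => (by fun_prop : Continuous (F m)).aestronglyMeasurable)
    (fun m => .of_forall fun θ _ => (hnorm m θ).le) (.of_forall fun θ _ => hsum) (by simp)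
    (.of_forall fun θ _ => (h θ).2.mul_right _)
  have hterm : ∀ m, ∫ θ in (-π)..π, F m θ = if m = n then 2 * π * ((coeff n f : ℝ) : ℂ) else 0 := by
    intro m
    have hfreq : ∀ θ : ℝ, F m θ = coeff m f * Complex.exp ((n - m) * t) *
        Complex.exp (((n - m : ℤ) : ℂ) * I * θ) := fun θ => by
      simp only [hF]
      rw [Complex.real_smul, mul_assoc, mul_assoc, ← Complex.exp_nat_mul, ← Complex.exp_add,
        ← Complex.exp_add]
      congr 2
      push_cast
      ring
    simp_rw [hfreq]
    rw [intervalIntegral.integral_const_mul, integral_exp_int_mul_I]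
    rcases eq_or_ne m n with rfl | hmn
    · simp [mul_comm]
    · rw [if_neg hmn, if_neg (by omega), mul_zero]
  simp_rw [hterm] at hswap
  exact hswap.unique (hasSum_ite_eq n _)

theorem integral_overpartitionGF_mul_exp {t : ℝ} (ht : 0 < t) (n : ℕ) :
    ∫ θ in (-π)..π, overpartitionGF (Complex.exp (-(t + θ * I))) * Complex.exp (n * (t + θ * I)) =
      2 * π * overpartitionCount n := by
  rw [HasAbsSumAt.integral_mul_exp fun θ =>
    hasAbsSumAt_overpartitionSeries (norm_exp_neg_add_mul_I_lt_one ht θ)]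
  simp [overpartitionSeries]

end CoefficientIntegral

/-! ### The minor arc -/

section MinorArc

open Complex (I)

theorem sq_norm_one_add (z : ℂ) : ‖1 + z‖ ^ 2 = 1 + ‖z‖ ^ 2 + 2 * z.re := by
  simp [← Complex.normSq_eq_norm_sq, Complex.normSq_add]

theorem sq_norm_one_sub (z : ℂ) : ‖1 - z‖ ^ 2 = 1 + ‖z‖ ^ 2 - 2 * z.re := by
  simp [← Complex.normSq_eq_norm_sq, Complex.normSq_sub]

theorem one_add_sq_add_div_one_add_sq_sub_le {r x : ℝ} (hr : r < 1) (hx : |x| ≤ r) :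
    (1 + r ^ 2 + 2 * x) / (1 + r ^ 2 - 2 * x) ≤
      ((1 + r) / (1 - r)) ^ 2 * (1 - (r - x) / 4) := by
  obtain ⟨hx1, hx2⟩ := abs_le.mp hx
  have hden : 0 < 1 + r ^ 2 - 2 * x := by nlinarith
  have hprod : (1 + r) ^ 2 * (1 + r ^ 2 - 2 * x) ≤ 16 * (1 + r ^ 2) := by
    have h1 : (1 + r) ^ 2 ≤ 4 := by nlinarith
    have h2 : 1 + r ^ 2 - 2 * x ≤ 4 := by nlinarith
    nlinarith [mul_le_mul h1 h2 hden.le zero_le_four]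
  rw [div_pow, div_mul_eq_mul_div, div_le_div_iff₀ hden (pow_pos (sub_pos.mpr hr) 2)]
  linarith [mul_le_mul_of_nonneg_left hprod (sub_nonneg.mpr hx2)]

theorem norm_one_add_div_one_sub_le {z : ℂ} (hz : ‖z‖ < 1) :
    ‖(1 + z) / (1 - z)‖ ≤ (1 + ‖z‖) / (1 - ‖z‖) * Real.exp (-(‖z‖ - z.re) / 8) := by
  have hexp : 1 - (‖z‖ - z.re) / 4 ≤ Real.exp (-(‖z‖ - z.re) / 8) ^ 2 := by
    rw [← Real.exp_nat_mul]
    refine le_trans (le_of_eq ?_) (Real.add_one_le_exp _)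
    push_cast
    ring
  have hfactor : 0 ≤ (1 + ‖z‖) / (1 - ‖z‖) := div_nonneg (by positivity) (sub_nonneg.mpr hz.le)
  refine le_of_sq_le_sq ?_ (mul_nonneg hfactor (Real.exp_nonneg _))
  rw [norm_div, div_pow, sq_norm_one_add, sq_norm_one_sub, mul_pow]
  refine (one_add_sq_add_div_one_add_sq_sub_le hz (Complex.abs_re_le_norm z)).trans ?_
  gcongr

theorem overpartitionGF_nonneg {r : ℝ} (h0 : 0 ≤ r) (h1 : r < 1) : 0 ≤ overpartitionGF r := by
  have hr : ‖r‖ < 1 := by rwa [Real.norm_of_nonneg h0]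
  refine (hasAbsSumAt_overpartitionSeries hr).2.nonneg fun n => ?_
  rw [overpartitionSeries, coeff_mk, smul_eq_mul]
  positivity

theorem norm_overpartitionGF_le {q : ℂ} (hq : ‖q‖ < 1) :
    ‖overpartitionGF q‖ ≤
      overpartitionGF ‖q‖ * Real.exp (-((1 - ‖q‖)⁻¹ - (1 - q)⁻¹.re) / 8) := by
  have hq' : ‖‖q‖‖ < 1 := by rwa [norm_norm]
  have hsum : HasSum (fun i : ℕ => ‖q‖ ^ (i + 1) - (q ^ (i + 1)).re)
      ((1 - ‖q‖)⁻¹ - (1 - q)⁻¹.re) := by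
    have h := (hasSum_geometric_of_lt_one (norm_nonneg q) hq).sub
      (Complex.hasSum_re (hasSum_geometric_of_norm_lt_one hq))
    rw [← hasSum_nat_add_iff' 1] at h
    simpa using h
  have hexp : Tendsto (fun N => Real.exp (-(∑ i ∈ range N, (‖q‖ ^ (i + 1) - (q ^ (i + 1)).re)) / 8))
      atTop (𝓝 (Real.exp (-((1 - ‖q‖)⁻¹ - (1 - q)⁻¹.re) / 8))) :=
    (Real.continuous_exp.tendsto _).comp (hsum.tendsto_sum_nat.neg.div_const 8)
  refine le_of_tendsto_of_tendsto' (tendsto_overpartitionGF hq).norm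
    ((tendsto_overpartitionGF hq').mul hexp) fun N => ?_
  rw [neg_div, Finset.sum_div, ← Finset.sum_neg_distrib, Real.exp_sum, ← prod_mul_distrib,
    norm_prod]
  refine prod_le_prod (fun _ _ => norm_nonneg _) fun i _ => ?_
  rw [← norm_pow, ← neg_div]
  exact norm_one_add_div_one_sub_le (norm_pow_succ_lt_one hq i)

theorem one_third_le_exp_neg {t : ℝ} (ht : t ≤ 1) : 1 / 3 ≤ Real.exp (-t) := by
  have h : Real.exp 1 ≤ 3 := by linarith [Real.exp_one_lt_d9]
  calc 1 / 3 ≤ 1 / Real.exp 1 := one_div_le_one_div_of_le (Real.exp_pos 1) h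
    _ = Real.exp (-1) := by rw [Real.exp_neg, one_div]
    _ ≤ Real.exp (-t) := Real.exp_le_exp.mpr (neg_le_neg ht)

theorem mul_one_sub_exp_neg_le_norm {t θ : ℝ} (ht : 0 < t) (ht1 : t ≤ 1) (htθ : t ≤ |θ|)
    (hθ : |θ| ≤ π) :
    21 / 20 * (1 - Real.exp (-t)) ≤ ‖1 - Complex.exp (-(t + θ * I))‖ := by
  have hre : (Complex.exp (-(t + θ * I))).re = Real.exp (-t) * Real.cos θ := by
    simp [Complex.exp_re]
  have hcos : 1 / 5 * t ^ 2 ≤ 1 - Real.cos θ := by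
    have hpi : (1 : ℝ) / 5 ≤ 2 / π ^ 2 := by
      rw [div_le_div_iff₀ (by norm_num) (by positivity)]
      nlinarith [Real.pi_lt_d2, Real.pi_pos]
    calc 1 / 5 * t ^ 2 ≤ 2 / π ^ 2 * |θ| ^ 2 := by gcongr
      _ ≤ 1 - Real.cos θ := by
        rw [sq_abs]
        linarith [Real.cos_le_one_sub_mul_cos_sq hθ]
  have hδ : (1 - Real.exp (-t)) ^ 2 ≤ t ^ 2 :=
    pow_le_pow_left₀ (by simpa using ht.le) (by linarith [Real.add_one_le_exp (-t)]) 2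
  refine le_of_sq_le_sq ?_ (norm_nonneg _)
  rw [sq_norm_one_sub, norm_exp_neg_add_mul_I, hre]
  nlinarith [mul_le_mul (one_third_le_exp_neg ht1) hcos (by positivity) (Real.exp_pos (-t)).le]

theorem norm_overpartitionGF_exp_le {t θ : ℝ} (ht : 0 < t) (ht1 : t ≤ 1) (htθ : t ≤ |θ|)
    (hθ : |θ| ≤ π) :
    ‖overpartitionGF (Complex.exp (-(t + θ * I)))‖ ≤
      overpartitionGF (Real.exp (-t)) * Real.exp (-(1 / 200) / t) := by
  have hδ : 0 < 1 - Real.exp (-t) := by simpa using ht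
  have hδt : 1 - Real.exp (-t) ≤ t := by linarith [Real.add_one_le_exp (-t)]
  have hre : (1 - Complex.exp (-(t + θ * I)))⁻¹.re ≤ 20 / 21 * (1 - Real.exp (-t))⁻¹ := by
    refine (Complex.re_le_norm _).trans ?_
    rw [norm_inv]
    calc ‖1 - Complex.exp (-(t + θ * I))‖⁻¹ ≤ (21 / 20 * (1 - Real.exp (-t)))⁻¹ :=
          inv_anti₀ (by positivity) (mul_one_sub_exp_neg_le_norm ht ht1 htθ hθ)
      _ = 20 / 21 * (1 - Real.exp (-t))⁻¹ := by rw [mul_inv]; norm_num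
  have h := norm_overpartitionGF_le (norm_exp_neg_add_mul_I_lt_one ht θ)
  rw [norm_exp_neg_add_mul_I] at h
  refine h.trans (mul_le_mul_of_nonneg_left (Real.exp_le_exp.mpr ?_)
    (overpartitionGF_nonneg (Real.exp_pos (-t)).le (sub_pos.mp hδ)))
  have ht' : 0 < t⁻¹ := inv_pos.mpr ht
  rw [div_eq_mul_inv _ t]
  linarith [inv_anti₀ hδ hδt]

end MinorArc

/-! ### The modular transformation -/

section ModularTransformation

open Complex (I)

theorem sqrt_mul_of_arg_add_arg {u v : ℂ} (hu : u ≠ 0) (hv : v ≠ 0)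
    (harg : u.arg + v.arg ∈ Set.Ioc (-π) π) :
    Complex.sqrt (u * v) = Complex.sqrt u * Complex.sqrt v := by
  rw [Complex.sqrt, Complex.sqrt, Complex.sqrt, Complex.cpow_def_of_ne_zero hu,
    Complex.cpow_def_of_ne_zero hv, Complex.cpow_def_of_ne_zero (mul_ne_zero hu hv),
    Complex.log_mul hu hv harg, add_mul, Complex.exp_add]

theorem sqrt_I_mul {u : ℂ} (hu : 0 < u.re) :
    Complex.sqrt (I * u) = Complex.sqrt I * Complex.sqrt u := by
  have hu0 : u ≠ 0 := Complex.ne_zero_of_re_pos hu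
  have harg := abs_lt.mp (Complex.abs_arg_lt_pi_div_two_iff.mpr (Or.inl hu))
  refine sqrt_mul_of_arg_add_arg Complex.I_ne_zero hu0 ?_
  rw [Complex.arg_I]
  constructor <;> linarith [harg.1, harg.2, Real.pi_pos]

theorem sqrt_ofReal_mul {t : ℝ} (ht : 0 < t) {v : ℂ} (hv : v ≠ 0) :
    Complex.sqrt (t * v) = √t * Complex.sqrt v := by
  rw [sqrt_mul_of_arg_add_arg (Complex.ofReal_ne_zero.mpr ht.ne') hv, Complex.sqrt_of_nonneg]
  · simp
  · exact_mod_cast ht.le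
  · rw [Complex.arg_ofReal_of_nonneg ht.le, zero_add]
    exact Complex.arg_mem_Ioc v

theorem sq_sqrt (u : ℂ) : Complex.sqrt u ^ 2 = u :=
  Complex.cpow_nat_inv_pow u two_ne_zero

theorem sqrt_ne_zero {u : ℂ} (hu : u ≠ 0) : Complex.sqrt u ≠ 0 := fun h =>
  hu (by rw [← sq_sqrt u, h, zero_pow two_ne_zero])

theorem eta_eq_exp_mul_eulerProduct {z u : ℂ} (h : 2 * π * I * z = u) :
    ModularForm.eta z = Complex.exp (u / 24) * eulerProduct (Complex.exp u) := by
  subst h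
  simp [ModularForm.eta, Function.Periodic.qParam, eulerProduct, ModularForm.eta_q_eq_pow]

/-- The inversion formula for the Dedekind eta function at `2 π i τ = -s`. -/
theorem eulerProduct_exp_neg_inversion {s : ℂ} (hs : 0 < s.re) :
    Complex.sqrt (s / (2 * π)) * (Complex.exp (-s / 24) * eulerProduct (Complex.exp (-s))) =
      Complex.exp (-(4 * π ^ 2 / s) / 24) * eulerProduct (Complex.exp (-(4 * π ^ 2 / s))) := by
  have hs0 : s ≠ 0 := Complex.ne_zero_of_re_pos hs
  have hpi : (π : ℂ) ≠ 0 := Complex.ofReal_ne_zero.mpr Real.pi_ne_zero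
  have hre : 0 < (s / (2 * π)).re := by
    have h2pi : (2 * π : ℂ) = (2 * π : ℝ) := by push_cast; rfl
    rw [h2pi, Complex.div_ofReal_re]
    positivity
  have hmem : I * (s / (2 * π)) ∈ UpperHalfPlane.upperHalfPlaneSet := by
    change 0 < (I * (s / (2 * π))).im
    rwa [Complex.I_mul_im]
  have heta := ModularForm.eta_comp_eq_csqrt_I_inv hmem
  simp only [Function.comp_apply, Pi.smul_apply, Pi.mul_apply, smul_eq_mul] at heta
  rw [sqrt_I_mul hre, mul_assoc, inv_mul_cancel_left₀ (sqrt_ne_zero Complex.I_ne_zero),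
    eta_eq_exp_mul_eulerProduct (u := -(4 * π ^ 2 / s)) (by field_simp; ring),
    eta_eq_exp_mul_eulerProduct (u := -s) (by field_simp; exact Complex.I_sq)] at heta
  exact heta.symm

/-- The factor of the modular transformation of `overpartitionGF` that tends to `1` at the cusp. -/
noncomputable def dualEulerQuotient (w : ℂ) : ℂ := eulerProduct w / eulerProduct (w ^ 2) ^ 2

theorem eulerProduct_exp_neg_ne_zero {s : ℂ} (hs : 0 < s.re) :
    eulerProduct (Complex.exp (-s)) ≠ 0 :=
  eulerProduct_ne_zero <| by
    rwa [Complex.norm_exp, Real.exp_lt_one_iff, Complex.neg_re, neg_lt_zero]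

theorem overpartitionGF_exp_neg {s : ℂ} (hs : 0 < s.re) :
    overpartitionGF (Complex.exp (-s)) = 1 / 2 * Complex.sqrt (s / π) *
      Complex.exp (π ^ 2 / (4 * s)) * dualEulerQuotient (Complex.exp (-(2 * π ^ 2 / s))) := by
  have hs0 : s ≠ 0 := Complex.ne_zero_of_re_pos hs
  have hpi : (π : ℂ) ≠ 0 := Complex.ofReal_ne_zero.mpr Real.pi_ne_zero
  have hdual : 0 < (4 * π ^ 2 / s : ℂ).re := by
    have hcast : (4 * π ^ 2 / s : ℂ) = (4 * π ^ 2 : ℝ) * s⁻¹ := by push_cast; rfl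
    rw [hcast, Complex.re_ofReal_mul, Complex.inv_re]
    exact mul_pos (by positivity) (div_pos hs (Complex.normSq_pos.mpr hs0))
  have hq : ∀ u : ℂ, Complex.exp (-u) ^ 2 = Complex.exp (-(2 * u)) := fun u => by
    rw [← Complex.exp_nat_mul, Nat.cast_ofNat, mul_neg]
  have hsq := congr($(eulerProduct_exp_neg_inversion hs) ^ 2)
  have hdouble := eulerProduct_exp_neg_inversion (s := 2 * s) (by simpa using hs)
  have hexp : Complex.exp (-(2 * π ^ 2 / s) / 24) =
      Complex.exp (π ^ 2 / (4 * s)) * Complex.exp (2 * (-(4 * π ^ 2 / s) / 24)) := by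
    rw [← Complex.exp_add]
    congr 1
    field_simp
    ring
  simp only [mul_pow, sq_sqrt, ← Complex.exp_nat_mul, Nat.cast_ofNat] at hsq
  rw [mul_div_mul_left _ _ two_ne_zero, show 4 * (π : ℂ) ^ 2 / (2 * s) = 2 * π ^ 2 / s by ring,
    hexp, show -(2 * s) / 24 = 2 * (-s / 24) by ring] at hdouble
  have hsqrt := sq_sqrt (s / π)
  rw [overpartitionGF, dualEulerQuotient, hq, hq,
    show 2 * (2 * (π : ℂ) ^ 2 / s) = 4 * π ^ 2 / s by ring, mul_div_assoc',
    div_eq_div_iff (pow_ne_zero 2 (eulerProduct_exp_neg_ne_zero hs))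
      (pow_ne_zero 2 (eulerProduct_exp_neg_ne_zero hdual))]
  refine mul_left_cancel₀ (mul_ne_zero (mul_ne_zero (Complex.exp_ne_zero (2 * (-s / 24)))
    (Complex.exp_ne_zero (2 * (-(4 * π ^ 2 / s) / 24)))) (sqrt_ne_zero (div_ne_zero hs0 hpi))) ?_
  rw [show s / (2 * π) = s / π / 2 by ring, ← hsqrt] at hsq
  generalize Complex.sqrt (s / π) = d, Complex.exp (2 * (-s / 24)) = a,
    Complex.exp (2 * (-(4 * π ^ 2 / s) / 24)) = b at *
  linear_combination b * eulerProduct (Complex.exp (-(4 * π ^ 2 / s))) ^ 2 * hdouble -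
    b * Complex.exp (π ^ 2 / (4 * s)) * eulerProduct (Complex.exp (-(2 * π ^ 2 / s))) * hsq

theorem eulerProduct_zero : eulerProduct (0 : ℂ) = 1 := by simp [eulerProduct]

theorem differentiableAt_eulerProduct {q : ℂ} (hq : ‖q‖ < 1) :
    DifferentiableAt ℂ eulerProduct q :=
  ModularForm.differentiableOn_tprod_one_sub_pow.differentiableAt
    (Metric.isOpen_ball.mem_nhds (by simpa using hq))

theorem dualEulerQuotient_sub_one_isBigO :
    (fun w => dualEulerQuotient w - 1) =O[𝓝 0] fun w => w := by
  have hdiff : DifferentiableAt ℂ dualEulerQuotient 0 := by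
    have h1 : DifferentiableAt ℂ eulerProduct (0 : ℂ) := differentiableAt_eulerProduct (by simp)
    have h2 : DifferentiableAt ℂ (fun w : ℂ => eulerProduct (w ^ 2)) 0 :=
      .comp (g := eulerProduct) (f := fun w : ℂ => w ^ 2) 0 (by simpa using h1) (by fun_prop)
    exact h1.div (h2.pow 2) (by simp [eulerProduct_zero])
  simpa [dualEulerQuotient, eulerProduct_zero] using hdiff.isBigO_sub

theorem one_add_mul_I_ne_zero (x : ℝ) : 1 + x * I ≠ 0 :=
  Complex.ne_zero_of_re_pos (by simp)

theorem re_ofReal_div_one_add_mul_I (a x : ℝ) : (a / (1 + x * I)).re = a / (1 + x ^ 2) := by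
  have hnormSq : Complex.normSq (1 + x * I) = 1 + x ^ 2 := by
    simpa using Complex.normSq_add_mul_I 1 x
  rw [div_eq_mul_inv, Complex.re_ofReal_mul, Complex.inv_re, hnormSq]
  simp [div_eq_mul_inv]

theorem norm_sqrt_one_add_mul_I_sub_one_le (x : ℝ) : ‖Complex.sqrt (1 + x * I) - 1‖ ≤ |x| := by
  set p := Complex.sqrt (1 + x * I) with hp
  have hre : 0 ≤ p.re := by
    rw [hp, Complex.sqrt, Complex.cpow_inv_two_re]
    positivity
  have hmul : ‖p - 1‖ * ‖p + 1‖ = |x| := by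
    have hsq : p ^ 2 = 1 + x * I := sq_sqrt _
    rw [← norm_mul, show (p - 1) * (p + 1) = x * I by linear_combination hsq]
    simp
  have hone : 1 ≤ ‖p + 1‖ := by
    have h := Complex.re_le_norm (p + 1)
    rw [Complex.add_re, Complex.one_re] at h
    linarith
  exact hmul ▸ le_mul_of_one_le_right (norm_nonneg _) hone

theorem norm_exp_neg_div_one_add_mul_I_le {t x : ℝ} (ht : 0 < t) (hx : |x| ≤ 1) :
    ‖Complex.exp (-(2 * π ^ 2 / (t * (1 + x * I))))‖ ≤ t := by
  have hcast : (2 * π ^ 2 / (t * (1 + x * I)) : ℂ) = (2 * π ^ 2 / t : ℝ) / (1 + x * I) := by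
    push_cast
    rw [div_div]
  have hexponent : 1 / t ≤ 2 * π ^ 2 / t / (1 + x ^ 2) := by
    have hx2 : x ^ 2 ≤ 1 := (sq_le_one_iff_abs_le_one x).mpr hx
    rw [div_right_comm]
    gcongr
    rw [le_div_iff₀ (by positivity)]
    nlinarith [Real.pi_gt_three]
  rw [Complex.norm_exp, Complex.neg_re, hcast, re_ofReal_div_one_add_mul_I]
  calc Real.exp (-(2 * π ^ 2 / t / (1 + x ^ 2))) ≤ Real.exp (-(1 / t)) := by gcongr
    _ ≤ t := by
      rw [Real.exp_neg, inv_le_comm₀ (Real.exp_pos _) ht, ← one_div]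
      linarith [Real.add_one_le_exp (1 / t)]

/-- The correction factor in `overpartitionGF_exp_neg` at the point `s = t (1 + i x)`, where `x` is
the rescaled coordinate on the major arc. -/
noncomputable def cuspCorrection (t x : ℝ) : ℂ :=
  dualEulerQuotient (Complex.exp (-(2 * π ^ 2 / (t * (1 + x * I)))))

theorem exists_norm_cuspCorrection_sub_one_le : ∃ t₀ C : ℝ, 0 < t₀ ∧
    ∀ t x : ℝ, 0 < t → t ≤ t₀ → |x| ≤ 1 → ‖cuspCorrection t x - 1‖ ≤ C * t := by
  obtain ⟨C, hC, hO⟩ := dualEulerQuotient_sub_one_isBigO.exists_pos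
  obtain ⟨δ, hδ, hball⟩ := Metric.eventually_nhds_iff.mp hO.bound
  refine ⟨δ / 2, C, half_pos hδ, fun t x ht htδ hx => ?_⟩
  have hw := norm_exp_neg_div_one_add_mul_I_le ht hx
  calc ‖cuspCorrection t x - 1‖ ≤ C * ‖Complex.exp (-(2 * π ^ 2 / (t * (1 + x * I))))‖ :=
        hball (by rw [dist_zero_right]; linarith)
    _ ≤ C * t := by gcongr

theorem overpartitionGF_exp_neg_mul_one_add_mul_I {t : ℝ} (ht : 0 < t) (x : ℝ) :
    overpartitionGF (Complex.exp (-(t + (t * x : ℝ) * I))) =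
      1 / 2 * √(t / π) * Complex.sqrt (1 + x * I) *
        Complex.exp ((π ^ 2 / (4 * t) : ℝ) / (1 + x * I)) * cuspCorrection t x := by
  have hs : (t + (t * x : ℝ) * I : ℂ) = t * (1 + x * I) := by
    push_cast
    ring
  have hsqrt : (t * (1 + x * I) / π : ℂ) = (t / π : ℝ) * (1 + x * I) := by
    push_cast
    ring
  have hexp : (π ^ 2 / (4 * (t * (1 + x * I))) : ℂ) = (π ^ 2 / (4 * t) : ℝ) / (1 + x * I) := by
    push_cast
    rw [div_div, mul_assoc]
  rw [hs, overpartitionGF_exp_neg (by simpa using ht), hsqrt,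
    sqrt_ofReal_mul (by positivity) (one_add_mul_I_ne_zero x), hexp, cuspCorrection,
    mul_assoc _ (√_ : ℂ)]

end ModularTransformation

/-! ### The Laplace method on the major arc -/

section Laplace

open Complex (I)

theorem norm_exp_sub_exp_le {u v : ℂ} {r : ℝ} (hu : u.re ≤ r) (hv : v.re ≤ r) :
    ‖Complex.exp u - Complex.exp v‖ ≤ Real.exp r * ‖u - v‖ := by
  refine (convex_halfSpace_re_le r).norm_image_sub_le_of_norm_deriv_le
    (fun z _ => Complex.differentiableAt_exp) (fun z hz => ?_) hv hu
  rw [Complex.deriv_exp, Complex.norm_exp]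
  exact Real.exp_le_exp.mpr hz

theorem div_four_le_div_one_add_sq {a x : ℝ} (ha : 0 ≤ a) (hx : |x| ≤ 1) :
    a / 4 ≤ a / (1 + x ^ 2) := by
  gcongr
  linarith [(sq_le_one_iff_abs_le_one x).mpr hx]

theorem norm_exp_neg_div_one_add_mul_I_le_exp {a x : ℝ} (ha : 0 ≤ a) (hx : |x| ≤ 1) :
    ‖Complex.exp (-(a / (1 + x * I)))‖ ≤ Real.exp (-(a / 4)) := by
  rw [Complex.norm_exp, Complex.neg_re, re_ofReal_div_one_add_mul_I]
  exact Real.exp_le_exp.mpr (neg_le_neg (div_four_le_div_one_add_sq ha hx))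

theorem norm_exp_neg_div_one_add_mul_I_sub_le {a x : ℝ} (ha : 0 ≤ a) (hx : |x| ≤ 1) :
    ‖Complex.exp (-(a / (1 + x * I))) - Real.exp (-a)‖ ≤ a * |x| * Real.exp (-(a / 4)) := by
  have hre : (-(a / (1 + x * I)) : ℂ).re ≤ -(a / 4) := by
    rw [Complex.neg_re, re_ofReal_div_one_add_mul_I]
    exact neg_le_neg (div_four_le_div_one_add_sq ha hx)
  have hdiff : (-(a / (1 + x * I)) - (-a : ℝ) : ℂ) = a * (x * I) / (1 + x * I) := by
    have hne := one_add_mul_I_ne_zero x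
    push_cast
    field_simp
    ring
  have hone : 1 ≤ ‖1 + x * I‖ := by
    simpa using Complex.re_le_norm (1 + x * I)
  rw [Complex.ofReal_exp]
  calc ‖Complex.exp (-(a / (1 + x * I))) - Complex.exp (-a : ℝ)‖
      ≤ Real.exp (-(a / 4)) * (a * |x| / ‖1 + x * I‖) := by
        refine (norm_exp_sub_exp_le hre ?_).trans_eq ?_
        · rw [Complex.ofReal_re]
          linarith
        · rw [hdiff, norm_div, norm_mul, norm_mul, Complex.norm_real, Complex.norm_real,
            Complex.norm_I, mul_one, Real.norm_of_nonneg ha, Real.norm_eq_abs]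
    _ ≤ Real.exp (-(a / 4)) * (a * |x|) := by
        gcongr
        exact div_le_self (by positivity) hone
    _ = a * |x| * Real.exp (-(a / 4)) := mul_comm _ _

theorem add_cube_le_mul_exp (y : ℝ) : y + y ^ 3 ≤ 128 * Real.exp (y ^ 2 / 8) := by
  have h := Real.quadratic_le_exp_of_nonneg (x := y ^ 2 / 8) (by positivity)
  nlinarith [sq_nonneg (y - 1), sq_nonneg (y ^ 2 - y), sq_nonneg (y ^ 2), sq_nonneg y]

theorem add_mul_exp_le {L : ℝ} (hL : 0 < L) (x : ℝ) :
    (|x| + L * x ^ 2 * |x|) * Real.exp (-(L * x ^ 2 / 4)) ≤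
      128 / √L * Real.exp (-(L / 8) * x ^ 2) := by
  have hs : 0 < √L := Real.sqrt_pos.mpr hL
  have hs2 : √L ^ 2 = L := Real.sq_sqrt hL.le
  have hy := add_cube_le_mul_exp (√L * |x|)
  rw [mul_pow, mul_pow, sq_abs, hs2] at hy
  have hpoly : |x| + L * x ^ 2 * |x| ≤ 128 / √L * Real.exp (L * x ^ 2 / 8) := by
    rw [div_mul_eq_mul_div, le_div_iff₀ hs]
    refine le_of_eq_of_le ?_ hy
    linear_combination (-√L * |x| ^ 3) * hs2 - √L * |x| * L * sq_abs x
  calc (|x| + L * x ^ 2 * |x|) * Real.exp (-(L * x ^ 2 / 4))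
      ≤ 128 / √L * Real.exp (L * x ^ 2 / 8) * Real.exp (-(L * x ^ 2 / 4)) := by gcongr
    _ = 128 / √L * Real.exp (-(L / 8) * x ^ 2) := by
      rw [mul_assoc, ← Real.exp_add]
      congr 2
      ring

theorem norm_sqrt_mul_exp_sub_gaussian_le {L x D : ℝ} {E : ℂ} (hL : 0 < L) (hx : |x| ≤ 1)
    (hE : ‖E - 1‖ ≤ D) :
    ‖Complex.sqrt (1 + x * I) * E * Complex.exp (-((L * x ^ 2 : ℝ) / (1 + x * I))) -
      Real.exp (-(L * x ^ 2))‖ ≤ (128 / √L + 2 * D) * Real.exp (-(L / 8) * x ^ 2) := by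
  have ha : 0 ≤ L * x ^ 2 := by positivity
  have hsize := norm_exp_neg_div_one_add_mul_I_le_exp ha hx
  have hdiff := norm_exp_neg_div_one_add_mul_I_sub_le ha hx
  have hsqrt_sub := norm_sqrt_one_add_mul_I_sub_one_le x
  have hD : 0 ≤ D := (norm_nonneg _).trans hE
  set p := Complex.sqrt (1 + x * I)
  set e := Complex.exp (-((L * x ^ 2 : ℝ) / (1 + x * I)))
  set g := ((Real.exp (-(L * x ^ 2)) : ℝ) : ℂ)
  have hsqrt : ‖p‖ ≤ 2 := by
    have h := norm_add_le (p - 1) 1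
    rw [sub_add_cancel, norm_one] at h
    linarith
  calc ‖p * E * e - g‖ = ‖(p - 1) * e + p * (E - 1) * e + (e - g)‖ := by ring_nf
    _ ≤ ‖p - 1‖ * ‖e‖ + ‖p‖ * ‖E - 1‖ * ‖e‖ + ‖e - g‖ := by
      refine norm_add₃_le.trans_eq ?_
      rw [norm_mul, norm_mul, norm_mul]
    _ ≤ |x| * Real.exp (-(L * x ^ 2 / 4)) + 2 * D * Real.exp (-(L * x ^ 2 / 4)) +
        L * x ^ 2 * |x| * Real.exp (-(L * x ^ 2 / 4)) := by gcongr
    _ = (|x| + L * x ^ 2 * |x|) * Real.exp (-(L * x ^ 2 / 4)) +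
        2 * D * Real.exp (-(L * x ^ 2 / 4)) := by ring
    _ ≤ 128 / √L * Real.exp (-(L / 8) * x ^ 2) + 2 * D * Real.exp (-(L / 8) * x ^ 2) := by
      gcongr ?_ + 2 * D * Real.exp ?_
      · exact add_mul_exp_le hL x
      · linarith
    _ = (128 / √L + 2 * D) * Real.exp (-(L / 8) * x ^ 2) := by ring

theorem exp_neg_mul_sq_le_of_one_le_abs {L x : ℝ} (hL : 0 < L) (hx : 1 ≤ |x|) :
    Real.exp (-(L * x ^ 2)) ≤ 128 / √L * Real.exp (-(L / 8) * x ^ 2) :=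
  calc Real.exp (-(L * x ^ 2)) ≤ 1 * Real.exp (-(L * x ^ 2 / 4)) := by
        rw [one_mul]
        gcongr
        linarith [show 0 ≤ L * x ^ 2 by positivity]
    _ ≤ (|x| + L * x ^ 2 * |x|) * Real.exp (-(L * x ^ 2 / 4)) := by
        gcongr
        linarith [show 0 ≤ L * x ^ 2 * |x| by positivity]
    _ ≤ 128 / √L * Real.exp (-(L / 8) * x ^ 2) := add_mul_exp_le hL x

theorem mul_sqrt_pi_div_le {L B : ℝ} (hL : 0 < L) (hB : 0 ≤ B) :
    B / √L * √(π / (L / 8)) ≤ 6 * B / L := by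
  have hsqrt : √(π / (L / 8)) ≤ 6 / √L := by
    rw [← Real.sqrt_sq (show (0 : ℝ) ≤ 6 by norm_num), ← Real.sqrt_div (by norm_num),
      div_div_eq_mul_div]
    gcongr
    linarith [Real.pi_lt_four]
  calc B / √L * √(π / (L / 8)) ≤ B / √L * (6 / √L) := by gcongr
    _ = 6 * B / L := by rw [div_mul_div_comm, Real.mul_self_sqrt hL.le, mul_comm]

theorem norm_integral_sub_sqrt_pi_div_le {L B : ℝ} (hL : 0 < L) (hB : 128 ≤ B) {F : ℝ → ℂ}
    (hF : Continuous F) (hbound : ∀ x, |x| ≤ 1 →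
      ‖F x - Real.exp (-(L * x ^ 2))‖ ≤ B / √L * Real.exp (-(L / 8) * x ^ 2)) :
    ‖(∫ x in (-1 : ℝ)..1, F x) - √(π / L)‖ ≤ 6 * B / L := by
  have hgauss : (√(π / L) : ℂ) = ∫ x : ℝ, (Real.exp (-(L * x ^ 2)) : ℂ) := by
    rw [← integral_gaussian, ← integral_complex_ofReal]
    simp only [neg_mul]
  have hgaussInt : Integrable fun x : ℝ => (Real.exp (-(L * x ^ 2)) : ℂ) := by
    simp only [← neg_mul]
    exact (integrable_exp_neg_mul_sq hL).ofReal
  have hFInt : Integrable ((Set.Ioc (-1 : ℝ) 1).indicator F) :=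
    (integrable_indicator_iff measurableSet_Ioc).mpr hF.integrableOn_Ioc
  have hboundInt : Integrable fun x : ℝ => B / √L * Real.exp (-(L / 8) * x ^ 2) :=
    (integrable_exp_neg_mul_sq (by positivity)).const_mul _
  rw [intervalIntegral.integral_of_le (by norm_num), ← integral_indicator measurableSet_Ioc, hgauss,
    ← integral_sub hFInt hgaussInt]
  refine (norm_integral_le_of_norm_le hboundInt (Eventually.of_forall fun x => ?_)).trans ?_
  · by_cases hx : x ∈ Set.Ioc (-1 : ℝ) 1
    · rw [Set.indicator_of_mem hx]
      exact hbound x (abs_le.mpr ⟨hx.1.le, hx.2⟩)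
    · have hx1 : 1 ≤ |x| := by
        contrapose! hx
        exact ⟨(abs_lt.mp hx).1, (abs_lt.mp hx).2.le⟩
      rw [Set.indicator_of_notMem hx, zero_sub, norm_neg, Complex.norm_real,
        Real.norm_of_nonneg (Real.exp_nonneg _)]
      exact (exp_neg_mul_sq_le_of_one_le_abs hL hx1).trans (by gcongr)
  · rw [integral_const_mul, integral_gaussian]
    exact mul_sqrt_pi_div_le hL (by linarith)

end Laplace

/-! ### The circle method -/

section CircleMethod

open Complex (I)

/-- The integrand of Cauchy's formula for the `n`th coefficient of `overpartitionGF` on the circle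
of radius `exp (-t)`, at the angle `-θ`. -/
noncomputable def circleIntegrand (n : ℕ) (t θ : ℝ) : ℂ :=
  overpartitionGF (Complex.exp (-(t + θ * I))) * Complex.exp (n * (t + θ * I))

theorem differentiableAt_overpartitionGF {q : ℂ} (hq : ‖q‖ < 1) :
    DifferentiableAt ℂ overpartitionGF q := by
  have hsq : DifferentiableAt ℂ (fun z : ℂ => eulerProduct (z ^ 2)) q :=
    (differentiableAt_eulerProduct (norm_pow_succ_lt_one hq 1)).comp q (differentiableAt_pow 2)
  exact hsq.div ((differentiableAt_eulerProduct hq).pow 2) (pow_ne_zero 2 (eulerProduct_ne_zero hq))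

/-- The integrand on the major arc, in the coordinate `x = θ / t` and divided by its value on the
real axis in the leading order. -/
noncomputable def majorArcIntegrand (t x : ℝ) : ℂ :=
  Complex.sqrt (1 + x * I) * cuspCorrection t x *
    Complex.exp (-((π ^ 2 / (4 * t) * x ^ 2 : ℝ) / (1 + x * I)))

variable {n : ℕ} {t : ℝ} (ht : 0 < t)
include ht

theorem continuous_circleIntegrand : Continuous (circleIntegrand n t) := by
  refine .mul (continuous_iff_continuousAt.mpr fun θ => ?_) (by fun_prop)
  exact (differentiableAt_overpartitionGF (norm_exp_neg_add_mul_I_lt_one ht θ)).continuousAt.comp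
    (f := fun θ : ℝ => Complex.exp (-(t + θ * I))) (by fun_prop)

theorem two_pi_mul_overpartitionCount_eq : 2 * π * (overpartitionCount n : ℂ) =
    (∫ θ in (-π)..(-t), circleIntegrand n t θ) + (∫ θ in (-t)..t, circleIntegrand n t θ) +
      ∫ θ in t..π, circleIntegrand n t θ := by
  have hint : ∀ a b, IntervalIntegrable (circleIntegrand n t) volume a b := fun a b =>
    (continuous_circleIntegrand ht).intervalIntegrable a b
  rw [intervalIntegral.integral_add_adjacent_intervals (hint _ _) (hint _ _),
    intervalIntegral.integral_add_adjacent_intervals (hint _ _) (hint _ _)]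
  exact (integral_overpartitionGF_mul_exp ht n).symm

theorem exp_neg_div_le : Real.exp (-(1 / 200) / t) ≤ 80000 * t ^ 2 := by
  have h := Real.quadratic_le_exp_of_nonneg (x := 1 / 200 / t) (by positivity)
  rw [neg_div, Real.exp_neg, inv_le_comm₀ (Real.exp_pos _) (by positivity)]
  calc (80000 * t ^ 2)⁻¹ = (1 / 200 / t) ^ 2 / 2 := by
        field_simp
        norm_num
    _ ≤ Real.exp (1 / 200 / t) := by linarith [show 0 ≤ 1 / 200 / t by positivity]

theorem overpartitionGF_exp_neg_le {D : ℝ} (hcorr : ‖cuspCorrection t 0 - 1‖ ≤ D) :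
    overpartitionGF (Real.exp (-t)) ≤ (1 + D) * √t * Real.exp (π ^ 2 / (4 * t)) := by
  have hlt : Real.exp (-t) < 1 := Real.exp_lt_one_iff.mpr (neg_lt_zero.mpr ht)
  have hone : ‖cuspCorrection t 0‖ ≤ 1 + D := by
    have h := norm_add_le 1 (cuspCorrection t 0 - 1)
    rw [add_sub_cancel, norm_one] at h
    linarith
  have hGF := overpartitionGF_exp_neg_mul_one_add_mul_I ht 0
  simp only [mul_zero, Complex.ofReal_zero, zero_mul, add_zero, div_one, Complex.sqrt_one, mul_one,
    ← Complex.ofReal_neg, ← Complex.ofReal_exp] at hGF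
  rw [overpartitionGF_ofReal (by rwa [Real.norm_of_nonneg (Real.exp_nonneg _)])] at hGF
  calc overpartitionGF (Real.exp (-t)) ≤ ‖((overpartitionGF (Real.exp (-t)) : ℝ) : ℂ)‖ := by
        rw [Complex.norm_real]
        exact le_abs_self _
    _ = 1 / 2 * √(t / π) * Real.exp (π ^ 2 / (4 * t)) * ‖cuspCorrection t 0‖ := by
        rw [hGF, norm_mul, ← Complex.ofReal_one, ← Complex.ofReal_ofNat, ← Complex.ofReal_div,
          ← Complex.ofReal_mul, ← Complex.ofReal_mul, Complex.norm_real,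
          Real.norm_of_nonneg (by positivity)]
    _ ≤ 1 * √t * Real.exp (π ^ 2 / (4 * t)) * (1 + D) := by
        gcongr
        · norm_num
        · exact div_le_self ht.le (by linarith [Real.pi_gt_three])
    _ = (1 + D) * √t * Real.exp (π ^ 2 / (4 * t)) := by ring

variable (hsaddle : n * t = π ^ 2 / (4 * t))
include hsaddle

theorem norm_circleIntegrand_le (ht1 : t ≤ 1) {D : ℝ} (hcorr : ‖cuspCorrection t 0 - 1‖ ≤ D)
    {θ : ℝ} (htθ : t ≤ |θ|) (hθ : |θ| ≤ π) :
    ‖circleIntegrand n t θ‖ ≤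
      80000 * (1 + D) * (t ^ 2 * √t * Real.exp (2 * (π ^ 2 / (4 * t)))) := by
  have hexp : ‖Complex.exp (n * (t + θ * I))‖ = Real.exp (π ^ 2 / (4 * t)) := by
    rw [Complex.norm_exp, ← hsaddle]
    simp
  have hGF : 0 ≤ overpartitionGF (Real.exp (-t)) :=
    overpartitionGF_nonneg (Real.exp_nonneg _) (Real.exp_lt_one_iff.mpr (neg_lt_zero.mpr ht))
  have hsup := overpartitionGF_exp_neg_le ht hcorr
  calc ‖circleIntegrand n t θ‖
      ≤ overpartitionGF (Real.exp (-t)) * Real.exp (-(1 / 200) / t) *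
          Real.exp (π ^ 2 / (4 * t)) := by
        rw [circleIntegrand, norm_mul, hexp]
        gcongr
        exact norm_overpartitionGF_exp_le ht ht1 htθ hθ
    _ ≤ ((1 + D) * √t * Real.exp (π ^ 2 / (4 * t))) * (80000 * t ^ 2) *
          Real.exp (π ^ 2 / (4 * t)) := by
        gcongr
        · exact hGF.trans hsup
        · exact exp_neg_div_le ht
    _ = 80000 * (1 + D) * (t ^ 2 * √t * Real.exp (2 * (π ^ 2 / (4 * t)))) := by
        rw [two_mul (π ^ 2 / (4 * t)), Real.exp_add]
        ring

theorem norm_integral_minorArcs_le (ht1 : t ≤ 1) {D : ℝ} (hcorr : ‖cuspCorrection t 0 - 1‖ ≤ D) :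
    ‖(∫ θ in (-π)..(-t), circleIntegrand n t θ) + ∫ θ in t..π, circleIntegrand n t θ‖ ≤
      2 * π * (80000 * (1 + D) * (t ^ 2 * √t * Real.exp (2 * (π ^ 2 / (4 * t))))) := by
  have hpi : t ≤ π := by linarith [Real.pi_gt_three]
  have harc := fun θ => norm_circleIntegrand_le ht hsaddle ht1 hcorr (θ := θ)
  set M := 80000 * (1 + D) * (t ^ 2 * √t * Real.exp (2 * (π ^ 2 / (4 * t))))
  have hM : 0 ≤ M := (norm_nonneg _).trans (harc t (le_abs_self t) (by rwa [abs_of_pos ht]))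
  have hleft : ‖∫ θ in (-π)..(-t), circleIntegrand n t θ‖ ≤ M * |-t - -π| := by
    refine intervalIntegral.norm_integral_le_of_norm_le_const fun θ hθ => ?_
    rw [Set.uIoc_of_le (neg_le_neg hpi)] at hθ
    have habs : |θ| = -θ := abs_of_nonpos (by linarith [hθ.2])
    exact harc θ (by linarith [hθ.2]) (by linarith [hθ.1])
  have hright : ‖∫ θ in t..π, circleIntegrand n t θ‖ ≤ M * |π - t| := by
    refine intervalIntegral.norm_integral_le_of_norm_le_const fun θ hθ => ?_
    rw [Set.uIoc_of_le hpi] at hθ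
    have habs : |θ| = θ := abs_of_pos (ht.trans hθ.1)
    exact harc θ (by linarith [hθ.1]) (by linarith [hθ.2])
  rw [neg_sub_neg, abs_of_nonneg (sub_nonneg.mpr hpi)] at hleft
  rw [abs_of_nonneg (sub_nonneg.mpr hpi)] at hright
  refine (norm_add_le_of_le hleft hright).trans ?_
  nlinarith

theorem circleIntegrand_mul (x : ℝ) : circleIntegrand n t (t * x) =
    (1 / 2 * √(t / π) * Real.exp (2 * (π ^ 2 / (4 * t))) : ℝ) * majorArcIntegrand t x := by
  rw [majorArcIntegrand, circleIntegrand, overpartitionGF_exp_neg_mul_one_add_mul_I ht]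
  have hnt : (n * (t + (t * x : ℝ) * I) : ℂ) = (π ^ 2 / (4 * t) : ℝ) * (1 + x * I) := by
    rw [← hsaddle]
    push_cast
    ring
  have hexp : ∀ L : ℝ, Complex.exp (L / (1 + x * I)) * Complex.exp (L * (1 + x * I)) =
      Complex.exp (2 * L) * Complex.exp (-((L * x ^ 2 : ℝ) / (1 + x * I))) := fun L => by
    have hne := one_add_mul_I_ne_zero x
    rw [← Complex.exp_add, ← Complex.exp_add]
    congr 1
    field_simp
    push_cast
    linear_combination (L * x ^ 2 : ℂ) * Complex.I_sq
  rw [hnt]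
  have h := hexp (π ^ 2 / (4 * t))
  push_cast at h ⊢
  linear_combination (1 / 2 * √(t / π) * Complex.sqrt (1 + x * I) * cuspCorrection t x) * h

theorem continuous_majorArcIntegrand : Continuous (majorArcIntegrand t) := by
  have hA : ((1 / 2 * √(t / π) * Real.exp (2 * (π ^ 2 / (4 * t))) : ℝ) : ℂ) ≠ 0 :=
    Complex.ofReal_ne_zero.mpr (by positivity)
  rw [funext fun x => (eq_inv_mul_iff_mul_eq₀ hA).mpr (circleIntegrand_mul ht hsaddle x).symm]
  exact continuous_const.mul ((continuous_circleIntegrand ht).comp (continuous_const_mul t))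

theorem norm_integral_majorArcIntegrand_sub_le (ht1 : t ≤ 1) {D : ℝ}
    (hcorr : ∀ x, |x| ≤ 1 → ‖cuspCorrection t x - 1‖ ≤ D * t) :
    ‖(∫ x in (-1 : ℝ)..1, majorArcIntegrand t x) - √(π / (π ^ 2 / (4 * t)))‖ ≤
      6 * (128 + 4 * D) / (π ^ 2 / (4 * t)) := by
  have hD : 0 ≤ D := nonneg_of_mul_nonneg_left ((norm_nonneg _).trans (hcorr 0 (by simp))) ht
  have hsqrt : t ≤ 2 / √(π ^ 2 / (4 * t)) := by
    rw [le_div_iff₀ (by positivity), ← Real.sqrt_sq ht.le, ← Real.sqrt_mul (sq_nonneg t),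
      Real.sqrt_le_left zero_le_two, Real.sqrt_sq ht.le]
    calc t ^ 2 * (π ^ 2 / (4 * t)) = π ^ 2 / 4 * t := by field_simp
      _ ≤ 2 ^ 2 * 1 := by
        gcongr
        nlinarith [Real.pi_pos, Real.pi_lt_four]
      _ = 2 ^ 2 := mul_one _
  refine norm_integral_sub_sqrt_pi_div_le (by positivity) (by linarith)
    (continuous_majorArcIntegrand ht hsaddle) fun x hx => ?_
  refine (norm_sqrt_mul_exp_sub_gaussian_le (by positivity) hx (hcorr x hx)).trans ?_
  gcongr
  calc 128 / √(π ^ 2 / (4 * t)) + 2 * (D * t)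
      ≤ 128 / √(π ^ 2 / (4 * t)) + 2 * (D * (2 / √(π ^ 2 / (4 * t)))) := by gcongr
    _ = (128 + 4 * D) / √(π ^ 2 / (4 * t)) := by ring

theorem norm_integral_majorArc_sub_le (ht1 : t ≤ 1) {D : ℝ}
    (hcorr : ∀ x, |x| ≤ 1 → ‖cuspCorrection t x - 1‖ ≤ D * t) :
    ‖(∫ θ in (-t)..t, circleIntegrand n t θ) -
        (t ^ 2 / π * Real.exp (2 * (π ^ 2 / (4 * t))) : ℝ)‖ ≤
      3 * (128 + 4 * D) * (t ^ 2 * √t * Real.exp (2 * (π ^ 2 / (4 * t)))) := by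
  have hD : 0 ≤ D := nonneg_of_mul_nonneg_left ((norm_nonneg _).trans (hcorr 0 (by simp))) ht
  have hlaplace := norm_integral_majorArcIntegrand_sub_le ht hsaddle ht1 hcorr
  set A := 1 / 2 * √(t / π) * Real.exp (2 * (π ^ 2 / (4 * t))) with hA
  have hscale : ∫ θ in (-t)..t, circleIntegrand n t θ =
      (t * A : ℝ) * ∫ x in (-1 : ℝ)..1, majorArcIntegrand t x := by
    have h := intervalIntegral.smul_integral_comp_mul_left (f := circleIntegrand n t)
      (a := -1) (b := 1) t
    simp only [mul_neg_one, mul_one, circleIntegrand_mul ht hsaddle,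
      intervalIntegral.integral_const_mul, Complex.real_smul] at h
    rw [← hA] at h
    rw [← h, Complex.ofReal_mul t A, mul_assoc]
  have hmain : t ^ 2 / π * Real.exp (2 * (π ^ 2 / (4 * t))) =
      t * A * √(π / (π ^ 2 / (4 * t))) := by
    have hsqrt : √(t / π) * √(π / (π ^ 2 / (4 * t))) = 2 * t / π := by
      rw [← Real.sqrt_mul (by positivity), ← Real.sqrt_sq (show 0 ≤ 2 * t / π by positivity)]
      congr 1
      field_simp
      norm_num
    rw [hA]
    linear_combination (-t / 2 * Real.exp (2 * (π ^ 2 / (4 * t)))) * hsqrt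
  rw [hscale, hmain, Complex.ofReal_mul (t * A), ← mul_sub, norm_mul, Complex.norm_real,
    Real.norm_of_nonneg (by positivity)]
  have hA_le : A ≤ 1 / 2 * √t * Real.exp (2 * (π ^ 2 / (4 * t))) := by
    rw [hA]
    gcongr
    exact div_le_self ht.le (by linarith [Real.pi_gt_three])
  have hinv : (π ^ 2 / (4 * t))⁻¹ ≤ t := by
    rw [inv_div, div_le_iff₀ (by positivity)]
    nlinarith [mul_pos ht ht, show 4 ≤ π ^ 2 by nlinarith [Real.pi_gt_three]]
  calc t * A * ‖(∫ x in (-1 : ℝ)..1, majorArcIntegrand t x) - √(π / (π ^ 2 / (4 * t)))‖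
      ≤ t * (1 / 2 * √t * Real.exp (2 * (π ^ 2 / (4 * t)))) * (6 * (128 + 4 * D) * t) := by
        gcongr
        exact hlaplace.trans (mul_le_mul_of_nonneg_left hinv (by positivity))
    _ = 3 * (128 + 4 * D) * (t ^ 2 * √t * Real.exp (2 * (π ^ 2 / (4 * t)))) := by ring

theorem abs_two_pi_mul_overpartitionCount_sub_le (ht1 : t ≤ 1) {D : ℝ}
    (hcorr : ∀ x, |x| ≤ 1 → ‖cuspCorrection t x - 1‖ ≤ D * t) :
    |2 * π * (overpartitionCount n : ℝ) - t ^ 2 / π * Real.exp (2 * (π ^ 2 / (4 * t)))| ≤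
      (3 * (128 + 4 * D) + 2 * π * (80000 * (1 + D))) *
        (t ^ 2 * √t * Real.exp (2 * (π ^ 2 / (4 * t)))) := by
  have hD : 0 ≤ D := nonneg_of_mul_nonneg_left ((norm_nonneg _).trans (hcorr 0 (by simp))) ht
  have hcorr_zero : ‖cuspCorrection t 0 - 1‖ ≤ D :=
    (hcorr 0 (by simp)).trans (mul_le_of_le_one_right hD ht1)
  have hmajor := norm_integral_majorArc_sub_le ht hsaddle ht1 hcorr
  have hminor := norm_integral_minorArcs_le ht hsaddle ht1 hcorr_zero
  have hsplit := two_pi_mul_overpartitionCount_eq (n := n) ht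
  rw [← Real.norm_eq_abs, ← Complex.norm_real]
  refine le_trans (le_of_eq ?_) ((norm_add_le_of_le hmajor hminor).trans_eq (by ring))
  congr 1
  push_cast at hsplit ⊢
  linear_combination hsplit

end CircleMethod

/-- The leading term `e ^ (π √x) / (8 x)` of the number of overpartitions of `x`. -/
noncomputable def mainTerm (x : ℝ) : ℝ := 1 / 8 * x⁻¹ * Real.exp (π * √x)

/-- The order of magnitude `x ^ (-5/4) e ^ (π √x)` of the error made by `mainTerm x`. -/
noncomputable def errorScale (x : ℝ) : ℝ := x ^ (-(5 : ℝ) / 4) * Real.exp (π * √x)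

theorem rpow_neg_five_fourths {x : ℝ} (hx : 0 < x) :
    x ^ (-(5 : ℝ) / 4) = x⁻¹ * (√(√x))⁻¹ := by
  rw [show -(5 : ℝ) / 4 = -1 + -(1 / 4) by norm_num, Real.rpow_add hx, Real.rpow_neg_one,
    Real.rpow_neg hx.le, Real.sqrt_eq_rpow, Real.sqrt_eq_rpow, ← Real.rpow_mul hx.le]
  norm_num

theorem sq_mul_sqrt_pi_div_le {x : ℝ} (hx : 0 < x) :
    (π / (2 * √x)) ^ 2 * √(π / (2 * √x)) ≤ 8 * x ^ (-(5 : ℝ) / 4) := by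
  have hs : 0 < √x := Real.sqrt_pos.mpr hx
  have hle : π / (2 * √x) ≤ 2 * (√x)⁻¹ := by
    rw [← div_eq_mul_inv, div_le_div_iff₀ (by positivity) hs]
    nlinarith [Real.pi_lt_four]
  calc (π / (2 * √x)) ^ 2 * √(π / (2 * √x)) ≤ (2 * (√x)⁻¹) ^ 2 * √(2 ^ 2 * (√x)⁻¹) := by
        gcongr
        exact hle.trans (by gcongr; norm_num)
    _ = 8 * x ^ (-(5 : ℝ) / 4) := by
        rw [rpow_neg_five_fourths hx, Real.sqrt_mul (by positivity), Real.sqrt_sq zero_le_two,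
          Real.sqrt_inv, mul_pow, inv_pow, Real.sq_sqrt hx.le]
        ring

theorem abs_overpartitionCount_sub_le {n : ℕ} (hn : 0 < n) (ht1 : π / (2 * √n) ≤ 1) {D : ℝ}
    (hcorr : ∀ x, |x| ≤ 1 → ‖cuspCorrection (π / (2 * √n)) x - 1‖ ≤ D * (π / (2 * √n))) :
    |(overpartitionCount n : ℝ) - mainTerm n| ≤
      (3 * (128 + 4 * D) + 2 * π * (80000 * (1 + D))) * 8 * errorScale n := by
  have hn' : (0 : ℝ) < n := Nat.cast_pos.mpr hn
  have hsq : √(n : ℝ) ^ 2 = n := Real.sq_sqrt hn'.le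
  have ht : 0 < π / (2 * √(n : ℝ)) := by positivity
  have hL : π ^ 2 / (4 * (π / (2 * √(n : ℝ)))) = π * √n / 2 := by
    field_simp
    norm_num
  have hsaddle : n * (π / (2 * √(n : ℝ))) = π ^ 2 / (4 * (π / (2 * √(n : ℝ)))) := by
    rw [hL]
    field_simp
    exact hsq.symm
  have hmain : (π / (2 * √(n : ℝ))) ^ 2 / π = 2 * π * (1 / 8 * (n : ℝ)⁻¹) := by
    rw [div_pow, mul_pow, hsq]
    field_simp
    norm_num
  have hD : 0 ≤ D := nonneg_of_mul_nonneg_left ((norm_nonneg _).trans (hcorr 0 (by simp))) ht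
  have h := abs_two_pi_mul_overpartitionCount_sub_le ht hsaddle ht1 hcorr
  rw [hL, mul_div_cancel₀ _ two_ne_zero, hmain, mul_assoc (2 * π), ← mul_sub, abs_mul,
    abs_of_pos Real.two_pi_pos] at h
  rw [mainTerm, errorScale]
  refine (le_mul_of_one_le_left (abs_nonneg _) (by linarith [Real.pi_gt_three])).trans
    (h.trans ?_)
  rw [mul_assoc _ (8 : ℝ), ← mul_assoc (8 : ℝ)]
  gcongr ?_ * (?_ * ?_)
  exact sq_mul_sqrt_pi_div_le hn'

theorem overpartitionCount_sub_mainTerm_isBigO :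
    (fun n : ℕ => (overpartitionCount n : ℝ) - mainTerm n) =O[atTop]
      fun n : ℕ => errorScale n := by
  obtain ⟨t₀, D, ht₀, hcorr⟩ := exists_norm_cuspCorrection_sub_one_le
  have hsmall : Tendsto (fun n : ℕ => π / (2 * √n)) atTop (𝓝 0) :=
    tendsto_const_nhds.div_atTop ((Real.tendsto_sqrt_atTop.comp
      tendsto_natCast_atTop_atTop).const_mul_atTop two_pos)
  refine .of_bound ((3 * (128 + 4 * D) + 2 * π * (80000 * (1 + D))) * 8) ?_
  filter_upwards [hsmall.eventually_le_const ht₀, hsmall.eventually_le_const one_pos,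
    eventually_gt_atTop 0] with n htt₀ ht1 hn
  have hscale : 0 ≤ errorScale n := by
    rw [errorScale]
    positivity
  rw [Real.norm_eq_abs, Real.norm_of_nonneg hscale]
  exact abs_overpartitionCount_sub_le hn ht1 fun x hx =>
    hcorr _ x (div_pos Real.pi_pos (by positivity)) htt₀ hx

/-! ### Comparison of the terms -/

theorem hasDerivAt_rpow_mul_exp_sqrt (a c : ℝ) {x : ℝ} (hx : 0 < x) :
    HasDerivAt (fun x => x ^ a * Real.exp (c * √x))
      (x ^ (a - 1) * (a + c / 2 * √x) * Real.exp (c * √x)) x := by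
  refine ((Real.hasDerivAt_rpow_const (Or.inl hx.ne')).mul
    (((Real.hasDerivAt_sqrt hx.ne').const_mul c).exp)).congr_deriv ?_
  have hpow : x ^ a = x ^ (a - 1) * √x ^ 2 := by
    rw [Real.sq_sqrt hx.le, ← Real.rpow_add_one hx.ne', sub_add_cancel]
  rw [hpow]
  field_simp

theorem monotoneOn_rpow_mul_exp_sqrt {a c : ℝ} (hc : 0 ≤ c) (hac : -(c / 2) ≤ a) :
    MonotoneOn (fun x : ℝ => x ^ a * Real.exp (c * √x)) (Set.Ici 1) := by
  have hderiv := fun x hx => hasDerivAt_rpow_mul_exp_sqrt a c (x := x) hx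
  refine monotoneOn_of_deriv_nonneg (convex_Ici 1)
    (fun x hx => (hderiv x (zero_lt_one.trans_le hx)).continuousAt.continuousWithinAt) ?_ ?_ <;>
    rw [interior_Ici] <;> intro x hx
  · exact (hderiv x (zero_lt_one.trans hx)).differentiableAt.differentiableWithinAt
  · have hx0 : 0 < x := zero_lt_one.trans hx
    have hsqrt : 1 ≤ √x := Real.one_le_sqrt.mpr (Set.mem_Ioi.mp hx).le
    have hfactor : 0 ≤ a + c / 2 * √x := by nlinarith
    rw [(hderiv x hx0).deriv]
    positivity

theorem errorScale_monotoneOn : MonotoneOn errorScale (Set.Ici 1) :=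
  monotoneOn_rpow_mul_exp_sqrt Real.pi_pos.le (by linarith [Real.pi_gt_three])

theorem one_le_errorScale {x : ℝ} (hx : 1 ≤ x) : 1 ≤ errorScale x := by
  refine le_trans ?_ (errorScale_monotoneOn Set.self_mem_Ici hx hx)
  rw [errorScale, Real.one_rpow, one_mul]
  exact Real.one_le_exp (by positivity)

theorem abs_mainTerm_le {x : ℝ} (hx : 1 ≤ x) : |mainTerm x| ≤ x * errorScale x := by
  have hx0 : 0 < x := zero_lt_one.trans_le hx
  have hpow : x⁻¹ ≤ x * x ^ (-(5 : ℝ) / 4) := by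
    rw [← Real.rpow_neg_one, ← Real.rpow_one_add' hx0.le (by norm_num)]
    exact Real.rpow_le_rpow_of_exponent_le hx (by norm_num)
  rw [mainTerm, errorScale, abs_of_nonneg (by positivity), ← mul_assoc]
  gcongr ?_ * _
  linarith [inv_pos.mpr hx0]

theorem hasDerivAt_mainTerm {x : ℝ} (hx : 0 < x) :
    HasDerivAt mainTerm
      (1 / 8 * (x ^ (-(2 : ℝ)) * (-1 + π / 2 * √x) * Real.exp (π * √x))) x := by
  have h := (hasDerivAt_rpow_mul_exp_sqrt (-1) π hx).const_mul (1 / 8)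
  rw [show (-1 : ℝ) - 1 = -2 by norm_num] at h
  exact h.congr_of_eventuallyEq (.of_forall fun y => by
    rw [mainTerm, ← Real.rpow_neg_one, mul_assoc])

theorem abs_deriv_mainTerm_le {x : ℝ} (hx : 1 ≤ x) :
    |1 / 8 * (x ^ (-(2 : ℝ)) * (-1 + π / 2 * √x) * Real.exp (π * √x))| ≤ errorScale x := by
  have hx0 : 0 < x := zero_lt_one.trans_le hx
  have hsqrt : 1 ≤ √x := Real.one_le_sqrt.mpr hx
  have hpow : x ^ (-(2 : ℝ)) * √x ≤ x ^ (-(5 : ℝ) / 4) := by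
    rw [Real.sqrt_eq_rpow, ← Real.rpow_add hx0]
    exact Real.rpow_le_rpow_of_exponent_le hx (by norm_num)
  have hfactor : 0 ≤ -1 + π / 2 * √x := by nlinarith [Real.pi_gt_three]
  have hfactor_le : 1 / 8 * (-1 + π / 2 * √x) ≤ √x := by nlinarith [Real.pi_lt_four]
  rw [abs_of_nonneg (by positivity), errorScale]
  calc 1 / 8 * (x ^ (-(2 : ℝ)) * (-1 + π / 2 * √x) * Real.exp (π * √x))
      = x ^ (-(2 : ℝ)) * (1 / 8 * (-1 + π / 2 * √x)) * Real.exp (π * √x) := by ring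
    _ ≤ x ^ (-(2 : ℝ)) * √x * Real.exp (π * √x) := by gcongr
    _ ≤ x ^ (-(5 : ℝ) / 4) * Real.exp (π * √x) := by gcongr

theorem abs_mainTerm_sub_le {x y : ℝ} (hx : 1 ≤ x) (hxy : x ≤ y) :
    |mainTerm x - mainTerm y| ≤ (y - x) * errorScale y := by
  have hbound : ∀ z ∈ Set.Icc x y,
      ‖1 / 8 * (z ^ (-(2 : ℝ)) * (-1 + π / 2 * √z) * Real.exp (π * √z))‖ ≤ errorScale y :=
    fun z hz => (abs_deriv_mainTerm_le (hx.trans hz.1)).trans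
      (errorScale_monotoneOn (hx.trans hz.1) (hx.trans hxy) hz.2)
  have h := (convex_Icc x y).norm_image_sub_le_of_norm_hasDerivWithin_le
    (fun z hz => (hasDerivAt_mainTerm (by linarith [hz.1])).hasDerivWithinAt) hbound
    (Set.right_mem_Icc.mpr hxy) (Set.left_mem_Icc.mpr hxy)
  rwa [Real.norm_eq_abs, Real.norm_eq_abs, abs_sub_comm x y, abs_of_nonneg (sub_nonneg.mpr hxy),
    mul_comm] at h

theorem exists_abs_overpartitionCount_sub_mainTerm_le : ∃ C : ℝ, 0 < C ∧
    ∀ m : ℕ, 0 < m → |(overpartitionCount m : ℝ) - mainTerm m| ≤ C * errorScale m := by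
  obtain ⟨C, hC, h⟩ :=
    Asymptotics.bound_of_isBigO_nat_atTop overpartitionCount_sub_mainTerm_isBigO
  refine ⟨C, hC, fun m hm => ?_⟩
  have hscale : 0 < errorScale m :=
    zero_lt_one.trans_le (one_le_errorScale (Nat.one_le_cast.mpr hm))
  simpa only [Real.norm_eq_abs, abs_of_pos hscale] using h hscale.ne'

theorem overpartitionCount_zero : overpartitionCount 0 = 1 := by
  simp [overpartitionCount, distinctPartitionCount, partitionCount]

theorem pbarZ_natCast (m : ℕ) : pbarZ m = overpartitionCount m := by
  rw [pbarZ, if_pos (Int.natCast_nonneg m), Int.toNat_natCast]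

theorem abs_pbarZ_le_one {m : ℤ} (hm : m ≤ 0) : |(pbarZ m : ℝ)| ≤ 1 := by
  rcases hm.eq_or_lt with rfl | hneg
  · rw [← Nat.cast_zero, pbarZ_natCast, overpartitionCount_zero]
    norm_num
  · rw [pbarZ, if_neg hneg.not_ge]
    norm_num

theorem abs_pbarZ_sub_mainTerm_le {C : ℝ} (hC : 0 ≤ C)
    (h : ∀ m : ℕ, 0 < m → |(overpartitionCount m : ℝ) - mainTerm m| ≤ C * errorScale m)
    {n : ℕ} (hn : 0 < n) (d : ℕ) :
    |(pbarZ (n - d) : ℝ) - mainTerm n| ≤ (C + 1 + d) * errorScale n := by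
  have hn1 : (1 : ℝ) ≤ n := Nat.one_le_cast.mpr hn
  have hscale := one_le_errorScale hn1
  rcases lt_or_ge d n with hdn | hnd
  · obtain ⟨m, rfl⟩ := Nat.exists_eq_add_of_le' hdn.le
    have hm : 0 < m := by omega
    have hm1 : (1 : ℝ) ≤ m := Nat.one_le_cast.mpr hm
    have hmn : (m : ℝ) ≤ (m + d : ℕ) := Nat.cast_le.mpr (Nat.le_add_right m d)
    have hmono := errorScale_monotoneOn hm1 hn1 hmn
    have hshift := abs_mainTerm_sub_le hm1 hmn
    rw [Nat.cast_add, add_sub_cancel_left, ← Nat.cast_add] at hshift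
    rw [Nat.cast_add (R := ℤ), add_sub_cancel_right, pbarZ_natCast, Int.cast_natCast]
    calc |(overpartitionCount m : ℝ) - mainTerm (m + d : ℕ)|
        ≤ C * errorScale (m + d : ℕ) + d * errorScale (m + d : ℕ) :=
          (abs_sub_le _ (mainTerm m) _).trans
            (add_le_add ((h m hm).trans (by gcongr)) hshift)
      _ ≤ (C + 1 + d) * errorScale (m + d : ℕ) := by linarith
  · have hpbar := abs_pbarZ_le_one (m := n - d) (by omega)
    have hnd' : (n : ℝ) ≤ d := Nat.cast_le.mpr hnd
    calc |(pbarZ (n - d) : ℝ) - mainTerm n| ≤ 1 + n * errorScale n :=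
          (abs_sub _ _).trans (add_le_add hpbar (abs_mainTerm_le hn1))
      _ ≤ (C + 1 + d) * errorScale n := by nlinarith

theorem sum_Icc_neg_one_pow_natAbs (k : ℕ) :
    ∑ j ∈ Finset.Icc (-(k : ℤ)) k, (-1 : ℝ) ^ j.natAbs = (-1) ^ k := by
  have hgeom := geom_sum_mul_neg (-1 : ℝ) (k + 1)
  rw [Finset.sum_Icc_of_even_eq_range fun j => by rw [Int.natAbs_neg]]
  simp only [Int.natAbs_natCast, Int.natAbs_zero, pow_zero, nsmul_eq_mul, Nat.cast_ofNat]
  linear_combination hgeom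

theorem Mbar_sub (k : ℕ) (n : ℤ) (g : ℝ) : (Mbar k n : ℝ) - g =
    (-1) ^ k * ∑ j ∈ Finset.Icc (-(k : ℤ)) k, (-1) ^ j.natAbs * ((pbarZ (n - j ^ 2) : ℝ) - g) := by
  have hone : ((-1 : ℝ) ^ k) * (-1) ^ k = 1 := by rw [← mul_pow, neg_one_mul, neg_neg, one_pow]
  simp only [mul_sub, Finset.sum_sub_distrib]
  rw [← Finset.sum_mul, sum_Icc_neg_one_pow_natAbs, Mbar]
  push_cast
  linear_combination g * hone

theorem abs_Mbar_sub_le {k : ℕ} {n : ℤ} {g B : ℝ}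
    (h : ∀ j : ℤ, j.natAbs ≤ k → |(pbarZ (n - j ^ 2) : ℝ) - g| ≤ B) :
    |(Mbar k n : ℝ) - g| ≤ (2 * k + 1) * B := by
  have hcard : ((Finset.Icc (-(k : ℤ)) k).card : ℝ) = 2 * k + 1 := by
    rw [Int.card_Icc, show ((k : ℤ) + 1 - -k).toNat = 2 * k + 1 by omega]
    push_cast
    rfl
  rw [Mbar_sub, abs_mul, abs_neg_one_pow, one_mul, ← hcard, ← nsmul_eq_mul]
  refine (Finset.abs_sum_le_sum_abs _ _).trans (Finset.sum_le_card_nsmul _ _ _ fun j hj => ?_)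
  rw [abs_mul, abs_neg_one_pow, one_mul]
  exact h j (by rw [Finset.mem_Icc] at hj; omega)

end Overpartition

theorem Mbar_asymptotic_general :
    ∃ C : ℝ, 0 < C ∧ ∀ n k : ℕ, 0 < n → 0 < k →
      |(Mbar k n : ℝ) - 1 / 8 * (n : ℝ)⁻¹ * Real.exp (π * Real.sqrt n)| ≤
        C * k ^ 3 * (n : ℝ) ^ (-(5 : ℝ) / 4) * Real.exp (π * Real.sqrt n) := by
  open Overpartition in
  obtain ⟨C, hC, hcount⟩ := exists_abs_overpartitionCount_sub_mainTerm_le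
  refine ⟨3 * (C + 2), by positivity, fun n k hn hk => ?_⟩
  have hk1 : (1 : ℝ) ≤ k := Nat.one_le_cast.mpr hk
  have hscale : 0 ≤ errorScale n :=
    zero_le_one.trans (one_le_errorScale (Nat.one_le_cast.mpr hn))
  have hterm : ∀ j : ℤ, j.natAbs ≤ k →
      |(pbarZ (n - j ^ 2) : ℝ) - mainTerm n| ≤ (C + 1 + k ^ 2) * errorScale n := fun j hj => by
    have h := abs_pbarZ_sub_mainTerm_le hC.le hcount hn (j.natAbs ^ 2)
    rw [Nat.cast_pow, Int.natAbs_sq] at h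
    refine h.trans ?_
    gcongr
    exact_mod_cast Nat.pow_le_pow_left hj 2
  calc |(Mbar k n : ℝ) - mainTerm n| ≤ (2 * k + 1) * ((C + 1 + k ^ 2) * errorScale n) :=
        abs_Mbar_sub_le hterm
    _ ≤ (3 * k) * (((C + 2) * k ^ 2) * errorScale n) := by
        gcongr
        · linarith
        · nlinarith [one_le_pow₀ hk1 (n := 2)]
    _ = 3 * (C + 2) * k ^ 3 * (n : ℝ) ^ (-(5 : ℝ) / 4) * Real.exp (π * √n) := by
        rw [errorScale]
        ring

theorem Mbar_asymptotic (ε : ℝ) (hε : 0 < ε) :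
    ∃ C : ℝ, 0 < C ∧ ∃ N : ℕ, ∀ n : ℕ, N ≤ n → ∀ k : ℕ, 0 < k →
      (k : ℝ) ≤ (n : ℝ) ^ ((1 : ℝ) / 12 - ε) →
      |(Mbar k n : ℝ) - 1 / 8 * (n : ℝ)⁻¹ * Real.exp (π * Real.sqrt n)| ≤
        C * k ^ 3 * (n : ℝ) ^ (-(5 : ℝ) / 4) * Real.exp (π * Real.sqrt n) := by
  obtain ⟨C, hC, h⟩ := Mbar_asymptotic_general
  exact ⟨C, hC, 1, fun n hn k hk _ => h n k hn hk⟩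
end
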